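/- arXiv:1209.3443 — 3 statements merged into one kernel-verified Lean document; each statement's English description precedes it below -/
import Mathlib

section
/- If X is a continuum, M a countable elementary submodel of H(κ) with X ∈ M, and L = 2^X ∩ M, then X is hereditarily indecomposable if and only if the Wallman space wL is hereditarily indecomposable. -/
open Set TopologicalSpace FirstOrder

universe u v

/-- An ultrafilter on a lattice `F` of subsets of `α` (in the Wallman sense): a proper filter
on `F` such that every member of `F` meeting all members of the filter belongs to it. -/
structure LUltra {α : Type u} (F : Set (Set α)) where
  sets : Set (Set α)
  sets_subset : sets ⊆ F
  univ_mem : Set.univ ∈ sets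
  empty_notMem : ∅ ∉ sets
  inter_mem : ∀ a ∈ sets, ∀ b ∈ sets, a ∩ b ∈ sets
  superset_mem : ∀ a ∈ sets, ∀ b ∈ F, a ⊆ b → b ∈ sets
  ultra : ∀ a ∈ F, a ∉ sets → ∃ b ∈ sets, a ∩ b = ∅

/-- The Wallman topology: the sets `â = {u : a ∈ u}`, `a ∈ F`, form a base for closed sets. -/
instance LUltra.instTopologicalSpace {α : Type u} (F : Set (Set α)) :
    TopologicalSpace (LUltra F) :=
  TopologicalSpace.generateFrom {s | ∃ a ∈ F, s = {u : LUltra F | a ∈ u.sets}ᶜ}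

/-- `X` is hereditarily indecomposable: any two subcontinua are comparable or disjoint. -/
def HereditarilyIndecomposable (X : Type u) [TopologicalSpace X] : Prop :=
  ∀ A B : Set X, IsClosed A → IsConnected A → IsClosed B → IsConnected B →
    A ⊆ B ∨ B ⊆ A ∨ A ∩ B = ∅

/-- `x ∈ H(κ)`: `x` hereditarily has cardinality `< κ` (for regular `κ` this agrees with
`|TC(x)| < κ`). -/
def HeredLt (κ : Cardinal.{1}) (x : ZFSet.{0}) : Prop :=
  ZFSet.mem_wf.fix (fun x ih => Cardinal.mk x.toSet < κ ∧ ∀ y, ∀ h : y ∈ x, ih y h) x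

/-- `ZFSet` as a structure for the language with one binary relation, interpreted as `∈`. -/
instance ZFSet.memLangStructure : FirstOrder.Language.graph.Structure ZFSet.{0} where
  funMap := fun {_} f => isEmptyElim f
  RelMap := fun {_} r => match r with | .adj => fun x => x 0 ∈ x 1

/-- `H(κ)` as a substructure of the universe of sets with membership. -/
def HKappa (κ : Cardinal.{1}) : FirstOrder.Language.graph.Substructure ZFSet.{0} where
  carrier := {x | HeredLt κ x}
  fun_mem := fun {_} f => isEmptyElim f

/-- `z` belongs to the elementary submodel `M ≺ H(κ)`. -/
def MemOf (κ : Cardinal.{1})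
    (M : FirstOrder.Language.graph.ElementarySubstructure (HKappa κ))
    (z : ZFSet.{0}) : Prop :=
  ∃ h : z ∈ HKappa κ, (⟨z, h⟩ : HKappa κ) ∈ M

/-- The ZF-set coding a subset `A` of (the extension of) the ZF-set `X`. -/
noncomputable def codeSet (X : ZFSet.{0}) (A : Set ↥X.toSet) : ZFSet.{0} :=
  ZFSet.sep (fun y => ∃ h : y ∈ X.toSet, (⟨y, h⟩ : ↥X.toSet) ∈ A) X

/-- The subset of `X` decoded from a ZF-set `t`. -/
def decodeSet (X : ZFSet.{0}) (t : ZFSet.{0}) : Set ↥X.toSet :=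
  {p : ↥X.toSet | (p : ZFSet) ∈ t}

/-- The ZF-set coding the topology of the space `X`: the set of codes of open subsets. -/
noncomputable def opensZ (X : ZFSet.{0}) [TopologicalSpace ↥X.toSet] : ZFSet.{0} :=
  ZFSet.sep (fun t => IsOpen (decodeSet X t)) X.powerset

/-- The lattice `L = 2^X ∩ M`: the closed subsets of `X` whose codes belong to `M`. -/
def Lfam (X : ZFSet.{0}) [TopologicalSpace ↥X.toSet] (κ : Cardinal.{1})
    (M : FirstOrder.Language.graph.ElementarySubstructure (HKappa κ)) :
    Set (Set ↥X.toSet) :=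
  {A | IsClosed A ∧ MemOf κ M (codeSet X A)}


/-! ### Part 1: the Krasinkiewicz–Minc type characterization -/

/-- The lattice-theoretic characterization of hereditary indecomposability. -/
def KMProp {Y : Type*} (B : Set (Set Y)) : Prop :=
  ∀ C ∈ B, ∀ D ∈ B, ∀ F ∈ B, ∀ G ∈ B, C ∩ D = ∅ → C ∩ F = ∅ → D ∩ G = ∅ →
    ∃ P ∈ B, ∃ R ∈ B, ∃ Q ∈ B, C ⊆ P ∧ D ⊆ Q ∧ P ∩ Q = ∅ ∧ P ∩ R ∩ G = ∅ ∧
      R ∩ Q ∩ F = ∅ ∧ P ∪ R ∪ Q = univ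

theorem sep_clopen {Y : Type*} [TopologicalSpace Y] [CompactSpace Y] [T2Space Y]
    (G A E : Set Y) (hG : IsClosed G) (hA : IsClosed A) (hE : IsClosed E)
    (h : ∀ K, IsClosed K → IsConnected K → K ⊆ G → (K ∩ A).Nonempty → (K ∩ E).Nonempty → False) :
    ∃ P, IsClosed P ∧ P ⊆ G ∧ A ∩ G ⊆ P ∧ P ∩ E = ∅ ∧ IsClosed (G \ P) := by
  have : CompactSpace G := isCompact_iff_compactSpace.1 hG.isCompact
  let π : G → ConnectedComponents G := (↑)
  have hπ : Continuous π := ConnectedComponents.continuous_coe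
  have hcl : ∀ S : Set Y, IsClosed S → IsClosed (π '' ((↑) ⁻¹' S)) := fun S hS =>
    ((hS.preimage continuous_subtype_val).isCompact.image hπ).isClosed
  have hdis : Disjoint (π '' ((↑) ⁻¹' A)) (π '' ((↑) ⁻¹' E)) := by
    rw [Set.disjoint_left]
    rintro _ ⟨x, hx, rfl⟩ ⟨y, hy, hxy⟩
    have hxy' : connectedComponent y = connectedComponent x := ConnectedComponents.coe_eq_coe.1 hxy
    refine h ((↑) '' connectedComponent x) ?_ ?_ ?_ ?_ ?_
    · exact hG.isClosedEmbedding_subtypeVal.isClosedMap _ isClosed_connectedComponent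
    · exact isConnected_connectedComponent.image _ continuous_subtype_val.continuousOn
    · rintro _ ⟨z, -, rfl⟩; exact z.2
    · exact ⟨x, ⟨x, mem_connectedComponent, rfl⟩, hx⟩
    · exact ⟨y, ⟨y, hxy' ▸ mem_connectedComponent, rfl⟩, hy⟩
  obtain ⟨Z, hZ, hAZ, hEZ⟩ := exists_clopen_of_closed_subset_open (hcl A hA) (hcl E hE).isOpen_compl
    (Set.disjoint_left.1 hdis)
  have hZ' : IsClopen (π ⁻¹' Z) := hZ.preimage hπ
  refine ⟨(↑) '' (π ⁻¹' Z), hG.isClosedEmbedding_subtypeVal.isClosedMap _ hZ'.1, ?_, ?_, ?_, ?_⟩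
  · rintro _ ⟨z, -, rfl⟩; exact z.2
  · rintro x ⟨hx, hxG⟩
    exact ⟨⟨x, hxG⟩, hAZ ⟨⟨x, hxG⟩, hx, rfl⟩, rfl⟩
  · ext x
    simp only [mem_inter_iff, mem_empty_iff_false, iff_false]
    rintro ⟨⟨z, hz, rfl⟩, hx⟩
    exact hEZ hz ⟨z, hx, rfl⟩
  · have : G \ ((↑) '' (π ⁻¹' Z)) = ((↑) '' (π ⁻¹' Z)ᶜ : Set Y) := by
      ext x
      constructor
      · rintro ⟨hx, hx'⟩
        exact ⟨⟨x, hx⟩, fun hc => hx' ⟨_, hc, rfl⟩, rfl⟩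
      · rintro ⟨z, hz, rfl⟩
        refine ⟨z.2, ?_⟩
        rintro ⟨w, hw, hwz⟩
        exact hz (Subtype.ext hwz ▸ hw)
    rw [this]
    exact hG.isClosedEmbedding_subtypeVal.isClosedMap _ hZ'.compl.1

theorem comp_closed {Y : Type*} [TopologicalSpace Y] [CompactSpace Y] [T2Space Y]
    (F D : Set Y) (hF : IsClosed F) (hD : IsClosed D) :
    ∃ Q, IsClosed Q ∧ (∀ y ∈ Q, ∃ K, IsClosed K ∧ IsConnected K ∧ K ⊆ F ∧ y ∈ K ∧ (K ∩ D).Nonempty) ∧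
      (∀ K, IsConnected K → K ⊆ F → (K ∩ D).Nonempty → K ⊆ Q) := by
  have : CompactSpace F := isCompact_iff_compactSpace.1 hF.isCompact
  let π : F → ConnectedComponents F := (↑)
  have hπ : Continuous π := ConnectedComponents.continuous_coe
  have hcl : IsClosed (π '' ((↑) ⁻¹' D)) :=
    ((hD.preimage continuous_subtype_val).isCompact.image hπ).isClosed
  refine ⟨(↑) '' (π ⁻¹' (π '' ((↑) ⁻¹' D))), 
    hF.isClosedEmbedding_subtypeVal.isClosedMap _ (hcl.preimage hπ), ?_, ?_⟩
  · rintro _ ⟨y, ⟨x, hx, hxy⟩, rfl⟩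
    have hxy' : connectedComponent x = connectedComponent y := ConnectedComponents.coe_eq_coe.1 hxy
    refine ⟨(↑) '' connectedComponent x, ?_, ?_, ?_, ?_, ?_⟩
    · exact hF.isClosedEmbedding_subtypeVal.isClosedMap _ isClosed_connectedComponent
    · exact isConnected_connectedComponent.image _ continuous_subtype_val.continuousOn
    · rintro _ ⟨z, -, rfl⟩; exact z.2
    · exact ⟨y, hxy' ▸ mem_connectedComponent, rfl⟩
    · exact ⟨x, ⟨x, mem_connectedComponent, rfl⟩, hx⟩
  · rintro K hK hKF ⟨d, hdK, hdD⟩ y hy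
    have hK' : IsPreconnected ((↑) ⁻¹' K : Set F) := by
      rw [← Topology.IsInducing.subtypeVal.isPreconnected_image, Subtype.image_preimage_coe,
        inter_eq_right.2 hKF]
      exact hK.2
    refine ⟨⟨y, hKF hy⟩, ⟨⟨d, hKF hdK⟩, hdD, ?_⟩, rfl⟩
    apply ConnectedComponents.coe_eq_coe'.2
    exact hK'.subset_connectedComponent (x := ⟨y, hKF hy⟩) hy (show (⟨d, hKF hdK⟩ : F) ∈ _ from hdK)

theorem frontier_aux {Y : Type*} [TopologicalSpace Y] {W P : Set Y} 
    (hP' : IsClosed (Wᶜ \ P)) {x : Y} (hx : x ∈ closure Pᶜ) (hxP : x ∈ P) :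
    x ∈ closure W := by
  have : Pᶜ ⊆ W ∪ (Wᶜ \ P) := by
    intro z hz
    by_cases h : z ∈ W
    · exact Or.inl h
    · exact Or.inr ⟨h, hz⟩
  have := closure_mono this hx
  rw [closure_union, hP'.closure_eq] at this
  rcases this with h | h
  · exact h
  · exact absurd hxP h.2

theorem km_of_hi {Y : Type*} [TopologicalSpace Y] [CompactSpace Y] [T2Space Y]
    (hY : HereditarilyIndecomposable Y) : KMProp {A : Set Y | IsClosed A} := by
  intro C hC D hD F hF G hG hCD hCF hDG
  simp only [mem_setOf_eq] at hC hD hF hG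
  -- neighbourhoods
  have hnb : ∀ A B : Set Y, IsClosed A → IsClosed B → A ∩ B = ∅ →
      ∃ U, IsOpen U ∧ A ⊆ U ∧ closure U ∩ B = ∅ := by
    intro A B hA hB hAB
    obtain ⟨U, hU, hAU, hUB⟩ := normal_exists_closure_subset hA hB.isOpen_compl
      (fun x hx hxB => (hAB ▸ (⟨hx, hxB⟩ : x ∈ A ∩ B) : x ∈ (∅ : Set Y)))
    refine ⟨U, hU, hAU, ?_⟩
    ext x
    simp only [mem_inter_iff, mem_empty_iff_false, iff_false]
    rintro ⟨h1, h2⟩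
    exact hUB h1 h2
  obtain ⟨U, hU, hCU, hUd⟩ := hnb C (D ∪ F) hC (hD.union hF) (by rw [inter_union_distrib_left, hCD, hCF, union_empty])
  obtain ⟨V, hV, hDV, hVd⟩ := hnb D (C ∪ G) hD (hC.union hG) (by rw [inter_union_distrib_left, inter_comm D C, hCD, hDG, union_empty])
  obtain ⟨Q0, hQ0c, hQ0, hQ0'⟩ := comp_closed Uᶜ D hU.isClosed_compl hD
  obtain ⟨P, hPc, hPV, hCP, hPQ0, hP'⟩ := sep_clopen Vᶜ C Q0 hV.isClosed_compl hC hQ0c (by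
    rintro K hKc hK hKV ⟨c, hcK, hcC⟩ ⟨q, hqK, hqQ⟩
    obtain ⟨K', hK'c, hK', hK'U, hqK', ⟨d, hdK', hdD⟩⟩ := hQ0 q hqQ
    rcases hY K K' hKc hK hK'c hK' with h | h | h
    · exact hK'U (h hcK) (hCU hcC)
    · exact hKV (h hdK') (hDV hdD)
    · exact (h ▸ (⟨hqK, hqK'⟩ : q ∈ K ∩ K') : q ∈ (∅ : Set Y)))
  obtain ⟨Q, hQc, hQU, hDQ, hQP, hQ'⟩ := sep_clopen Uᶜ D P hU.isClosed_compl hD hPc (by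
    rintro K hKc hK hKU hKD ⟨p, hpK, hpP⟩
    have := hQ0' K hK hKU hKD hpK
    exact (hPQ0 ▸ (⟨hpP, this⟩ : p ∈ P ∩ Q0) : p ∈ (∅ : Set Y)))
  refine ⟨P, hPc, closure (P ∪ Q)ᶜ, isClosed_closure, Q, hQc, ?_, ?_, ?_, ?_, ?_, ?_⟩
  · intro x hx
    refine hCP ⟨hx, fun hxV => ?_⟩
    exact (hVd ▸ (⟨subset_closure hxV, Or.inl hx⟩ : x ∈ closure V ∩ (C ∪ G)) : x ∈ (∅ : Set Y))
  · intro x hx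
    refine hDQ ⟨hx, fun hxV => ?_⟩
    exact (hUd ▸ (⟨subset_closure hxV, Or.inl hx⟩ : x ∈ closure U ∩ (D ∪ F)) : x ∈ (∅ : Set Y))
  · rw [inter_comm]; exact hQP
  · ext x
    simp only [mem_inter_iff, mem_empty_iff_false, iff_false]
    rintro ⟨⟨hxP, hxR⟩, hxG⟩
    have := frontier_aux hP' (closure_mono (compl_subset_compl.2 subset_union_left) hxR) hxP
    exact (hVd ▸ (⟨this, Or.inr hxG⟩ : x ∈ closure V ∩ (C ∪ G)) : x ∈ (∅ : Set Y))
  · ext x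
    simp only [mem_inter_iff, mem_empty_iff_false, iff_false]
    rintro ⟨⟨hxR, hxQ⟩, hxF⟩
    have := frontier_aux hQ' (closure_mono (compl_subset_compl.2 subset_union_right) hxR) hxQ
    exact (hUd ▸ (⟨this, Or.inr hxF⟩ : x ∈ closure U ∩ (D ∪ F)) : x ∈ (∅ : Set Y))
  · ext x
    simp only [mem_union, mem_univ, iff_true]
    by_cases h : x ∈ P ∪ Q
    · rcases h with h | h <;> simp [h]
    · exact Or.inl (Or.inr (subset_closure h))

theorem hi_of_km {Y : Type*} [TopologicalSpace Y] [CompactSpace Y] [T2Space Y]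
    (hY : KMProp {A : Set Y | IsClosed A}) : HereditarilyIndecomposable Y := by
  intro A B hA hA' hB hB'
  by_contra! hcon
  obtain ⟨hAB, hBA, hne⟩ := hcon
  obtain ⟨a, haA, haB⟩ := not_subset.1 hAB
  obtain ⟨b, hbB, hbA⟩ := not_subset.1 hBA
  obtain ⟨z, hzA, hzB⟩ := hne
  obtain ⟨P, hP, R, hR, Q, hQ, haP, hbQ, hPQ, hPR, hRQ, hun⟩ := hY {a} isClosed_singleton {b} isClosed_singleton
    B hB A hA (by simp only [singleton_inter_eq_empty, mem_singleton_iff]; rintro rfl; exact haB hbB) (by simpa using haB) (by simpa using hbA)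
  simp only [mem_setOf_eq] at hP hR hQ
  simp only [Set.ext_iff, mem_inter_iff, mem_union, mem_empty_iff_false, mem_univ, iff_false, iff_true] at hPQ hPR hRQ hun
  have h1 : A ⊆ P := by
    rcases isPreconnected_iff_subset_of_disjoint_closed.1 hA'.2 P (R ∪ Q) hP (hR.union hQ)
      (fun x _ => by have := hun x; simp only [mem_union]; tauto)
      (by
        ext x
        have h1 := hPQ x
        have h2 := hPR x
        simp only [mem_inter_iff, mem_union, mem_empty_iff_false, iff_false]
        tauto) with h | h
    · exact h
    · have h1 := hPQ a
      have h2 := hPR a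
      have h3 : a ∈ P := haP rfl
      rcases h haA with h | h
      · tauto
      · tauto
  have h2 : B ⊆ Q := by
    rcases isPreconnected_iff_subset_of_disjoint_closed.1 hB'.2 Q (P ∪ R) hQ (hP.union hR)
      (fun x _ => by have := hun x; simp only [mem_union]; tauto)
      (by
        ext x
        have h1 := hPQ x
        have h2 := hRQ x
        simp only [mem_inter_iff, mem_union, mem_empty_iff_false, iff_false]
        tauto) with h | h
    · exact h
    · have h1 := hPQ b
      have h2 := hRQ b
      have h3 : b ∈ Q := hbQ rfl
      rcases h hbB with h | h
      · tauto
      · tauto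
  exact hPQ z ⟨h1 hzA, h2 hzB⟩

/-- swelling -/
theorem swell {Y : Type*} [TopologicalSpace Y] [CompactSpace Y] [T2Space Y] (B : Set (Set Y))
    (hcl : ∀ b ∈ B, IsClosed b) (huniv : univ ∈ B) (hinter : ∀ a ∈ B, ∀ b ∈ B, a ∩ b ∈ B)
    (hbase : ∀ K, IsClosed K → ∀ x ∉ K, ∃ b ∈ B, K ⊆ b ∧ x ∉ b)
    (K E : Set Y) (hK : IsClosed K) (hE : IsClosed E) (hKE : K ∩ E = ∅) :
    ∃ b ∈ B, K ⊆ b ∧ b ∩ E = ∅ := by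
  have := hE.isCompact.induction_on (p := fun E => ∃ b ∈ B, K ⊆ b ∧ b ∩ E = ∅)
    ⟨univ, huniv, subset_univ _, by simp⟩ 
    (by
      rintro s t hst ⟨b, hb, hKb, hbt⟩
      exact ⟨b, hb, hKb, subset_eq_empty (inter_subset_inter_right _ hst) hbt⟩) 
    (by
      rintro s t ⟨b, hb, hKb, hbs⟩ ⟨c, hc, hKc, hct⟩
      refine ⟨b ∩ c, hinter _ hb _ hc, subset_inter hKb hKc, ?_⟩
      simp only [Set.ext_iff, mem_inter_iff, mem_union, mem_empty_iff_false, iff_false] at *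
      intro x; have := hbs x; have := hct x; tauto)
    (by
      intro x hx
      obtain ⟨b, hb, hKb, hxb⟩ := hbase K hK x (fun h => (hKE ▸ (⟨h, hx⟩ : x ∈ K ∩ E) : x ∈ (∅ : Set Y)))
      exact ⟨bᶜ, mem_nhdsWithin_of_mem_nhds ((hcl b hb).isOpen_compl.mem_nhds hxb), b, hb, hKb, by simp⟩)
  exact this

theorem km_base_iff {Y : Type*} [TopologicalSpace Y] [CompactSpace Y] [T2Space Y] (B : Set (Set Y))
    (hcl : ∀ b ∈ B, IsClosed b) (huniv : univ ∈ B) (hinter : ∀ a ∈ B, ∀ b ∈ B, a ∩ b ∈ B)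
    (hbase : ∀ K, IsClosed K → ∀ x ∉ K, ∃ b ∈ B, K ⊆ b ∧ x ∉ b) :
    KMProp {A : Set Y | IsClosed A} ↔ KMProp B := by
  have sw := swell B hcl huniv hinter hbase
  constructor
  · intro h C hC D hD F hF G hG h1 h2 h3
    obtain ⟨P, hP, R, hR, Q, hQ, hCP, hDQ, hPQ, hPR, hRQ, hun⟩ :=
      h C (hcl C hC) D (hcl D hD) F (hcl F hF) G (hcl G hG) h1 h2 h3
    simp only [mem_setOf_eq] at hP hR hQ
    have hFc := hcl F hF
    have hGc := hcl G hG
    obtain ⟨P', hP'B, hPP', hP'⟩ := sw P (Q ∪ (R ∩ G)) hP (hQ.union (hR.inter hGc))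
      (by rw [inter_union_distrib_left, hPQ, ← inter_assoc, hPR, union_empty])
    have hP'c := hcl P' hP'B
    obtain ⟨R', hR'B, hRR', hR'⟩ := sw R ((P' ∩ G) ∪ (Q ∩ F)) hR ((hP'c.inter hGc).union (hQ.inter hFc))
      (by simp only [Set.ext_iff, mem_inter_iff, mem_union, mem_empty_iff_false, iff_false] at *
          intro x; have := hP' x; have := hRQ x; tauto)
    have hR'c := hcl R' hR'B
    obtain ⟨Q', hQ'B, hQQ', hQ'⟩ := sw Q (P' ∪ (R' ∩ F)) hQ (hP'c.union (hR'c.inter hFc))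
      (by simp only [Set.ext_iff, mem_inter_iff, mem_union, mem_empty_iff_false, iff_false] at *
          intro x; have := hP' x; have := hR' x; tauto)
    refine ⟨P', hP'B, R', hR'B, Q', hQ'B, hCP.trans hPP', hDQ.trans hQQ', ?_, ?_, ?_, ?_⟩
    · simp only [Set.ext_iff, mem_inter_iff, mem_union, mem_empty_iff_false, iff_false] at *
      intro x; have := hQ' x; tauto
    · simp only [Set.ext_iff, mem_inter_iff, mem_union, mem_empty_iff_false, iff_false] at *
      intro x; have := hR' x; tauto
    · simp only [Set.ext_iff, mem_inter_iff, mem_union, mem_empty_iff_false, iff_false] at *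
      intro x; have := hQ' x; tauto
    · exact univ_subset_iff.1 (hun ▸ union_subset_union (union_subset_union hPP' hRR') hQQ')
  · intro h C hC D hD F hF G hG h1 h2 h3
    simp only [mem_setOf_eq] at hC hD hF hG
    obtain ⟨C', hC'B, hCC', hC'⟩ := sw C (D ∪ F) hC (hD.union hF) (by rw [inter_union_distrib_left, h1, h2, union_empty])
    have hC'c := hcl C' hC'B
    obtain ⟨D', hD'B, hDD', hD'⟩ := sw D (C' ∪ G) hD (hC'c.union hG) (by 
      simp only [Set.ext_iff, mem_inter_iff, mem_union, mem_empty_iff_false, iff_false] at *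
      intro x; have := hC' x; have := h3 x; tauto)
    have hD'c := hcl D' hD'B
    obtain ⟨F', hF'B, hFF', hF'⟩ := sw F C' hF hC'c (by 
      simp only [Set.ext_iff, mem_inter_iff, mem_union, mem_empty_iff_false, iff_false] at *
      intro x; have := hC' x; tauto)
    obtain ⟨G', hG'B, hGG', hG'⟩ := sw G D' hG hD'c (by 
      simp only [Set.ext_iff, mem_inter_iff, mem_union, mem_empty_iff_false, iff_false] at *
      intro x; have := hD' x; tauto)
    obtain ⟨P, hP, R, hR, Q, hQ, hCP, hDQ, hPQ, hPR, hRQ, hun⟩ := h C' hC'B D' hD'B F' hF'B G' hG'B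
      (by simp only [Set.ext_iff, mem_inter_iff, mem_union, mem_empty_iff_false, iff_false] at *
          intro x; have := hD' x; tauto)
      (by rw [inter_comm]; exact hF') (by rw [inter_comm]; exact hG')
    exact ⟨P, hcl P hP, R, hcl R hR, Q, hcl Q hQ, hCC'.trans hCP, hDD'.trans hDQ, hPQ,
      subset_eq_empty (inter_subset_inter_right _ hGG') hPR,
      subset_eq_empty (inter_subset_inter_right _ hFF') hRQ, hun⟩

/-! ### Part 2: the Wallman space of a lattice -/

/-- The basic closed set of the Wallman space. -/
def LUltra.hat {α : Type*} (F : Set (Set α)) (a : Set α) : Set (LUltra F) := {u | a ∈ u.sets}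

/-- The family is a normal disjunctive lattice of sets. -/
structure NiceLattice {α : Type*} (F : Set (Set α)) : Prop where
  univ_mem : univ ∈ F
  empty_mem : ∅ ∈ F
  inter_mem : ∀ a ∈ F, ∀ b ∈ F, a ∩ b ∈ F
  union_mem : ∀ a ∈ F, ∀ b ∈ F, a ∪ b ∈ F
  disj : ∀ a ∈ F, ∀ b ∈ F, ¬ a ⊆ b → ∃ c ∈ F, c.Nonempty ∧ c ⊆ a ∧ c ∩ b = ∅
  normal : ∀ a ∈ F, ∀ b ∈ F, a ∩ b = ∅ → ∃ c ∈ F, ∃ d ∈ F, c ∪ d = univ ∧ c ∩ a = ∅ ∧ d ∩ b = ∅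

/-- Proper filters of a lattice of sets. -/
structure PFilt {α : Type*} (F : Set (Set α)) (p : Set (Set α)) : Prop where
  sub : p ⊆ F
  univ_mem : univ ∈ p
  empty_notMem : ∅ ∉ p
  inter_mem : ∀ a ∈ p, ∀ b ∈ p, a ∩ b ∈ p
  superset_mem : ∀ a ∈ p, ∀ b ∈ F, a ⊆ b → b ∈ p

theorem exists_ultra_of_pfilt {α : Type*} {F : Set (Set α)} (hF : NiceLattice F) {p : Set (Set α)}
    (hp : PFilt F p) : ∃ u : LUltra F, p ⊆ u.sets := by
  obtain ⟨q, hpq, hq⟩ := zorn_subset_nonempty {q | PFilt F q} (by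
    intro c hc hchain hne
    obtain ⟨s0, hs0⟩ := hne
    refine ⟨⋃₀ c, ⟨?_, ?_, ?_, ?_, ?_⟩, fun s hs => subset_sUnion_of_mem hs⟩
    · exact sUnion_subset fun s hs => (hc hs).sub
    · exact ⟨s0, hs0, (hc hs0).univ_mem⟩
    · rintro ⟨s, hs, h⟩; exact (hc hs).empty_notMem h
    · rintro a ⟨s, hs, ha⟩ b ⟨t, ht, hb⟩
      rcases hchain.total hs ht with h | h
      · exact ⟨t, ht, (hc ht).inter_mem a (h ha) b hb⟩
      · exact ⟨s, hs, (hc hs).inter_mem a ha b (h hb)⟩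
    · rintro a ⟨s, hs, ha⟩ b hb hab
      exact ⟨s, hs, (hc hs).superset_mem a ha b hb hab⟩) p hp
  have hqp : PFilt F q := hq.prop
  refine ⟨⟨q, hqp.sub, hqp.univ_mem, hqp.empty_notMem, hqp.inter_mem, hqp.superset_mem, ?_⟩, hpq⟩
  intro a haF haq
  by_contra! hcon
  have hr : PFilt F {b | b ∈ F ∧ ∃ c ∈ q, a ∩ c ⊆ b} := by
    refine ⟨fun b hb => hb.1, ⟨hF.univ_mem, univ, hqp.univ_mem, subset_univ _⟩, ?_, ?_, ?_⟩
    · rintro ⟨-, c, hc, hac⟩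
      exact (hcon c hc).ne_empty (subset_empty_iff.1 hac)
    · rintro b ⟨hb, c, hc, hac⟩ b' ⟨hb', c', hc', hac'⟩
      exact ⟨hF.inter_mem _ hb _ hb', c ∩ c', hqp.inter_mem _ hc _ hc',
        fun x hx => ⟨hac ⟨hx.1, hx.2.1⟩, hac' ⟨hx.1, hx.2.2⟩⟩⟩
    · rintro b ⟨hb, c, hc, hac⟩ b' hb' hbb'
      exact ⟨hb', c, hc, hac.trans hbb'⟩
  have hle := hq.le_of_ge hr (fun b hb => ⟨hqp.sub hb, b, hb, inter_subset_right⟩)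
  exact haq (hle ⟨haF, univ, hqp.univ_mem, by simp⟩)

theorem LUltra.finite_sInter {α : Type*} {F : Set (Set α)} (u : LUltra F) {t : Set (Set α)}
    (ht : t.Finite) (h : t ⊆ u.sets) : ⋂₀ t ∈ u.sets := by
  induction t, ht using Set.Finite.induction_on with
  | empty => simpa using u.univ_mem
  | insert _ _ ih =>
    rw [sInter_insert]
    exact u.inter_mem _ (h (mem_insert _ _)) _ (ih ((subset_insert _ _).trans h))

theorem exists_ultra_of_fip {α : Type*} {F : Set (Set α)} (hF : NiceLattice F) {S : Set (Set α)}
    (hS : S ⊆ F) (hfip : ∀ t ⊆ S, t.Finite → (⋂₀ t).Nonempty) : ∃ u : LUltra F, S ⊆ u.sets := by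
  have hp : PFilt F {b | b ∈ F ∧ ∃ t ⊆ S, t.Finite ∧ ⋂₀ t ⊆ b} := by
    refine ⟨fun b hb => hb.1, ⟨hF.univ_mem, ∅, empty_subset _, finite_empty, subset_univ _⟩, ?_, ?_, ?_⟩
    · rintro ⟨-, t, ht, htf, h⟩
      exact (hfip t ht htf).ne_empty (subset_empty_iff.1 h)
    · rintro b ⟨hb, t, ht, htf, h⟩ b' ⟨hb', t', ht', htf', h'⟩
      refine ⟨hF.inter_mem _ hb _ hb', t ∪ t', union_subset ht ht', htf.union htf', ?_⟩
      rw [sInter_union]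
      exact inter_subset_inter h h'
    · rintro b ⟨hb, t, ht, htf, h⟩ b' hb' hbb'
      exact ⟨hb', t, ht, htf, h.trans hbb'⟩
  obtain ⟨u, hu⟩ := exists_ultra_of_pfilt hF hp
  exact ⟨u, fun a ha => hu ⟨hS ha, {a}, by simpa using ha, finite_singleton _, by simp⟩⟩

theorem LUltra.disj_absurd {α : Type*} {F : Set (Set α)} (u : LUltra F) {a b : Set α}
    (ha : a ∈ u.sets) (hb : b ∈ u.sets) (h : a ∩ b = ∅) : False :=
  u.empty_notMem (h ▸ u.inter_mem a ha b hb)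

theorem LUltra.prime {α : Type*} {F : Set (Set α)} (u : LUltra F) {a b : Set α}
    (ha : a ∈ F) (hb : b ∈ F) (h : a ∪ b ∈ u.sets) : a ∈ u.sets ∨ b ∈ u.sets := by
  by_contra! hcon
  obtain ⟨c, hc, hac⟩ := u.ultra a ha hcon.1
  obtain ⟨d, hd, hbd⟩ := u.ultra b hb hcon.2
  refine u.disj_absurd h (u.inter_mem c hc d hd) ?_
  simp only [Set.ext_iff, mem_inter_iff, mem_union, mem_empty_iff_false, iff_false] at *
  intro x; have := hac x; have := hbd x; tauto

theorem LUltra.ext_sets {α : Type*} {F : Set (Set α)} {u v : LUltra F} (h : u.sets ⊆ v.sets) : u = v := by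
  have : u.sets = v.sets := by
    refine h.antisymm fun b hb => ?_
    by_contra hbu
    obtain ⟨c, hc, hbc⟩ := u.ultra b (v.sets_subset hb) hbu
    exact v.disj_absurd hb (h hc) hbc
  cases u; cases v; simp only at this; subst this; rfl

theorem LUltra.isOpen_hat_compl {α : Type*} {F : Set (Set α)} {a : Set α} (ha : a ∈ F) :
    IsOpen (LUltra.hat F a)ᶜ := TopologicalSpace.isOpen_generateFrom_of_mem ⟨a, ha, rfl⟩

theorem LUltra.compactSpace {α : Type*} {F : Set (Set α)} (hF : NiceLattice F) :
    CompactSpace (LUltra F) := by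
  constructor
  refine isCompact_generateFrom (S := {s | ∃ a ∈ F, s = {u : LUltra F | a ∈ u.sets}ᶜ}) rfl ?_
  intro P hP hcov
  by_contra! hcon
  obtain ⟨u, hu⟩ := exists_ultra_of_fip hF (S := {a | a ∈ F ∧ {u : LUltra F | a ∈ u.sets}ᶜ ∈ P})
    (fun a ha => ha.1) (by
      intro t ht htf
      by_contra hne
      refine hcon ((fun a => {u : LUltra F | a ∈ u.sets}ᶜ) '' t) ?_ (htf.image _) ?_
      · rintro _ ⟨a, ha, rfl⟩; exact (ht ha).2
      · intro u _
        by_contra hu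
        refine u.empty_notMem ?_
        rw [← not_nonempty_iff_eq_empty.1 hne]
        refine u.finite_sInter htf fun a ha => ?_
        by_contra hau
        exact hu ⟨_, ⟨a, ha, rfl⟩, hau⟩)
  obtain ⟨s, hs, hus⟩ := hcov (mem_univ u)
  obtain ⟨a, ha, rfl⟩ := hP hs
  exact hus (hu ⟨ha, hs⟩)

theorem LUltra.t2Space {α : Type*} {F : Set (Set α)} (hF : NiceLattice F) :
    T2Space (LUltra F) := by
  constructor
  intro u v huv
  have : ¬ u.sets ⊆ v.sets := fun h => huv (LUltra.ext_sets h)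
  obtain ⟨a, hau, hav⟩ := not_subset.1 this
  obtain ⟨b, hb, hab⟩ := v.ultra a (u.sets_subset hau) hav
  obtain ⟨c, hc, d, hd, hcd, hca, hdb⟩ := hF.normal a (u.sets_subset hau) b (v.sets_subset hb) hab
  refine ⟨_, _, LUltra.isOpen_hat_compl hc, LUltra.isOpen_hat_compl hd,
    fun h => u.disj_absurd h hau hca, fun h => v.disj_absurd h hb hdb, ?_⟩
  rw [Set.disjoint_left]
  intro w h1 h2
  rcases w.prime hc hd (hcd ▸ w.univ_mem) with h | h
  · exact h1 h
  · exact h2 h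

theorem LUltra.hat_inter {α : Type*} {F : Set (Set α)} {a b : Set α} (ha : a ∈ F) (hb : b ∈ F) :
    hat F (a ∩ b) = hat F a ∩ hat F b := by
  ext u
  exact ⟨fun h => ⟨u.superset_mem _ h a ha inter_subset_left, u.superset_mem _ h b hb inter_subset_right⟩,
    fun h => u.inter_mem _ h.1 _ h.2⟩

theorem LUltra.hat_union {α : Type*} {F : Set (Set α)} (hF : NiceLattice F) {a b : Set α} (ha : a ∈ F) (hb : b ∈ F) :
    hat F (a ∪ b) = hat F a ∪ hat F b := by
  ext u
  refine ⟨fun h => u.prime ha hb h, ?_⟩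
  rintro (h | h)
  · exact u.superset_mem _ h _ (hF.union_mem _ ha _ hb) subset_union_left
  · exact u.superset_mem _ h _ (hF.union_mem _ ha _ hb) subset_union_right

theorem LUltra.hat_univ {α : Type*} {F : Set (Set α)} : hat F univ = univ :=
  eq_univ_of_forall fun u => u.univ_mem

theorem LUltra.hat_empty {α : Type*} {F : Set (Set α)} : hat F ∅ = ∅ :=
  eq_empty_of_forall_notMem fun u => u.empty_notMem

theorem LUltra.hat_subset {α : Type*} {F : Set (Set α)} (hF : NiceLattice F) {a b : Set α} (ha : a ∈ F) (hb : b ∈ F) :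
    hat F a ⊆ hat F b ↔ a ⊆ b := by
  constructor
  · intro h
    by_contra hab
    obtain ⟨c, hc, hne, hca, hcb⟩ := hF.disj a ha b hb hab
    obtain ⟨u, hu⟩ := exists_ultra_of_fip hF (S := {c}) (by simpa using hc) (by
      intro t ht _
      exact hne.mono (subset_sInter fun s hs => (ht hs : s = c) ▸ subset_rfl))
    have hcu : c ∈ u.sets := hu rfl
    exact u.disj_absurd hcu (h (u.superset_mem c hcu a ha hca)) hcb
  · intro h u hu
    exact u.superset_mem a hu b hb h

theorem LUltra.hat_eq {α : Type*} {F : Set (Set α)} (hF : NiceLattice F) {a b : Set α} (ha : a ∈ F) (hb : b ∈ F) :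
    hat F a = hat F b ↔ a = b := by
  rw [Subset.antisymm_iff, hat_subset hF ha hb, hat_subset hF hb ha, ← Subset.antisymm_iff]

theorem LUltra.base {α : Type*} {F : Set (Set α)} (hF : NiceLattice F) (O : Set (LUltra F)) (hO : IsOpen O)
    (x : LUltra F) (hx : x ∈ O) : ∃ b ∈ F, x ∉ hat F b ∧ (hat F b)ᶜ ⊆ O := by
  induction hO with
  | basic s hs =>
    obtain ⟨a, ha, rfl⟩ := hs
    exact ⟨a, ha, hx, subset_rfl⟩
  | univ => exact ⟨∅, hF.empty_mem, x.empty_notMem, subset_univ _⟩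
  | inter s t _ _ ihs iht =>
    obtain ⟨a, ha, hxa, has⟩ := ihs hx.1
    obtain ⟨b, hb, hxb, hbt⟩ := iht hx.2
    refine ⟨a ∪ b, hF.union_mem _ ha _ hb, ?_, ?_⟩
    · rw [hat_union hF ha hb]; rintro (h | h)
      · exact hxa h
      · exact hxb h
    · rw [hat_union hF ha hb, compl_union]; exact inter_subset_inter has hbt
  | sUnion S _ ih =>
    obtain ⟨s, hs, hxs⟩ := hx
    obtain ⟨a, ha, hxa, has⟩ := ih s hs hxs
    exact ⟨a, ha, hxa, has.trans (subset_sUnion_of_mem hs)⟩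

theorem LUltra.hi_iff {α : Type*} {F : Set (Set α)} (hF : NiceLattice F) :
    HereditarilyIndecomposable (LUltra F) ↔ KMProp F := by
  have := LUltra.compactSpace hF
  have := LUltra.t2Space hF
  have h1 : HereditarilyIndecomposable (LUltra F) ↔ KMProp {A : Set (LUltra F) | IsClosed A} :=
    ⟨km_of_hi, hi_of_km⟩
  rw [h1, km_base_iff (hat F '' F)]
  · have e : ∀ a ∈ F, (hat F a = ∅ ↔ a = ∅) := fun a ha => by
      rw [← hat_empty (F := F), hat_eq hF ha hF.empty_mem]
    have e' : ∀ a ∈ F, (hat F a = univ ↔ a = univ) := fun a ha => by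
      rw [← hat_univ (F := F), hat_eq hF ha hF.univ_mem]
    have i2 : ∀ a ∈ F, ∀ b ∈ F, (hat F a ∩ hat F b = ∅ ↔ a ∩ b = ∅) := fun a ha b hb => by
      rw [← hat_inter ha hb, e _ (hF.inter_mem _ ha _ hb)]
    have i3 : ∀ a ∈ F, ∀ b ∈ F, ∀ c ∈ F, (hat F a ∩ hat F b ∩ hat F c = ∅ ↔ a ∩ b ∩ c = ∅) :=
      fun a ha b hb c hc => by
        rw [← hat_inter ha hb, i2 _ (hF.inter_mem _ ha _ hb) _ hc]
    have u3 : ∀ a ∈ F, ∀ b ∈ F, ∀ c ∈ F, (hat F a ∪ hat F b ∪ hat F c = univ ↔ a ∪ b ∪ c = univ) :=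
      fun a ha b hb c hc => by
        have hab := hF.union_mem _ ha _ hb
        rw [← hat_union hF ha hb, ← hat_union hF hab hc, e' _ (hF.union_mem _ hab _ hc)]
    constructor
    · intro h C hC D hD E hE G hG h1 h2 h3
      obtain ⟨_, ⟨P, hP, rfl⟩, _, ⟨R, hR, rfl⟩, _, ⟨Q, hQ, rfl⟩, g1, g2, g3, g4, g5, g6⟩ :=
        h _ ⟨C, hC, rfl⟩ _ ⟨D, hD, rfl⟩ _ ⟨E, hE, rfl⟩ _ ⟨G, hG, rfl⟩
          ((i2 _ hC _ hD).2 h1) ((i2 _ hC _ hE).2 h2) ((i2 _ hD _ hG).2 h3)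
      exact ⟨P, hP, R, hR, Q, hQ, (hat_subset hF hC hP).1 g1, (hat_subset hF hD hQ).1 g2,
        (i2 _ hP _ hQ).1 g3, (i3 _ hP _ hR _ hG).1 g4, (i3 _ hR _ hQ _ hE).1 g5, (u3 _ hP _ hR _ hQ).1 g6⟩
    · rintro h _ ⟨C, hC, rfl⟩ _ ⟨D, hD, rfl⟩ _ ⟨E, hE, rfl⟩ _ ⟨G, hG, rfl⟩ h1 h2 h3
      obtain ⟨P, hP, R, hR, Q, hQ, g1, g2, g3, g4, g5, g6⟩ :=
        h C hC D hD E hE G hG 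
          ((i2 _ hC _ hD).1 h1) ((i2 _ hC _ hE).1 h2) ((i2 _ hD _ hG).1 h3)
      exact ⟨_, ⟨P, hP, rfl⟩, _, ⟨R, hR, rfl⟩, _, ⟨Q, hQ, rfl⟩, (hat_subset hF hC hP).2 g1, (hat_subset hF hD hQ).2 g2,
        (i2 _ hP _ hQ).2 g3, (i3 _ hP _ hR _ hG).2 g4, (i3 _ hR _ hQ _ hE).2 g5, (u3 _ hP _ hR _ hQ).2 g6⟩
  · rintro _ ⟨a, ha, rfl⟩
    exact ⟨isOpen_hat_compl ha⟩
  · exact ⟨univ, hF.univ_mem, hat_univ⟩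
  · rintro _ ⟨a, ha, rfl⟩ _ ⟨b, hb, rfl⟩
    exact ⟨a ∩ b, hF.inter_mem _ ha _ hb, hat_inter ha hb⟩
  · intro K hK x hx
    obtain ⟨b, hb, hxb, h⟩ := LUltra.base hF Kᶜ hK.isOpen_compl x hx
    exact ⟨_, ⟨b, hb, rfl⟩, compl_subset_compl.1 h, hxb⟩

/-! ### Part 3: definability and elementarity -/

open FirstOrder.Language in
/-- Predicates on tuples of elements of `H(κ)` definable with parameters in `M`. -/
def Dfn {κ : Cardinal.{1}} (M : FirstOrder.Language.graph.ElementarySubstructure (HKappa κ))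
    {α : Type} (P : (α → HKappa κ) → Prop) : Prop :=
  ∃ φ : FirstOrder.Language.graph.Formula (M ⊕ α), ∀ v : α → HKappa κ,
    φ.Realize (Sum.elim (fun m : M => (m : HKappa κ)) v) ↔ P v

/-- Terms: projections or constants from `M`. -/
def Trm {κ : Cardinal.{1}} (M : FirstOrder.Language.graph.ElementarySubstructure (HKappa κ))
    {α : Type} (f : (α → HKappa κ) → HKappa κ) : Prop :=
  ∃ s : M ⊕ α, ∀ v, f v = Sum.elim (fun m : M => (m : HKappa κ)) v s

section
variable {κ : Cardinal.{1}} {M : FirstOrder.Language.graph.ElementarySubstructure (HKappa κ)}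

theorem Trm.proj {α : Type} (i : α) : Trm M (fun v : α → HKappa κ => v i) := ⟨Sum.inr i, fun _ => rfl⟩

theorem Trm.const {α : Type} {m : HKappa κ} (hm : m ∈ M) : Trm M (fun _ : α → HKappa κ => m) :=
  ⟨Sum.inl ⟨m, hm⟩, fun _ => rfl⟩

theorem Dfn.mem {α : Type} {f g : (α → HKappa κ) → HKappa κ} (hf : Trm M f) (hg : Trm M g) :
    Dfn M (fun v => (f v : ZFSet) ∈ (g v : ZFSet)) := by
  obtain ⟨s, hs⟩ := hf
  obtain ⟨t, ht⟩ := hg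
  refine ⟨FirstOrder.Language.Relations.formula₂ FirstOrder.Language.adj
    (FirstOrder.Language.Term.var s) (FirstOrder.Language.Term.var t), fun v => ?_⟩
  rw [FirstOrder.Language.Formula.realize_rel₂]
  beta_reduce
  rw [hs, ht]
  simp only [FirstOrder.Language.Term.realize_var]
  rfl

theorem Dfn.not {α : Type} {P : (α → HKappa κ) → Prop} (h : Dfn M P) : Dfn M (fun v => ¬ P v) := by
  obtain ⟨φ, hφ⟩ := h
  exact ⟨φ.not, fun v => by rw [FirstOrder.Language.Formula.realize_not, hφ]⟩

theorem Dfn.and {α : Type} {P Q : (α → HKappa κ) → Prop} (h : Dfn M P) (h' : Dfn M Q) :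
    Dfn M (fun v => P v ∧ Q v) := by
  obtain ⟨φ, hφ⟩ := h
  obtain ⟨ψ, hψ⟩ := h'
  exact ⟨φ ⊓ ψ, fun v => by rw [FirstOrder.Language.Formula.realize_inf, hφ, hψ]⟩

theorem Dfn.congr {α : Type} {P Q : (α → HKappa κ) → Prop} (h : Dfn M P) (h' : ∀ v, P v ↔ Q v) :
    Dfn M Q := by
  obtain ⟨φ, hφ⟩ := h
  exact ⟨φ, fun v => by rw [hφ, h']⟩

theorem Dfn.imp {α : Type} {P Q : (α → HKappa κ) → Prop} (h : Dfn M P) (h' : Dfn M Q) :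
    Dfn M (fun v => P v → Q v) :=
  (h.and h'.not).not.congr fun v => by tauto

theorem Dfn.ex {α : Type} {P : (α → HKappa κ) → HKappa κ → Prop}
    (h : Dfn M (fun w : Option α → HKappa κ => P (fun a => w (some a)) (w none))) :
    Dfn M (fun v => ∃ t, P v t) := by
  obtain ⟨φ, hφ⟩ := h
  let g : M ⊕ Option α → (M ⊕ α) ⊕ Unit := Sum.elim (fun m => Sum.inl (Sum.inl m))
    (fun o => o.elim (Sum.inr ()) (fun a => Sum.inl (Sum.inr a)))
  refine ⟨(φ.relabel g).iExs Unit, fun v => ?_⟩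
  rw [FirstOrder.Language.Formula.realize_iExs]
  have key : ∀ t : HKappa κ, (φ.relabel g).Realize
      (Sum.elim (Sum.elim (fun m : M => (m : HKappa κ)) v) (fun _ : Unit => t)) ↔ P v t := by
    intro t
    rw [FirstOrder.Language.Formula.realize_relabel]
    have := hφ (fun o : Option α => o.elim t v)
    simp only [Option.elim] at this
    rw [← this]
    apply iff_of_eq
    congr 1
    funext s
    rcases s with m | (_ | a) <;> rfl
  constructor
  · rintro ⟨i, hi⟩
    exact ⟨i (), (key _).1 hi⟩
  · rintro ⟨t, ht⟩
    exact ⟨fun _ => t, (key t).2 ht⟩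

theorem Dfn.all {α : Type} {P : (α → HKappa κ) → HKappa κ → Prop}
    (h : Dfn M (fun w : Option α → HKappa κ => P (fun a => w (some a)) (w none))) :
    Dfn M (fun v => ∀ t, P v t) :=
  (Dfn.ex (P := fun v t => ¬ P v t) h.not).not.congr fun v => by simp

/-- Tarski–Vaught. -/
theorem Dfn.tv {P : HKappa κ → Prop} (h : Dfn M (fun v : Unit → HKappa κ => P (v ())))
    (hex : ∃ t, P t) : ∃ t ∈ M, P t := by
  obtain ⟨φ, hφ⟩ := h
  have h1 : ((φ.relabel (id : M ⊕ Unit → M ⊕ Unit)).iExs Unit).Realize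
      (M.subtype ∘ (fun m : M => m)) := by
    rw [FirstOrder.Language.Formula.realize_iExs]
    obtain ⟨t, ht⟩ := hex
    exact ⟨fun _ => t, by
      rw [FirstOrder.Language.Formula.realize_relabel]
      exact (hφ (fun _ => t)).2 ht⟩
  rw [FirstOrder.Language.ElementaryEmbedding.map_formula, FirstOrder.Language.Formula.realize_iExs] at h1
  obtain ⟨i, hi⟩ := h1
  rw [FirstOrder.Language.Formula.realize_relabel, ← M.subtype.map_formula] at hi
  refine ⟨i (), (i ()).2, (hφ (fun _ => (i () : HKappa κ))).1 ?_⟩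
  convert hi using 1
  funext s
  rcases s with m | u <;> rfl

end

/-! ### Part 4: transfer between the closed sets and the lattice `L` -/

theorem heredLt_iff (κ : Cardinal.{1}) (x : ZFSet.{0}) :
    HeredLt κ x ↔ Cardinal.mk x.toSet < κ ∧ ∀ y ∈ x, HeredLt κ y := by
  unfold HeredLt
  rw [WellFounded.fix_eq]

theorem heredLt_of_mem {κ : Cardinal.{1}} {x y : ZFSet.{0}} (h : HeredLt κ x) (hy : y ∈ x) :
    HeredLt κ y := ((heredLt_iff κ x).1 h).2 y hy

/-- Decoding of elements of `H(κ)`. -/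
def dec (X : ZFSet.{0}) {κ : Cardinal.{1}} (t : HKappa κ) : Set ↥X.toSet := decodeSet X t

theorem decode_code (X : ZFSet.{0}) (A : Set ↥X.toSet) : decodeSet X (codeSet X A) = A := by
  ext p
  simp only [decodeSet, codeSet, mem_setOf_eq, ZFSet.mem_sep]
  constructor
  · rintro ⟨-, h, hp⟩; exact hp
  · intro hp; exact ⟨p.2, p.2, hp⟩

theorem code_subset (X : ZFSet.{0}) (A : Set ↥X.toSet) : codeSet X A ⊆ X := by
  intro y hy
  exact (ZFSet.mem_sep.1 hy).1

theorem code_decode (X t : ZFSet.{0}) (ht : t ⊆ X) : codeSet X (decodeSet X t) = t := by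
  ext y
  simp only [decodeSet, codeSet, mem_setOf_eq, ZFSet.mem_sep]
  constructor
  · rintro ⟨-, h, hp⟩; exact hp
  · intro hp; exact ⟨ht hp, ht hp, hp⟩

theorem mem_opensZ (X : ZFSet.{0}) [TopologicalSpace ↥X.toSet] (t : ZFSet.{0}) :
    t ∈ opensZ X ↔ t ⊆ X ∧ IsOpen (decodeSet X t) := by
  rw [opensZ, ZFSet.mem_sep, ZFSet.mem_powerset]

section
variable {X : ZFSet.{0}} [TopologicalSpace ↥X.toSet] {κ : Cardinal.{1}}
  {M : FirstOrder.Language.graph.ElementarySubstructure (HKappa κ)}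

theorem heredLt_subset (hbig : HeredLt κ X.powerset.powerset) {t : ZFSet.{0}} (ht : t ⊆ X) :
    HeredLt κ t := by
  have h1 : X.powerset ∈ X.powerset.powerset := ZFSet.mem_powerset.2 (fun _ h => h)
  exact heredLt_of_mem (heredLt_of_mem hbig h1) (ZFSet.mem_powerset.2 ht)

/-- The element of `H(κ)` coding a subset of `X`. -/
noncomputable def codeH (hbig : HeredLt κ X.powerset.powerset) (A : Set ↥X.toSet) : HKappa κ :=
  ⟨codeSet X A, heredLt_subset hbig (code_subset X A)⟩

theorem dec_codeH (hbig : HeredLt κ X.powerset.powerset) (A : Set ↥X.toSet) :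
    dec X (codeH hbig A) = A := decode_code X A

/-- First-order form of being the code of a closed set. -/
def KCode (x T t : HKappa κ) : Prop :=
  (∀ y : HKappa κ, (y : ZFSet) ∈ (t : ZFSet) → (y : ZFSet) ∈ (x : ZFSet)) ∧
  ∃ w : HKappa κ, (w : ZFSet) ∈ (T : ZFSet) ∧ ∀ y : HKappa κ, (y : ZFSet) ∈ (x : ZFSet) →
    ((y : ZFSet) ∈ (t : ZFSet) → ¬ (y : ZFSet) ∈ (w : ZFSet)) ∧
    (¬ (y : ZFSet) ∈ (w : ZFSet) → (y : ZFSet) ∈ (t : ZFSet))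

theorem kcode_iff (hbig : HeredLt κ X.powerset.powerset) (x T t : HKappa κ) (hx : (x : ZFSet) = X)
    (hT : (T : ZFSet) = opensZ X) :
    KCode x T t ↔ (t : ZFSet) ⊆ X ∧ IsClosed (dec X t) := by
  have hX : HeredLt κ X := heredLt_subset hbig (fun _ h => h)
  have key : ∀ w : HKappa κ, (∀ y : HKappa κ, (y : ZFSet) ∈ (x : ZFSet) →
    ((y : ZFSet) ∈ (t : ZFSet) → ¬ (y : ZFSet) ∈ (w : ZFSet)) ∧
    (¬ (y : ZFSet) ∈ (w : ZFSet) → (y : ZFSet) ∈ (t : ZFSet))) ↔ dec X w = (dec X t)ᶜ := by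
    intro w
    rw [hx]
    constructor
    · intro h
      ext p
      have := h ⟨p.1, heredLt_of_mem hX p.2⟩ p.2
      change p.1 ∈ (w : ZFSet) ↔ ¬ p.1 ∈ (t : ZFSet)
      simp only at this
      tauto
    · intro h y hy
      have := Set.ext_iff.1 h ⟨y, hy⟩
      change (y : ZFSet) ∈ (w : ZFSet) ↔ ¬ (y : ZFSet) ∈ (t : ZFSet) at this
      tauto
  unfold KCode
  simp only [key]
  rw [hx, hT]
  constructor
  · rintro ⟨h1, w, hw, hwt⟩
    refine ⟨fun y hy => h1 ⟨y, heredLt_of_mem t.2 hy⟩ hy, ⟨?_⟩⟩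
    rw [← hwt]
    exact ((mem_opensZ X _).1 hw).2
  · rintro ⟨h1, h2⟩
    refine ⟨fun y hy => h1 hy, codeH hbig (dec X t)ᶜ, ?_, dec_codeH hbig _⟩
    refine (mem_opensZ X _).2 ⟨code_subset X _, ?_⟩
    have := dec_codeH hbig (dec X t)ᶜ
    change IsOpen (dec X (codeH hbig (dec X t)ᶜ))
    rw [this]
    exact h2.isOpen_compl

theorem dfn_kcode {α : Type} {x T : HKappa κ} (hx : x ∈ M) (hT : T ∈ M) (i : α) :
    Dfn M (fun v : α → HKappa κ => KCode x T (v i)) := by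
  unfold KCode
  refine Dfn.and (Dfn.all (Dfn.imp (Dfn.mem (Trm.proj _) (Trm.proj _))
    (Dfn.mem (Trm.proj _) (Trm.const hx)))) (Dfn.ex (Dfn.and (Dfn.mem (Trm.proj _) (Trm.const hT))
    (Dfn.all (Dfn.imp (Dfn.mem (Trm.proj _) (Trm.const hx)) (Dfn.and 
      (Dfn.imp (Dfn.mem (Trm.proj _) (Trm.proj _)) (Dfn.not (Dfn.mem (Trm.proj _) (Trm.proj _))))
      (Dfn.imp (Dfn.not (Dfn.mem (Trm.proj _) (Trm.proj _))) (Dfn.mem (Trm.proj _) (Trm.proj _))))))))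

/-- Definable predicates on tuples of subsets of `X`. -/
def DfnC (X : ZFSet.{0}) (M : FirstOrder.Language.graph.ElementarySubstructure (HKappa κ))
    {α : Type} (Q : (α → Set ↥X.toSet) → Prop) : Prop :=
  Dfn M (fun v : α → HKappa κ => Q (fun a => dec X (v a)))

/-- Definable predicates on tuples of subsets of `X` and one point. -/
def DfnX (X : ZFSet.{0}) (M : FirstOrder.Language.graph.ElementarySubstructure (HKappa κ))
    {α : Type} (R : (α → Set ↥X.toSet) → ↥X.toSet → Prop) : Prop :=
  Dfn M (fun w : Option α → HKappa κ => ∃ h : (w none : ZFSet) ∈ X.toSet,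
    R (fun a => dec X (w (some a))) ⟨w none, h⟩)

/-- Set terms: projections and constants from `L`. -/
def TrmS (X : ZFSet.{0}) (M : FirstOrder.Language.graph.ElementarySubstructure (HKappa κ))
    {α : Type} (f : (α → Set ↥X.toSet) → Set ↥X.toSet) : Prop :=
  ∃ g : (Option α → HKappa κ) → HKappa κ, Trm M g ∧
    ∀ w, f (fun a => dec X (w (some a))) = dec X (g w)

theorem TrmS.proj {α : Type} (i : α) : TrmS X M (fun A : α → Set ↥X.toSet => A i) :=
  ⟨fun w => w (some i), Trm.proj _, fun _ => rfl⟩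

theorem TrmS.const {α : Type} {B : Set ↥X.toSet} (hB : B ∈ Lfam X κ M) :
    TrmS X M (fun _ : α → Set ↥X.toSet => B) := by
  obtain ⟨-, h, hM⟩ := hB
  exact ⟨fun _ => ⟨codeSet X B, h⟩, Trm.const hM, fun _ => (decode_code X B).symm⟩

theorem DfnC.not {α : Type} {Q : (α → Set ↥X.toSet) → Prop} (h : DfnC X M Q) :
    DfnC X M (fun A => ¬ Q A) := Dfn.not h

theorem DfnC.and {α : Type} {Q Q' : (α → Set ↥X.toSet) → Prop} (h : DfnC X M Q) (h' : DfnC X M Q') :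
    DfnC X M (fun A => Q A ∧ Q' A) := Dfn.and h h'

theorem DfnX.mem (hXM : MemOf κ M X) {α : Type} {f : (α → Set ↥X.toSet) → Set ↥X.toSet} (hf : TrmS X M f) :
    DfnX X M (fun A x => x ∈ f A) := by
  obtain ⟨g, hg, hfg⟩ := hf
  obtain ⟨hX, hXM⟩ := hXM
  refine ((Dfn.mem (Trm.proj none) (Trm.const hXM)).and (Dfn.mem (Trm.proj none) hg)).congr ?_
  intro w
  beta_reduce
  rw [hfg]
  exact ⟨fun h => ⟨h.1, h.2⟩, fun h => ⟨h.1, h.2⟩⟩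

theorem DfnX.not (hXM : MemOf κ M X) {α : Type} {R : (α → Set ↥X.toSet) → ↥X.toSet → Prop}
    (h : DfnX X M R) : DfnX X M (fun A x => ¬ R A x) := by
  obtain ⟨hX, hXM⟩ := hXM
  refine ((Dfn.mem (Trm.proj none) (Trm.const hXM)).and (Dfn.not h)).congr ?_
  intro w
  exact ⟨fun h => ⟨h.1, fun h' => h.2 ⟨h.1, h'⟩⟩, fun h => ⟨h.1, fun h' => h.2 h'.2⟩⟩

theorem DfnX.and {α : Type} {R S : (α → Set ↥X.toSet) → ↥X.toSet → Prop}
    (h : DfnX X M R) (h' : DfnX X M S) : DfnX X M (fun A x => R A x ∧ S A x) := by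
  refine (Dfn.and h h').congr ?_
  intro w
  exact ⟨fun h => ⟨h.1.1, h.1.2, h.2.2⟩, fun h => ⟨⟨h.1, h.2.1⟩, ⟨h.1, h.2.2⟩⟩⟩

theorem DfnX.imp (hXM : MemOf κ M X) {α : Type} {R S : (α → Set ↥X.toSet) → ↥X.toSet → Prop}
    (h : DfnX X M R) (h' : DfnX X M S) : DfnX X M (fun A x => R A x → S A x) := by
  have := DfnX.not hXM (DfnX.and h (DfnX.not hXM h'))
  convert this using 3
  tauto

theorem DfnC.all (hbig : HeredLt κ X.powerset.powerset) (hXM : MemOf κ M X) {α : Type}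
    {R : (α → Set ↥X.toSet) → ↥X.toSet → Prop}
    (h : DfnX X M R) : DfnC X M (fun A => ∀ x, R A x) := by
  have hX : HeredLt κ X := heredLt_subset hbig (fun _ h => h)
  obtain ⟨hX', hXM⟩ := hXM
  refine (Dfn.all (P := fun v t => (t : ZFSet) ∈ ((⟨X, hX'⟩ : HKappa κ) : ZFSet) →
    ∃ h : (t : ZFSet) ∈ X.toSet, R (fun a => dec X (v a)) ⟨t, h⟩) 
    (Dfn.imp (Dfn.mem (Trm.proj none) (Trm.const hXM)) h)).congr ?_
  intro v
  constructor
  · intro h p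
    exact (h ⟨p.1, heredLt_of_mem hX p.2⟩ p.2).2
  · intro h t ht
    exact ⟨ht, h ⟨t, ht⟩⟩

theorem DfnC.ex (hbig : HeredLt κ X.powerset.powerset) (hXM : MemOf κ M X)
    (htopM : MemOf κ M (opensZ X)) {α : Type} {Q : (α → Set ↥X.toSet) → Set ↥X.toSet → Prop}
    (h : DfnC X M (fun B : Option α → Set ↥X.toSet => Q (fun a => B (some a)) (B none))) :
    DfnC X M (fun A => ∃ B, IsClosed B ∧ Q A B) := by
  obtain ⟨hX', hXM⟩ := hXM
  obtain ⟨hT', hTM⟩ := htopM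
  refine (Dfn.ex (P := fun v t => KCode ⟨X, hX'⟩ ⟨opensZ X, hT'⟩ t ∧ Q (fun a => dec X (v a)) (dec X t))
    (Dfn.and (dfn_kcode hXM hTM none) h)).congr ?_
  intro v
  constructor
  · rintro ⟨t, ht, hQ⟩
    exact ⟨dec X t, ((kcode_iff hbig _ _ t rfl rfl).1 ht).2, hQ⟩
  · rintro ⟨B, hB, hQ⟩
    refine ⟨codeH hbig B, (kcode_iff hbig _ _ _ rfl rfl).2 ⟨code_subset X B, ?_⟩, ?_⟩
    · rwa [dec_codeH]
    · rwa [dec_codeH]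

theorem DfnC.tv (hbig : HeredLt κ X.powerset.powerset) (hXM : MemOf κ M X)
    (htopM : MemOf κ M (opensZ X)) {Q : Set ↥X.toSet → Prop}
    (h : DfnC X M (fun A : Unit → Set ↥X.toSet => Q (A ())))
    (hex : ∃ B, IsClosed B ∧ Q B) : ∃ B ∈ Lfam X κ M, Q B := by
  obtain ⟨hX', hXM⟩ := hXM
  obtain ⟨hT', hTM⟩ := htopM
  obtain ⟨t, htM, ht, hQ⟩ := Dfn.tv (P := fun t => KCode ⟨X, hX'⟩ ⟨opensZ X, hT'⟩ t ∧ Q (dec X t))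
    (Dfn.and (dfn_kcode hXM hTM ()) h) (by
      obtain ⟨B, hB, hQ⟩ := hex
      refine ⟨codeH hbig B, (kcode_iff hbig _ _ _ rfl rfl).2 ⟨code_subset X B, ?_⟩, ?_⟩
      · rwa [dec_codeH]
      · rwa [dec_codeH])
  obtain ⟨h1, h2⟩ := (kcode_iff hbig _ _ t rfl rfl).1 ht
  refine ⟨dec X t, ⟨h2, ?_⟩, hQ⟩
  have : codeSet X (dec X t) = t := code_decode X t h1
  rw [MemOf, this]
  exact ⟨t.2, htM⟩

/-- The conclusion part of `KMProp`, pointwise. -/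
def KMc (C D F G P R Q : Set ↥X.toSet) : Prop :=
  (∀ x, x ∈ C → x ∈ P) ∧ (∀ x, x ∈ D → x ∈ Q) ∧ (∀ x, x ∈ P → ¬ x ∈ Q) ∧
  (∀ x, x ∈ P → x ∈ R → ¬ x ∈ G) ∧ (∀ x, x ∈ R → x ∈ Q → ¬ x ∈ F) ∧
  (∀ x, ¬ x ∈ P → ¬ x ∈ R → x ∈ Q)

theorem kmc_iff (C D F G P R Q : Set ↥X.toSet) : KMc C D F G P R Q ↔
    (C ⊆ P ∧ D ⊆ Q ∧ P ∩ Q = ∅ ∧ P ∩ R ∩ G = ∅ ∧ R ∩ Q ∩ F = ∅ ∧ P ∪ R ∪ Q = univ) := by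
  simp only [KMc, Set.ext_iff, mem_inter_iff, mem_union, mem_empty_iff_false, mem_univ, iff_false,
    iff_true, not_and, and_imp, Set.subset_def]
  refine and_congr_right fun _ => and_congr_right fun _ => and_congr_right fun _ =>
    and_congr_right fun _ => and_congr_right fun _ => forall_congr' fun x => by tauto

theorem dfn_kmc (hbig : HeredLt κ X.powerset.powerset) (hXM : MemOf κ M X) {α : Type}
    {C D F G P R Q : (α → Set ↥X.toSet) → Set ↥X.toSet}
    (hC : TrmS X M C) (hD : TrmS X M D) (hF : TrmS X M F) (hG : TrmS X M G)
    (hP : TrmS X M P) (hR : TrmS X M R) (hQ : TrmS X M Q) :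
    DfnC X M (fun A => KMc (C A) (D A) (F A) (G A) (P A) (R A) (Q A)) := by
  have m := fun f hf => DfnX.mem (α := α) (f := f) hXM hf
  have a := fun R hR => DfnC.all (α := α) (R := R) hbig hXM hR
  have i := fun R S hR hS => DfnX.imp (α := α) (R := R) (S := S) hXM hR hS
  have n := fun R hR => DfnX.not (α := α) (R := R) hXM hR
  refine (a _ (i _ _ (m _ hC) (m _ hP))).and ((a _ (i _ _ (m _ hD) (m _ hQ))).and
    ((a _ (i _ _ (m _ hP) (n _ (m _ hQ)))).and
    ((a _ (i _ _ (m _ hP) (i _ _ (m _ hR) (n _ (m _ hG))))).and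
    ((a _ (i _ _ (m _ hR) (i _ _ (m _ hQ) (n _ (m _ hF))))).and
    (a _ (i _ _ (n _ (m _ hP)) (i _ _ (n _ (m _ hR)) (m _ hQ))))))))

/-- Pointwise disjointness. -/
def Dj (C D : Set ↥X.toSet) : Prop := ∀ x, x ∈ C → ¬ x ∈ D

theorem dj_iff (C D : Set ↥X.toSet) : Dj C D ↔ C ∩ D = ∅ := by
  simp only [Dj, Set.ext_iff, mem_inter_iff, mem_empty_iff_false, iff_false, not_and]

theorem dfn_dj (hbig : HeredLt κ X.powerset.powerset) (hXM : MemOf κ M X) {α : Type}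
    {C D : (α → Set ↥X.toSet) → Set ↥X.toSet} (hC : TrmS X M C) (hD : TrmS X M D) :
    DfnC X M (fun A => Dj (C A) (D A)) :=
  DfnC.all hbig hXM (DfnX.imp hXM (DfnX.mem hXM hC) (DfnX.not hXM (DfnX.mem hXM hD)))

theorem km_transfer (hbig : HeredLt κ X.powerset.powerset) (hXM : MemOf κ M X)
    (htopM : MemOf κ M (opensZ X)) :
    KMProp {A : Set ↥X.toSet | IsClosed A} ↔ KMProp (Lfam X κ M) := by
  have ex := fun α Q h => DfnC.ex (α := α) (Q := Q) hbig hXM htopM h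
  have tv := fun Q h => DfnC.tv (Q := Q) hbig hXM htopM h
  constructor
  · intro h C hC D hD F hF G hG h1 h2 h3
    obtain ⟨P, hP, R, hR, Q, hQ, hh⟩ := h C hC.1 D hD.1 F hF.1 G hG.1 h1 h2 h3
    have cC := fun α => TrmS.const (α := α) hC
    have cD := fun α => TrmS.const (α := α) hD
    have cF := fun α => TrmS.const (α := α) hF
    have cG := fun α => TrmS.const (α := α) hG
    obtain ⟨P', hP', R, hR, Q, hQ, hh⟩ := tv
      (fun P => ∃ R, IsClosed R ∧ ∃ Q, IsClosed Q ∧ KMc C D F G P R Q)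
      (ex _ _ (ex _ _ (dfn_kmc hbig hXM (cC _) (cD _) (cF _) (cG _) (TrmS.proj _) (TrmS.proj _)
        (TrmS.proj _)))) ⟨P, hP, R, hR, Q, hQ, (kmc_iff _ _ _ _ _ _ _).2 hh⟩
    obtain ⟨R', hR', Q, hQ, hh⟩ := tv
      (fun R => ∃ Q, IsClosed Q ∧ KMc C D F G P' R Q)
      (ex _ _ (dfn_kmc hbig hXM (cC _) (cD _) (cF _) (cG _) (TrmS.const hP') (TrmS.proj _)
        (TrmS.proj _))) ⟨R, hR, Q, hQ, hh⟩
    obtain ⟨Q', hQ', hh⟩ := tv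
      (fun Q => KMc C D F G P' R' Q)
      (dfn_kmc hbig hXM (cC _) (cD _) (cF _) (cG _) (TrmS.const hP') (TrmS.const hR')
        (TrmS.proj _)) ⟨Q, hQ, hh⟩
    exact ⟨P', hP', R', hR', Q', hQ', (kmc_iff _ _ _ _ _ _ _).1 hh⟩
  · intro h C hC D hD F hF G hG h1 h2 h3
    by_contra hcon
    have hcon' : ¬ ∃ P, IsClosed P ∧ ∃ R, IsClosed R ∧ ∃ Q, IsClosed Q ∧ KMc C D F G P R Q := by
      rintro ⟨P, hP, R, hR, Q, hQ, hh⟩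
      exact hcon ⟨P, hP, R, hR, Q, hQ, (kmc_iff _ _ _ _ _ _ _).1 hh⟩
    rw [← dj_iff] at h1 h2 h3
    have main : ∀ {α : Type} {C D F G : (α → Set ↥X.toSet) → Set ↥X.toSet}
        (hC : TrmS X M C) (hD : TrmS X M D) (hF : TrmS X M F) (hG : TrmS X M G)
        (hC' : TrmS X M (fun A : Option (Option (Option α)) → Set ↥X.toSet => C (fun a => A (some (some (some a))))))
        (hD' : TrmS X M (fun A : Option (Option (Option α)) → Set ↥X.toSet => D (fun a => A (some (some (some a))))))
        (hF' : TrmS X M (fun A : Option (Option (Option α)) → Set ↥X.toSet => F (fun a => A (some (some (some a))))))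
        (hG' : TrmS X M (fun A : Option (Option (Option α)) → Set ↥X.toSet => G (fun a => A (some (some (some a)))))),
        DfnC X M (fun A => Dj (C A) (D A) ∧ Dj (C A) (F A) ∧ Dj (D A) (G A) ∧
          ¬ ∃ P, IsClosed P ∧ ∃ R, IsClosed R ∧ ∃ Q, IsClosed Q ∧ KMc (C A) (D A) (F A) (G A) P R Q) := by
      intro α C D F G hC hD hF hG hC' hD' hF' hG'
      exact (dfn_dj hbig hXM hC hD).and ((dfn_dj hbig hXM hC hF).and ((dfn_dj hbig hXM hD hG).and
        (DfnC.not (ex _ _ (ex _ _ (ex _ _ (dfn_kmc hbig hXM hC' hD' hF' hG' (TrmS.proj _) (TrmS.proj _)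
          (TrmS.proj _))))))))
    have pr := fun (α : Type) (i : α) => TrmS.proj (X := X) (M := M) i
    obtain ⟨C', hC', D, hD, F, hF, G, hG, hh⟩ := tv (fun C => ∃ D, IsClosed D ∧ ∃ F, IsClosed F ∧
      ∃ G, IsClosed G ∧ (Dj C D ∧ Dj C F ∧ Dj D G ∧
          ¬ ∃ P, IsClosed P ∧ ∃ R, IsClosed R ∧ ∃ Q, IsClosed Q ∧ KMc C D F G P R Q))
      (ex _ _ (ex _ _ (ex _ _ (main (pr _ _) (pr _ _) (pr _ _) (pr _ _) (pr _ _) (pr _ _) (pr _ _) (pr _ _)))))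
      ⟨C, hC, D, hD, F, hF, G, hG, h1, h2, h3, hcon'⟩
    clear hcon hcon' h1 h2 h3
    have cC := fun α => TrmS.const (α := α) hC'
    obtain ⟨D', hD', F, hF, G, hG, hh⟩ := tv (fun D => ∃ F, IsClosed F ∧
      ∃ G, IsClosed G ∧ (Dj C' D ∧ Dj C' F ∧ Dj D G ∧
          ¬ ∃ P, IsClosed P ∧ ∃ R, IsClosed R ∧ ∃ Q, IsClosed Q ∧ KMc C' D F G P R Q))
      (ex _ _ (ex _ _ (main (cC _) (pr _ _) (pr _ _) (pr _ _) (cC _) (pr _ _) (pr _ _) (pr _ _))))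
      ⟨D, hD, F, hF, G, hG, hh⟩
    have cD := fun α => TrmS.const (α := α) hD'
    obtain ⟨F', hF', G, hG, hh⟩ := tv (fun F => 
      ∃ G, IsClosed G ∧ (Dj C' D' ∧ Dj C' F ∧ Dj D' G ∧
          ¬ ∃ P, IsClosed P ∧ ∃ R, IsClosed R ∧ ∃ Q, IsClosed Q ∧ KMc C' D' F G P R Q))
      (ex _ _ (main (cC _) (cD _) (pr _ _) (pr _ _) (cC _) (cD _) (pr _ _) (pr _ _)))
      ⟨F, hF, G, hG, hh⟩
    have cF := fun α => TrmS.const (α := α) hF'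
    obtain ⟨G', hG', h1, h2, h3, hh⟩ := tv (fun G => 
      (Dj C' D' ∧ Dj C' F' ∧ Dj D' G ∧
          ¬ ∃ P, IsClosed P ∧ ∃ R, IsClosed R ∧ ∃ Q, IsClosed Q ∧ KMc C' D' F' G P R Q))
      (main (cC _) (cD _) (cF _) (pr _ _) (cC _) (cD _) (cF _) (pr _ _))
      ⟨G, hG, hh⟩
    rw [dj_iff] at h1 h2 h3
    obtain ⟨P, hP, R, hR, Q, hQ, hh'⟩ := h C' hC' D' hD' F' hF' G' hG' h1 h2 h3
    exact hh ⟨P, hP.1, R, hR.1, Q, hQ.1, (kmc_iff _ _ _ _ _ _ _).2 hh'⟩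

theorem lfam_nice [CompactSpace ↥X.toSet] [T2Space ↥X.toSet]
    (hbig : HeredLt κ X.powerset.powerset) (hXM : MemOf κ M X)
    (htopM : MemOf κ M (opensZ X)) : NiceLattice (Lfam X κ M) := by
  have ex := fun α Q h => DfnC.ex (α := α) (Q := Q) hbig hXM htopM h
  have tv := fun Q h => DfnC.tv (Q := Q) hbig hXM htopM h
  have m := fun α f hf => DfnX.mem (α := α) (f := f) hXM hf
  have al := fun α R hR => DfnC.all (α := α) (R := R) hbig hXM hR
  have im := fun α R S hR hS => DfnX.imp (α := α) (R := R) (S := S) hXM hR hS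
  have n := fun α R hR => DfnX.not (α := α) (R := R) hXM hR
  have pr := fun (α : Type) (i : α) => TrmS.proj (X := X) (M := M) i
  have cst := fun (α : Type) (B) (hB : B ∈ Lfam X κ M) => TrmS.const (α := α) hB
  refine ⟨?_, ?_, ?_, ?_, ?_, ?_⟩
  · obtain ⟨B, hB, h⟩ := tv (fun B => ∀ x, x ∈ B) (al _ _ (m _ _ (pr _ _)))
      ⟨univ, isClosed_univ, mem_univ⟩
    rwa [← eq_univ_of_forall h]
  · obtain ⟨B, hB, h⟩ := tv (fun B => ∀ x, ¬ x ∈ B) (al _ _ (n _ _ (m _ _ (pr _ _))))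
      ⟨∅, isClosed_empty, fun _ => id⟩
    rwa [← eq_empty_of_forall_notMem h]
  · intro a ha b hb
    obtain ⟨B, hB, h1, h2⟩ := tv (fun B => (∀ x, x ∈ B → x ∈ a ∧ x ∈ b) ∧ (∀ x, x ∈ a → x ∈ b → x ∈ B))
      ((al _ _ (im _ _ _ (m _ _ (pr _ _)) ((m _ _ (cst _ _ ha)).and (m _ _ (cst _ _ hb))))).and
        (al _ _ (im _ _ _ (m _ _ (cst _ _ ha)) (im _ _ _ (m _ _ (cst _ _ hb)) (m _ _ (pr _ _))))))
      ⟨a ∩ b, ha.1.inter hb.1, fun x hx => hx, fun x h h' => ⟨h, h'⟩⟩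
    have : a ∩ b = B := Subset.antisymm (fun x hx => h2 x hx.1 hx.2) h1
    rwa [this]
  · intro a ha b hb
    obtain ⟨B, hB, h1, h2, h3⟩ := tv (fun B => (∀ x, x ∈ a → x ∈ B) ∧ (∀ x, x ∈ b → x ∈ B) ∧
        (∀ x, ¬ x ∈ a → ¬ x ∈ b → ¬ x ∈ B))
      ((al _ _ (im _ _ _ (m _ _ (cst _ _ ha)) (m _ _ (pr _ _)))).and
        ((al _ _ (im _ _ _ (m _ _ (cst _ _ hb)) (m _ _ (pr _ _)))).and
        (al _ _ (im _ _ _ (n _ _ (m _ _ (cst _ _ ha))) (im _ _ _ (n _ _ (m _ _ (cst _ _ hb)))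
          (n _ _ (m _ _ (pr _ _))))))))
      ⟨a ∪ b, ha.1.union hb.1, fun x hx => Or.inl hx, fun x hx => Or.inr hx,
        fun x h h' h'' => h''.elim h h'⟩
    have : a ∪ b = B := by
      ext x
      have := h1 x
      have := h2 x
      have := h3 x
      simp only [mem_union]
      tauto
    rwa [this]
  · intro a ha b hb hab
    obtain ⟨p, hpa, hpb⟩ := not_subset.1 hab
    obtain ⟨B, hB, h1, h2, h3⟩ := tv (fun B => (¬ ∀ x, ¬ x ∈ B) ∧ (∀ x, x ∈ B → x ∈ a) ∧
        (∀ x, x ∈ B → ¬ x ∈ b))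
      ((DfnC.not (al _ _ (n _ _ (m _ _ (pr _ _))))).and
        ((al _ _ (im _ _ _ (m _ _ (pr _ _)) (m _ _ (cst _ _ ha)))).and
        (al _ _ (im _ _ _ (m _ _ (pr _ _)) (n _ _ (m _ _ (cst _ _ hb)))))))
      ⟨{p}, isClosed_singleton, fun h => h p rfl, by rintro x rfl; exact hpa,
        by rintro x rfl; exact hpb⟩
    refine ⟨B, hB, ?_, h2, (dj_iff _ _).1 h3⟩
    by_contra hne
    exact h1 fun x hx => hne ⟨x, hx⟩
  · intro a ha b hb hab
    obtain ⟨U, V, hU, hV, haU, hbV, hUV⟩ := SeparatedNhds.of_isCompact_isCompact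
      ha.1.isCompact hb.1.isCompact (Set.disjoint_iff_inter_eq_empty.2 hab)
    rw [Set.disjoint_left] at hUV
    obtain ⟨c, hc, d, hd, h1, h2, h3⟩ := tv (fun c => ∃ d, IsClosed d ∧
        ((∀ x, ¬ x ∈ c → x ∈ d) ∧ (∀ x, x ∈ c → ¬ x ∈ a) ∧ (∀ x, x ∈ d → ¬ x ∈ b)))
      (ex _ _ ((al _ _ (im _ _ _ (n _ _ (m _ _ (pr _ _))) (m _ _ (pr _ _)))).and
        ((al _ _ (im _ _ _ (m _ _ (pr _ _)) (n _ _ (m _ _ (cst _ _ ha))))).and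
        (al _ _ (im _ _ _ (m _ _ (pr _ _)) (n _ _ (m _ _ (cst _ _ hb))))))))
      ⟨Uᶜ, hU.isClosed_compl, Vᶜ, hV.isClosed_compl,
        fun x hx => hUV (not_not.1 hx), fun x hx hxa => hx (haU hxa), fun x hx hxb => hx (hbV hxb)⟩
    obtain ⟨d', hd', h1, h3⟩ := tv (fun d => 
        ((∀ x, ¬ x ∈ c → x ∈ d) ∧ (∀ x, x ∈ d → ¬ x ∈ b)))
      ((al _ _ (im _ _ _ (n _ _ (m _ _ (cst _ _ hc))) (m _ _ (pr _ _)))).and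
        (al _ _ (im _ _ _ (m _ _ (pr _ _)) (n _ _ (m _ _ (cst _ _ hb))))))
      ⟨d, hd, h1, h3⟩
    refine ⟨c, hc, d', hd', eq_univ_of_forall fun x => ?_, (dj_iff _ _).1 h2, (dj_iff _ _).1 h3⟩
    by_cases hx : x ∈ c
    · exact Or.inl hx
    · exact Or.inr (h1 x hx)

end

/-- For a continuum `X` and a countable elementary submodel `M ≺ H(κ)` with
`X ∈ M`, with `L = 2^X ∩ M`, the continuum `X` is hereditarily indecomposable iff the
Wallman space `wL` is hereditarily indecomposable. -/
theorem hereditarilyIndecomposable_iff_wallman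
    (X : ZFSet.{0}) [TopologicalSpace ↥X.toSet] [CompactSpace ↥X.toSet]
    [T2Space ↥X.toSet] [ConnectedSpace ↥X.toSet]
    (κ : Cardinal.{1}) (hreg : κ.IsRegular) (hbig : HeredLt κ X.powerset.powerset)
    (M : FirstOrder.Language.graph.ElementarySubstructure (HKappa κ))
    (hMcount : Countable M) (hXM : MemOf κ M X) (htopM : MemOf κ M (opensZ X)) :
    HereditarilyIndecomposable ↥X.toSet ↔
      HereditarilyIndecomposable (LUltra (Lfam X κ M)) := by
  rw [LUltra.hi_iff (lfam_nice hbig hXM htopM), ← km_transfer hbig hXM htopM]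
  exact ⟨km_of_hi, hi_of_km⟩
end

section
/- If X is a compact Hausdorff space, M ≺ H(κ) a countable elementary submodel with X ∈ M, and L = 2^X ∩ M, then the covering dimension of the Wallman space wL equals the covering dimension of X. -/
open Set TopologicalSpace FirstOrder

universe u v

/-- `U` is a cover of `X` by open sets. -/
def IsOpenCover {X : Type u} [TopologicalSpace X] (U : Set (Set X)) : Prop :=
  (∀ s ∈ U, IsOpen s) ∧ ⋃₀ U = Set.univ

/-- `V` refines `U`: every member of `V` is contained in some member of `U`. -/
def Refines {X : Type u} (V U : Set (Set X)) : Prop :=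
  ∀ v ∈ V, ∃ u ∈ U, v ⊆ u

/-- `X` is a C-space (has property C): every sequence of open covers admits a sequence of
families of pairwise disjoint open sets, the `i`-th refining the `i`-th cover, whose union
covers `X`. -/
def IsCSpace (X : Type u) [TopologicalSpace X] : Prop :=
  ∀ U : ℕ → Set (Set X), (∀ i, IsOpenCover (U i)) →
    ∃ V : ℕ → Set (Set X),
      (∀ i, (∀ s ∈ V i, IsOpen s) ∧ (V i).PairwiseDisjoint id ∧ Refines (V i) (U i)) ∧
      (⋃ i, ⋃₀ (V i)) = Set.univ

/-- `X` is an `m`-C-space: property C restricted to `m`-element open covers. -/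
def IsMCSpace (m : ℕ) (X : Type u) [TopologicalSpace X] : Prop :=
  ∀ U : ℕ → Fin m → Set X, (∀ i j, IsOpen (U i j)) → (∀ i, (⋃ j, U i j) = Set.univ) →
    ∃ V : ℕ → Set (Set X),
      (∀ i, (∀ s ∈ V i, IsOpen s) ∧ (V i).PairwiseDisjoint id ∧ ∀ v ∈ V i, ∃ j, v ⊆ U i j) ∧
      (⋃ i, ⋃₀ (V i)) = Set.univ

/-- Covering dimension at most `n`: every finite open cover has a finite open refinement
of order at most `n + 1`. -/
def CovDimLE (X : Type u) [TopologicalSpace X] (n : ℕ) : Prop :=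
  ∀ U : Set (Set X), U.Finite → IsOpenCover U →
    ∃ V : Set (Set X), V.Finite ∧ IsOpenCover V ∧ Refines V U ∧
      ∀ x : X, {v ∈ V | x ∈ v}.ncard ≤ n + 1

/-- The covering dimension, as an extended natural number (`⊤` if infinite dimensional). -/
noncomputable def covDim (X : Type u) [TopologicalSpace X] : ℕ∞ :=
  sInf ((fun n : ℕ => (n : ℕ∞)) '' {n : ℕ | CovDimLE X n})

namespace WallDim

/-! ### Definability over `H(κ)` -/

/-- The predicate `R` on tuples of elements of `H(κ)` is first-order definable. -/
def Dfn {κ : Cardinal.{1}} {α : Type} (R : (α → HKappa κ) → Prop) : Prop :=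
  ∃ θ : FirstOrder.Language.graph.Formula α, ∀ v, θ.Realize v ↔ R v

section Dfn

variable {κ : Cardinal.{1}} {α : Type}

lemma Dfn.mem (i j : α) : Dfn (κ := κ) fun v : α → HKappa κ => (v i).1 ∈ (v j).1 := by
  refine ⟨FirstOrder.Language.Relations.formula₂ (L := FirstOrder.Language.graph)
    FirstOrder.Language.adj
    (FirstOrder.Language.Term.var i) (FirstOrder.Language.Term.var j), fun v => ?_⟩
  rw [FirstOrder.Language.Formula.realize_rel₂]
  rfl

lemma Dfn.not {R : (α → HKappa κ) → Prop} (h : Dfn R) : Dfn fun v => ¬ R v := by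
  obtain ⟨θ, hθ⟩ := h
  exact ⟨θ.not, fun v => by rw [FirstOrder.Language.Formula.realize_not, hθ]⟩

lemma Dfn.imp {R S : (α → HKappa κ) → Prop} (h : Dfn R) (k : Dfn S) :
    Dfn fun v => R v → S v := by
  obtain ⟨θ, hθ⟩ := h
  obtain ⟨η, hη⟩ := k
  exact ⟨θ.imp η, fun v => by rw [FirstOrder.Language.Formula.realize_imp, hθ, hη]⟩

lemma Dfn.congr {R S : (α → HKappa κ) → Prop} (h : Dfn R) (k : ∀ v, R v ↔ S v) : Dfn S := by
  obtain ⟨θ, hθ⟩ := h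
  exact ⟨θ, fun v => by rw [hθ, k]⟩

lemma Dfn.and {R S : (α → HKappa κ) → Prop} (h : Dfn R) (k : Dfn S) :
    Dfn fun v => R v ∧ S v :=
  (h.imp k.not).not.congr fun v => by tauto

lemma Dfn.or {R S : (α → HKappa κ) → Prop} (h : Dfn R) (k : Dfn S) :
    Dfn fun v => R v ∨ S v :=
  (h.not.imp k).congr fun v => by tauto

lemma Dfn.iff {R S : (α → HKappa κ) → Prop} (h : Dfn R) (k : Dfn S) :
    Dfn fun v => (R v ↔ S v) :=
  ((h.imp k).and (k.imp h)).congr fun v => by tauto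

lemma Dfn.exs {β : Type} [Finite β] {R : (α → HKappa κ) → (β → HKappa κ) → Prop}
    (h : Dfn fun w : α ⊕ β → HKappa κ => R (fun a => w (.inl a)) (fun b => w (.inr b))) :
    Dfn fun v => ∃ y, R v y := by
  obtain ⟨θ, hθ⟩ := h
  refine ⟨θ.iExs β, fun v => ?_⟩
  rw [FirstOrder.Language.Formula.realize_iExs]
  refine exists_congr fun y => ?_
  rw [hθ]
  rfl

lemma Dfn.ex {R : (α → HKappa κ) → HKappa κ → Prop}
    (h : Dfn fun w : α ⊕ Unit → HKappa κ => R (fun a => w (.inl a)) (w (.inr ()))) :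
    Dfn fun v => ∃ z, R v z :=
  (Dfn.exs (R := fun v y => R v (y ())) h).congr fun _ =>
    ⟨fun ⟨y, hy⟩ => ⟨y (), hy⟩, fun ⟨z, hz⟩ => ⟨fun _ => z, hz⟩⟩

lemma Dfn.all {R : (α → HKappa κ) → HKappa κ → Prop}
    (h : Dfn fun w : α ⊕ Unit → HKappa κ => R (fun a => w (.inl a)) (w (.inr ()))) :
    Dfn fun v => ∀ z, R v z :=
  (Dfn.ex (R := fun v z => ¬ R v z) h.not).not.congr fun v => by push Not; rfl

lemma Dfn.alls {ι : Type} [Finite ι] {R : ι → (α → HKappa κ) → Prop} (h : ∀ i, Dfn (R i)) :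
    Dfn fun v => ∀ i, R i v := by
  choose θ hθ using h
  refine ⟨FirstOrder.Language.Formula.iInf θ, fun v => ?_⟩
  rw [FirstOrder.Language.Formula.realize_iInf]
  exact forall_congr' fun i => hθ i v

lemma Dfn.exf {ι : Type} [Finite ι] {R : ι → (α → HKappa κ) → Prop} (h : ∀ i, Dfn (R i)) :
    Dfn fun v => ∃ i, R i v :=
  (Dfn.alls fun i => (h i).not).not.congr fun v => by push Not; rfl

lemma Dfn.const (p : Prop) : Dfn (κ := κ) fun _ : α → HKappa κ => p := by
  by_cases hp : p
  · exact ⟨⊤, fun v => by simp [hp]⟩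
  · exact ⟨⊥, fun v => by simp [hp]⟩

/-- Elementarity: a definable relation with parameters in `M` that has a solution in `H(κ)`
has a solution in `M`. -/
lemma Dfn.reflect {β : Type} [Finite β]
    (M : FirstOrder.Language.graph.ElementarySubstructure (HKappa κ))
    {R : (α → HKappa κ) → (β → HKappa κ) → Prop}
    (h : Dfn fun w : α ⊕ β → HKappa κ => R (fun a => w (.inl a)) (fun b => w (.inr b)))
    (p : α → HKappa κ) (hp : ∀ a, p a ∈ M) (hex : ∃ y, R p y) :
    ∃ y, (∀ b, y b ∈ M) ∧ R p y := by
  obtain ⟨θ, hθ⟩ := h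
  let q : α → M := fun a => ⟨p a, hp a⟩
  have h1 : (θ.iExs β).Realize (M.subtype ∘ q) := by
    rw [FirstOrder.Language.Formula.realize_iExs]
    obtain ⟨y, hy⟩ := hex
    exact ⟨y, (hθ _).2 hy⟩
  rw [M.subtype.map_formula, FirstOrder.Language.Formula.realize_iExs] at h1
  obtain ⟨y, hy⟩ := h1
  rw [← M.subtype.map_formula, hθ] at hy
  exact ⟨fun b => (y b).1, fun b => (y b).2, hy⟩

end Dfn

/-! ### `H(κ)` is transitive -/

lemma heredLt_iff {κ : Cardinal.{1}} {x : ZFSet.{0}} :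
    HeredLt κ x ↔ Cardinal.mk x.toSet < κ ∧ ∀ y ∈ x, HeredLt κ y := by
  unfold HeredLt
  rw [WellFounded.fix_eq]

lemma heredLt_mem {κ : Cardinal.{1}} {x y : ZFSet.{0}} (h : HeredLt κ x) (hy : y ∈ x) :
    HeredLt κ y := (heredLt_iff.1 h).2 y hy

section Codes

variable {X : ZFSet.{0}} {κ : Cardinal.{1}}

lemma mem_codeSet {A : Set ↥X.toSet} {y : ZFSet.{0}} :
    y ∈ codeSet X A ↔ ∃ h : y ∈ X.toSet, (⟨y, h⟩ : ↥X.toSet) ∈ A := by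
  unfold codeSet
  rw [ZFSet.mem_sep]
  exact ⟨fun h => h.2, fun h => ⟨h.1, h⟩⟩

lemma coe_mem_codeSet {A : Set ↥X.toSet} (x : ↥X.toSet) : (x : ZFSet) ∈ codeSet X A ↔ x ∈ A := by
  rw [mem_codeSet]
  exact ⟨fun h => h.2, fun h => ⟨x.2, h⟩⟩

lemma codeSet_subset (A : Set ↥X.toSet) : codeSet X A ⊆ X := fun y hy => by
  obtain ⟨h, -⟩ := mem_codeSet.1 hy
  exact h

lemma decode_code (A : Set ↥X.toSet) : decodeSet X (codeSet X A) = A := by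
  ext x
  exact coe_mem_codeSet x

lemma code_decode {t : ZFSet.{0}} (ht : t ⊆ X) : codeSet X (decodeSet X t) = t := by
  ext y
  rw [mem_codeSet]
  exact ⟨fun h => h.2, fun h => ⟨ht h, h⟩⟩

lemma heredLt_code (hbig : HeredLt κ X.powerset.powerset) (A : Set ↥X.toSet) :
    HeredLt κ (codeSet X A) :=
  heredLt_mem (heredLt_mem (y := X.powerset) hbig (ZFSet.mem_powerset.2 fun _ h => h))
    (ZFSet.mem_powerset.2 (codeSet_subset A))

/-- The code of `A` as an element of `H(κ)`. -/
noncomputable def cd (hbig : HeredLt κ X.powerset.powerset) (A : Set ↥X.toSet) : HKappa κ :=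
  ⟨codeSet X A, heredLt_code hbig A⟩

lemma memOf_code (hbig : HeredLt κ X.powerset.powerset) (A : Set ↥X.toSet)
    (M : FirstOrder.Language.graph.ElementarySubstructure (HKappa κ)) :
    MemOf κ M (codeSet X A) ↔ cd hbig A ∈ M :=
  ⟨fun h => h.2, fun h => ⟨_, h⟩⟩

/-- Comprehension: a subset of `X` definable with parameters in `M` has its code in `M`. -/
lemma compr (hbig : HeredLt κ X.powerset.powerset)
    (M : FirstOrder.Language.graph.ElementarySubstructure (HKappa κ)) {α : Type}
    {R : (α → HKappa κ) → HKappa κ → Prop}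
    (h : Dfn fun w : α ⊕ Unit → HKappa κ => R (fun a => w (.inl a)) (w (.inr ())))
    (p : α → HKappa κ) (hp : ∀ a, p a ∈ M) (A : Set ↥X.toSet)
    (hA : ∀ z, z.1 ∈ codeSet X A ↔ R p z) : cd hbig A ∈ M := by
  have key := Dfn.reflect (β := Unit) M (R := fun v y => ∀ z, z.1 ∈ (y ()).1 ↔ R v z)
    (by
      refine Dfn.all (Dfn.iff (Dfn.mem _ _) ?_)
      obtain ⟨θ, hθ⟩ := h
      refine ⟨θ.relabel (Sum.elim (fun a => .inl (.inl a)) (fun u => .inr u)), fun v => ?_⟩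
      rw [FirstOrder.Language.Formula.realize_relabel, hθ]
      rfl) p hp ⟨fun _ => cd hbig A, hA⟩
  obtain ⟨y, hyM, hy⟩ := key
  have : y () = cd hbig A := by
    apply Subtype.ext
    ext z
    constructor
    · intro hz
      exact (hA ⟨z, heredLt_mem (y ()).2 hz⟩).2 ((hy ⟨z, heredLt_mem (y ()).2 hz⟩).1 hz)
    · intro hz
      have hz' : HeredLt κ z := heredLt_mem (heredLt_code hbig A) hz
      exact (hy ⟨z, hz'⟩).2 ((hA ⟨z, hz'⟩).1 hz)
  exact this ▸ hyM ()

end Codes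

/-- Every `m`-element cover by members of `O` has an `m`-element shrinking by members of `O`
of order at most `n + 1`. -/
def Qo {T : Type u} (O : Set (Set T)) (m n : ℕ) : Prop :=
  ∀ U : Fin m → Set T, (∀ i, U i ∈ O) → (∀ x, ∃ i, x ∈ U i) →
    ∃ V : Fin m → Set T, (∀ i, V i ∈ O) ∧ (∀ i, V i ⊆ U i) ∧ (∀ x, ∃ i, x ∈ V i) ∧
      ∀ S : Finset (Fin m), S.card = n + 2 → ∀ x, ∃ i ∈ S, x ∉ V i

section Elem

variable {κ : Cardinal.{1}} {m : ℕ}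

/-- Being a cover, inside `H(κ)`. -/
def HCov (x : HKappa κ) (F : Fin m → HKappa κ) : Prop :=
  ∀ z : HKappa κ, z.1 ∈ x.1 → ∃ i, z.1 ∈ (F i).1

/-- Being a good shrinking, inside `H(κ)`. -/
def HGood (n : ℕ) (x o : HKappa κ) (F G : Fin m → HKappa κ) : Prop :=
  (∀ i, (G i).1 ∈ o.1) ∧ (∀ i, ∀ z : HKappa κ, z.1 ∈ (G i).1 → z.1 ∈ (F i).1) ∧ HCov x G ∧
    ∀ S : {S : Finset (Fin m) // S.card = n + 2}, ∀ z : HKappa κ, z.1 ∈ x.1 →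
      ∃ i : {i // i ∈ S.1}, ¬ z.1 ∈ (G i).1

lemma Dfn.cov {α : Type} (a : α) (f : Fin m → α) :
    Dfn (κ := κ) fun v : α → HKappa κ => HCov (v a) (fun i => v (f i)) := by
  unfold HCov
  exact Dfn.all (Dfn.imp (Dfn.mem _ _) (Dfn.exf fun i => Dfn.mem _ _))

lemma Dfn.good {α : Type} (n : ℕ) (a b : α) (f g : Fin m → α) :
    Dfn (κ := κ) fun v : α → HKappa κ =>
      HGood n (v a) (v b) (fun i => v (f i)) (fun i => v (g i)) := by
  unfold HGood
  refine Dfn.and (Dfn.alls fun i => Dfn.mem _ _) (Dfn.and ?_ (Dfn.and (Dfn.cov _ _) ?_))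
  · exact Dfn.alls fun i => Dfn.all (Dfn.imp (Dfn.mem _ _) (Dfn.mem _ _))
  · exact Dfn.alls fun S => Dfn.all (Dfn.imp (Dfn.mem _ _) (Dfn.exf fun i => (Dfn.mem _ _).not))

variable {X : ZFSet.{0}} [TopologicalSpace ↥X.toSet]

lemma mem_opensZ {U : Set ↥X.toSet} : codeSet X U ∈ opensZ X ↔ IsOpen U := by
  unfold opensZ
  rw [ZFSet.mem_sep, decode_code, ZFSet.mem_powerset]
  exact ⟨fun h => h.2, fun h => ⟨codeSet_subset U, h⟩⟩

lemma exists_code (hbig : HeredLt κ X.powerset.powerset) (y : HKappa κ) (hy : y.1 ∈ opensZ X) :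
    ∃ U : Set ↥X.toSet, IsOpen U ∧ y = cd hbig U := by
  unfold opensZ at hy
  rw [ZFSet.mem_sep, ZFSet.mem_powerset] at hy
  exact ⟨decodeSet X y.1, hy.2, Subtype.ext (code_decode hy.1).symm⟩

lemma forall_mem_iff (hX : HeredLt κ X) {P : ZFSet.{0} → Prop} :
    (∀ z : HKappa κ, z.1 ∈ X → P z.1) ↔ ∀ x : ↥X.toSet, P x :=
  ⟨fun h x => h ⟨x.1, heredLt_mem hX x.2⟩ x.2, fun h z hz => h ⟨z.1, hz⟩⟩

lemma hcov_iff (hX : HeredLt κ X) (hbig : HeredLt κ X.powerset.powerset)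
    (U : Fin m → Set ↥X.toSet) :
    HCov ⟨X, hX⟩ (fun i => cd hbig (U i)) ↔ ∀ x, ∃ i, x ∈ U i := by
  unfold HCov
  refine (forall_mem_iff hX (P := fun z => ∃ i, z ∈ codeSet X (U i))).trans ?_
  simp only [coe_mem_codeSet]

lemma hgood_iff {n : ℕ} (hX : HeredLt κ X) (hO : HeredLt κ (opensZ X))
    (hbig : HeredLt κ X.powerset.powerset)
    (U V : Fin m → Set ↥X.toSet) :
    HGood n ⟨X, hX⟩ ⟨opensZ X, hO⟩ (fun i => cd hbig (U i)) (fun i => cd hbig (V i)) ↔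
      (∀ i, IsOpen (V i)) ∧ (∀ i, V i ⊆ U i) ∧ (∀ x, ∃ i, x ∈ V i) ∧
      ∀ S : Finset (Fin m), S.card = n + 2 → ∀ x, ∃ i ∈ S, x ∉ V i := by
  unfold HGood
  refine and_congr (forall_congr' fun i => mem_opensZ) (and_congr ?_ (and_congr
    (hcov_iff hX hbig V) ?_))
  · refine forall_congr' fun i => ⟨fun h x hx => ?_, fun h z hz => ?_⟩
    · exact (coe_mem_codeSet x).1 (h ⟨x.1, heredLt_mem hX x.2⟩ ((coe_mem_codeSet x).2 hx))
    · obtain ⟨h1, h2⟩ := mem_codeSet.1 hz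
      exact mem_codeSet.2 ⟨h1, h h2⟩
  · rw [Subtype.forall]
    refine forall_congr' fun S => forall_congr' fun hS => ?_
    refine (forall_mem_iff hX (P := fun z => ∃ i : {i // i ∈ S}, ¬ z ∈ codeSet X (V i))).trans ?_
    simp only [coe_mem_codeSet, Subtype.exists, exists_prop]

variable (M : FirstOrder.Language.graph.ElementarySubstructure (HKappa κ))

lemma cd_compl (hX : HeredLt κ X) (hXM : (⟨X, hX⟩ : HKappa κ) ∈ M)
    (hbig : HeredLt κ X.powerset.powerset) (A : Set ↥X.toSet) (hA : cd hbig A ∈ M) :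
    cd hbig Aᶜ ∈ M := by
  refine compr hbig M (α := Bool) (R := fun v z => z.1 ∈ (v true).1 ∧ ¬ z.1 ∈ (v false).1)
    (Dfn.and (Dfn.mem _ _) (Dfn.mem _ _).not)
    (fun b => if b then ⟨X, hX⟩ else cd hbig A) (by rintro (_ | _) <;> simpa) _ fun z => ?_
  simp only [mem_codeSet, cd]
  simp [mem_codeSet]
  exact ⟨fun ⟨h1, h2⟩ => ⟨h1, fun _ => h2⟩, fun h => ⟨h.1, h.2 h.1⟩⟩

lemma cd_inter (hbig : HeredLt κ X.powerset.powerset) (A B : Set ↥X.toSet)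
    (hA : cd hbig A ∈ M) (hB : cd hbig B ∈ M) : cd hbig (A ∩ B) ∈ M := by
  refine compr hbig M (α := Bool) (R := fun v z => z.1 ∈ (v true).1 ∧ z.1 ∈ (v false).1)
    (Dfn.and (Dfn.mem _ _) (Dfn.mem _ _))
    (fun b => if b then cd hbig A else cd hbig B) (by rintro (_ | _) <;> simpa) _ fun z => ?_
  simp only [mem_codeSet, cd]
  simp [mem_codeSet]
  tauto

lemma cd_empty (hbig : HeredLt κ X.powerset.powerset) : cd (X := X) hbig ∅ ∈ M := by
  refine compr hbig M (α := Empty) (R := fun v z => False)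
    (Dfn.const _) (fun b => b.elim) (fun b => b.elim) _ fun z => ?_
  simp [mem_codeSet]

lemma cd_univ (hX : HeredLt κ X) (hXM : (⟨X, hX⟩ : HKappa κ) ∈ M)
    (hbig : HeredLt κ X.powerset.powerset) : cd (X := X) hbig univ ∈ M := by
  simpa using cd_compl M hX hXM hbig ∅ (cd_empty M hbig)

lemma cd_union (hX : HeredLt κ X) (hXM : (⟨X, hX⟩ : HKappa κ) ∈ M)
    (hbig : HeredLt κ X.powerset.powerset) (A B : Set ↥X.toSet)
    (hA : cd hbig A ∈ M) (hB : cd hbig B ∈ M) : cd hbig (A ∪ B) ∈ M := by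
  have := cd_compl M hX hXM hbig _ (cd_inter M hbig _ _ (cd_compl M hX hXM hbig A hA)
    (cd_compl M hX hXM hbig B hB))
  simpa [compl_inter] using this

lemma compl_mem_Lfam (hX : HeredLt κ X) (hXM : (⟨X, hX⟩ : HKappa κ) ∈ M)
    (hbig : HeredLt κ X.powerset.powerset) (U : Set ↥X.toSet) :
    Uᶜ ∈ Lfam X κ M ↔ IsOpen U ∧ cd hbig U ∈ M := by
  unfold Lfam
  rw [mem_ofPred_eq, isClosed_compl_iff, memOf_code hbig]
  refine and_congr Iff.rfl ⟨fun h => ?_, fun h => cd_compl M hX hXM hbig U h⟩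
  simpa using cd_compl M hX hXM hbig _ h

/-- The lattice `L` is disjunctive. -/
lemma disj [T1Space ↥X.toSet] (hX : HeredLt κ X) (hXM : (⟨X, hX⟩ : HKappa κ) ∈ M)
    (hO : HeredLt κ (opensZ X)) (hOM : (⟨opensZ X, hO⟩ : HKappa κ) ∈ M)
    (hbig : HeredLt κ X.powerset.powerset) (A : Set ↥X.toSet) (hA : A ∈ Lfam X κ M)
    (hne : A ≠ univ) : ∃ B ∈ Lfam X κ M, B.Nonempty ∧ A ∩ B = ∅ := by
  obtain ⟨x, hx⟩ := (ne_univ_iff_exists_notMem A).1 hne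
  obtain ⟨y, hyM, h1, h2, h3⟩ := Dfn.reflect (α := Fin 3) (β := Unit) M
    (R := fun v y => (y ()).1 ∈ (v 1).1 ∧ (∃ z : HKappa κ, z.1 ∈ (v 0).1 ∧ ¬ z.1 ∈ (y ()).1) ∧
      ∀ z : HKappa κ, z.1 ∈ (v 2).1 → z.1 ∈ (y ()).1)
    (Dfn.and (Dfn.mem _ _) (Dfn.and (Dfn.ex (Dfn.and (Dfn.mem _ _) (Dfn.mem _ _).not))
      (Dfn.all (Dfn.imp (Dfn.mem _ _) (Dfn.mem _ _)))))
    ![⟨X, hX⟩, ⟨opensZ X, hO⟩, cd hbig A]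
    (by
      intro a
      fin_cases a
      · exact hXM
      · exact hOM
      · exact (memOf_code hbig A M).1 hA.2)
    ⟨fun _ => cd hbig {x}ᶜ, mem_opensZ.2 isOpen_compl_singleton,
      ⟨⟨x.1, heredLt_mem hX x.2⟩, x.2, fun h => (coe_mem_codeSet x).1 h rfl⟩, fun z hz => by
        obtain ⟨hz1, hz2⟩ := mem_codeSet.1 hz
        refine mem_codeSet.2 ⟨hz1, fun h => hx ?_⟩
        rw [mem_singleton_iff] at h
        exact h ▸ hz2⟩
  obtain ⟨U, hU, hyU⟩ := exists_code hbig (y ()) h1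
  have hUM : cd hbig U ∈ M := hyU ▸ hyM ()
  rw [hyU] at h2 h3
  refine ⟨Uᶜ, (compl_mem_Lfam M hX hXM hbig U).2 ⟨hU, hUM⟩, ?_, ?_⟩
  · obtain ⟨z, hz1, hz2⟩ := h2
    exact ⟨⟨z.1, hz1⟩, fun h => hz2 ((coe_mem_codeSet (⟨z.1, hz1⟩ : ↥X.toSet)).2 h)⟩
  · rw [← disjoint_iff_inter_eq_empty, disjoint_compl_right_iff_subset]
    intro w hw
    exact (coe_mem_codeSet w).1 (h3 ⟨w.1, heredLt_mem hX w.2⟩ ((coe_mem_codeSet w).2 hw))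

/-- The elementarity step. -/
lemma qo_iff (hX : HeredLt κ X) (hXM : (⟨X, hX⟩ : HKappa κ) ∈ M)
    (hO : HeredLt κ (opensZ X)) (hOM : (⟨opensZ X, hO⟩ : HKappa κ) ∈ M)
    (hbig : HeredLt κ X.powerset.powerset) (m n : ℕ) :
    Qo {U : Set ↥X.toSet | Uᶜ ∈ Lfam X κ M} m n ↔ Qo {U : Set ↥X.toSet | IsOpen U} m n := by
  constructor
  · intro h
    by_contra hcon
    unfold Qo at hcon
    push Not at hcon
    obtain ⟨U, hU, hUc, hUn⟩ := hcon
    obtain ⟨y, hyM, h1, h2, h3⟩ := Dfn.reflect (α := Bool) (β := Fin m) M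
      (R := fun v y => (∀ i, (y i).1 ∈ (v false).1) ∧ HCov (v true) y ∧
        ¬ ∃ g : Fin m → HKappa κ, HGood n (v true) (v false) y g)
      (Dfn.and (Dfn.alls fun i => Dfn.mem _ _) (Dfn.and (Dfn.cov _ _)
        (Dfn.not (Dfn.exs (Dfn.good n _ _ _ _)))))
      (fun b => if b then ⟨X, hX⟩ else ⟨opensZ X, hO⟩)
      (by rintro (_ | _) <;> simpa)
      ⟨fun i => cd hbig (U i), fun i => mem_opensZ.2 (hU i), (hcov_iff hX hbig U).2 hUc, by
        rintro ⟨g, hg⟩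
        choose V hV hgV using fun i => exists_code hbig (g i) (hg.1 i)
        obtain rfl : g = fun i => cd hbig (V i) := funext hgV
        obtain ⟨a1, a2, a3, a4⟩ := (hgood_iff hX hO hbig U V).1 hg
        obtain ⟨S, hS, x, hx⟩ := hUn V a1 a2 a3
        obtain ⟨i, hi, hxi⟩ := a4 S hS x
        exact hxi (hx i hi)⟩
    choose W hW hyW using fun i => exists_code hbig (y i) (h1 i)
    obtain rfl : y = fun i => cd hbig (W i) := funext hyW
    obtain ⟨V, a1, a2⟩ := h W (fun i => (compl_mem_Lfam M hX hXM hbig _).2 ⟨hW i, hyM i⟩)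
      ((hcov_iff hX hbig W).1 h2)
    exact h3 ⟨fun i => cd hbig (V i), (hgood_iff hX hO hbig W V).2
      ⟨fun i => ((compl_mem_Lfam M hX hXM hbig _).1 (a1 i)).1, a2⟩⟩
  · intro h U hU hUc
    have hU' := fun i => (compl_mem_Lfam M hX hXM hbig (U i)).1 (hU i)
    obtain ⟨V, hV⟩ := h U (fun i => (hU' i).1) hUc
    obtain ⟨y, hyM, hy⟩ := Dfn.reflect (α := Bool ⊕ Fin m) (β := Fin m) M
      (R := fun v y => HGood n (v (.inl true)) (v (.inl false)) (fun i => v (.inr i)) y)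
      (Dfn.good n _ _ _ _)
      (Sum.elim (fun b => if b then ⟨X, hX⟩ else ⟨opensZ X, hO⟩) (fun i => cd hbig (U i)))
      (by
        rintro ((_ | _) | i)
        · simpa
        · simpa
        · exact (hU' i).2)
      ⟨fun i => cd hbig (V i), (hgood_iff hX hO hbig U V).2 hV⟩
    choose W hW hyW using fun i => exists_code hbig (y i) (hy.1 i)
    obtain rfl : y = fun i => cd hbig (W i) := funext hyW
    obtain ⟨a1, a2⟩ := (hgood_iff hX hO hbig U W).1 hy
    exact ⟨W, fun i => (compl_mem_Lfam M hX hXM hbig _).2 ⟨a1 i, hyM i⟩, a2⟩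

end Elem

/-! ### Covering dimension through indexed shrinkings -/

lemma covDimLE_iff {Y : Type u} [TopologicalSpace Y] (n : ℕ) :
    CovDimLE Y n ↔ ∀ m, Qo {U : Set Y | IsOpen U} m n := by
  classical
  constructor
  · intro h m U hU hUc
    obtain ⟨V, hVf, ⟨hVo, hVc⟩, hVr, hVn⟩ := h (range U) (finite_range U)
      ⟨by rintro _ ⟨i, rfl⟩; exact hU i, by
        refine eq_univ_of_forall fun x => ?_
        obtain ⟨i, hi⟩ := hUc x
        exact ⟨_, ⟨i, rfl⟩, hi⟩⟩
    have hr : ∀ v : V, ∃ i, v.1 ⊆ U i := fun v => by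
      obtain ⟨_, ⟨i, rfl⟩, hi⟩ := hVr v.1 v.2
      exact ⟨i, hi⟩
    choose f hf using hr
    refine ⟨fun i => ⋃ v : V, ⋃ _ : f v = i, v.1, fun i => ?_, fun i => ?_, fun x => ?_, ?_⟩
    · exact isOpen_iUnion fun v => isOpen_iUnion fun _ => hVo v.1 v.2
    · refine iUnion_subset fun v => iUnion_subset fun hv => ?_
      exact hv ▸ hf v
    · have hx : x ∈ ⋃₀ V := hVc ▸ mem_univ x
      obtain ⟨v, hv, hxv⟩ := hx
      exact ⟨f ⟨v, hv⟩, mem_iUnion.2 ⟨⟨v, hv⟩, mem_iUnion.2 ⟨rfl, hxv⟩⟩⟩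
    · intro S hS x
      by_contra hcon
      push Not at hcon
      have hc : ∀ i : S, ∃ v : V, f v = i.1 ∧ x ∈ v.1 := fun i => by
        obtain ⟨v, hv⟩ := mem_iUnion.1 (hcon i.1 i.2)
        obtain ⟨h1, h2⟩ := mem_iUnion.1 hv
        exact ⟨v, h1, h2⟩
      choose g hg1 hg2 using hc
      have hinj : Function.Injective fun i : S => (g i).1 := fun i j hij => by
        have : g i = g j := Subtype.ext hij
        apply Subtype.ext
        rw [← hg1 i, ← hg1 j, this]
      have h1 : (range fun i : S => (g i).1).ncard = n + 2 := by
        rw [← Set.image_univ, Set.ncard_image_of_injective _ hinj, Set.ncard_univ]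
        simp [hS]
      have h2 : (range fun i : S => (g i).1) ⊆ {v ∈ V | x ∈ v} := by
        rintro _ ⟨i, rfl⟩
        exact ⟨(g i).2, hg2 i⟩
      have h3 := Set.ncard_le_ncard h2 (hVf.subset fun v hv => hv.1)
      have h4 := hVn x
      omega
  · intro h U hUf hU
    obtain ⟨hUo, hUc⟩ := hU
    obtain ⟨m, e, -, he⟩ : ∃ (m : ℕ) (e : Fin m → Set Y), Function.Injective e ∧ range e = U := by
      obtain ⟨m, e, he⟩ := hUf.fin_param
      exact ⟨m, e, he.1, he.2⟩
    subst he
    obtain ⟨V, h1, h2, h3, h4⟩ := h m e (fun i => hUo _ ⟨i, rfl⟩) (fun x => by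
      have hx : x ∈ ⋃₀ range e := hUc ▸ mem_univ x
      obtain ⟨_, ⟨i, rfl⟩, hi⟩ := hx
      exact ⟨i, hi⟩)
    refine ⟨range V, finite_range V, ⟨?_, ?_⟩, ?_, fun x => ?_⟩
    · rintro _ ⟨i, rfl⟩
      exact h1 i
    · refine eq_univ_of_forall fun x => ?_
      obtain ⟨i, hi⟩ := h3 x
      exact ⟨_, ⟨i, rfl⟩, hi⟩
    · rintro _ ⟨i, rfl⟩
      exact ⟨_, ⟨i, rfl⟩, h2 i⟩
    · have hsub : {v ∈ range V | x ∈ v} ⊆ V '' ((Finset.univ.filter fun i => x ∈ V i : Finset _) :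
          Set (Fin m)) := by
        rintro _ ⟨⟨i, rfl⟩, hx⟩
        exact ⟨i, by simpa using hx, rfl⟩
      have h5 := Set.ncard_le_ncard hsub (Set.toFinite _)
      have h6 := Set.ncard_image_le (f := V)
        (s := ((Finset.univ.filter fun i => x ∈ V i : Finset _) : Set (Fin m))) (Set.toFinite _)
      rw [Set.ncard_coe_finset] at h6
      by_contra hcon
      obtain ⟨S, hS, hSc⟩ := Finset.exists_subset_card_eq
        (s := Finset.univ.filter fun i => x ∈ V i) (n := n + 2) (by omega)
      obtain ⟨i, hi, hxi⟩ := h4 S hSc x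
      exact hxi (by simpa using hS hi)

/-! ### The Wallman space of a lattice of sets -/

/-- A bounded sublattice of the power set. -/
structure IsLat {T : Type u} (L : Set (Set T)) : Prop where
  empty : ∅ ∈ L
  univ : Set.univ ∈ L
  inter : ∀ a ∈ L, ∀ b ∈ L, a ∩ b ∈ L
  union : ∀ a ∈ L, ∀ b ∈ L, a ∪ b ∈ L

section Wallman

variable {T : Type u} {L : Set (Set T)}

/-- Finite intersection property together with being a subfamily of `L`. -/
def Fip (L : Set (Set T)) (S : Set (Set T)) : Prop :=
  S ⊆ L ∧ ∀ t ⊆ S, t.Finite → (⋂₀ t).Nonempty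

lemma sInter_mem_of_closed {P : Set (Set T)} (hu : Set.univ ∈ P)
    (hi : ∀ a ∈ P, ∀ b ∈ P, a ∩ b ∈ P) {t : Set (Set T)} (ht : t.Finite) (hsub : t ⊆ P) :
    ⋂₀ t ∈ P := by
  induction t, ht using Set.Finite.induction_on with
  | empty => simpa using hu
  | insert _ _ ih =>
    rw [sInter_insert]
    exact hi _ (hsub (mem_insert _ _)) _ (ih fun a ha => hsub (mem_insert_of_mem _ ha))

lemma exists_ultra (hL : IsLat L) {S : Set (Set T)} (hS : Fip L S) :
    ∃ u : LUltra L, S ⊆ u.sets := by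
  have hfc : Order.IsOfFiniteCharacter {S | Fip L S} := by
    intro S
    constructor
    · intro h y hy _
      exact ⟨hy.trans h.1, fun t ht => h.2 t (ht.trans hy)⟩
    · intro h
      refine ⟨fun a ha => ?_, fun t ht htf => (h t ht htf).2 t subset_rfl htf⟩
      exact (h {a} (singleton_subset_iff.2 ha) (finite_singleton a)).1 rfl
  obtain ⟨P, hSP, hP⟩ := hfc.exists_maximal hS
  have hPF : Fip L P := hP.prop
  have hmax : ∀ a ∈ L, (∀ t ⊆ P, t.Finite → (a ∩ ⋂₀ t).Nonempty) → a ∈ P := by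
    intro a ha h
    have : Fip L (insert a P) := by
      refine ⟨insert_subset ha hPF.1, fun t ht htf => ?_⟩
      refine (h (t \ {a}) ?_ htf.diff).mono ?_
      · rintro b ⟨hb, hba⟩
        exact (ht hb).resolve_left hba
      · rintro x ⟨hx1, hx2⟩ b hb
        by_cases hba : b = a
        · exact hba ▸ hx1
        · exact hx2 b ⟨hb, hba⟩
    exact hP.le_of_ge this (subset_insert a P) (mem_insert a P)
  have huniv : Set.univ ∈ P := hmax _ hL.univ fun t ht htf => by
    rw [univ_inter]; exact hPF.2 t ht htf
  have hinter : ∀ a ∈ P, ∀ b ∈ P, a ∩ b ∈ P := fun a ha b hb =>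
    hmax _ (hL.inter a (hPF.1 ha) b (hPF.1 hb)) fun t ht htf => by
      have := hPF.2 (insert a (insert b t))
        (insert_subset ha (insert_subset hb ht)) ((htf.insert b).insert a)
      rwa [sInter_insert, sInter_insert, ← inter_assoc] at this
  refine ⟨⟨P, hPF.1, huniv, ?_, hinter, ?_, ?_⟩, hSP⟩
  · intro h
    obtain ⟨x, hx⟩ := hPF.2 {∅} (singleton_subset_iff.2 h) (finite_singleton _)
    exact hx ∅ rfl
  · intro a ha b hb hab
    refine hmax b hb fun t ht htf => ?_
    have := hPF.2 (insert a t) (insert_subset ha ht) (htf.insert a)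
    rw [sInter_insert] at this
    exact this.mono (inter_subset_inter_left _ hab)
  · intro a ha haP
    by_contra hcon
    push Not at hcon
    refine haP (hmax a ha fun t ht htf => ?_)
    exact nonempty_iff_ne_empty.2 (nonempty_iff_ne_empty.1
      (hcon _ (sInter_mem_of_closed huniv hinter htf ht)))

lemma LU_prime (u : LUltra L) {a b : Set T} (ha : a ∈ L) (hb : b ∈ L)
    (h : a ∪ b ∈ u.sets) : a ∈ u.sets ∨ b ∈ u.sets := by
  by_contra hcon
  push Not at hcon
  obtain ⟨c, hc, hac⟩ := u.ultra a ha hcon.1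
  obtain ⟨d, hd, hbd⟩ := u.ultra b hb hcon.2
  have := u.inter_mem _ h _ (u.inter_mem c hc d hd)
  have he : (a ∪ b) ∩ (c ∩ d) = ∅ := by
    ext x
    have h1 : x ∉ a ∩ c := by rw [hac]; exact fun h => h
    have h2 : x ∉ b ∩ d := by rw [hbd]; exact fun h => h
    simp only [mem_inter_iff, mem_union] at h1 h2 ⊢
    simp only [mem_empty_iff_false, iff_false]
    tauto
  exact u.empty_notMem (he ▸ this)

/-- The basic open subset of the Wallman space given by the open set `U`. -/
def oh (L : Set (Set T)) (U : Set T) : Set (LUltra L) := {u | Uᶜ ∉ u.sets}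

/-- The dual lattice. -/
def dl (L : Set (Set T)) : Set (Set T) := {U | Uᶜ ∈ L}

lemma mem_oh {U : Set T} {u : LUltra L} : u ∈ oh L U ↔ Uᶜ ∉ u.sets := Iff.rfl

lemma mem_dl {U : Set T} : U ∈ dl L ↔ Uᶜ ∈ L := Iff.rfl

lemma dl_inter (hL : IsLat L) {U V : Set T} (hU : U ∈ dl L) (hV : V ∈ dl L) : U ∩ V ∈ dl L := by
  rw [mem_dl, compl_inter]; exact hL.union _ hU _ hV

lemma dl_union (hL : IsLat L) {U V : Set T} (hU : U ∈ dl L) (hV : V ∈ dl L) : U ∪ V ∈ dl L := by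
  rw [mem_dl, compl_union]; exact hL.inter _ hU _ hV

lemma dl_empty (hL : IsLat L) : ∅ ∈ dl L := by
  rw [mem_dl, compl_empty]; exact hL.univ

lemma dl_univ (hL : IsLat L) : Set.univ ∈ dl L := by
  rw [mem_dl, compl_univ]; exact hL.empty

lemma dl_biUnion (hL : IsLat L) {ι : Type*} (s : Finset ι) (U : ι → Set T)
    (hU : ∀ i ∈ s, U i ∈ dl L) : (⋃ i ∈ s, U i) ∈ dl L := by
  classical
  induction s using Finset.induction_on with
  | empty => simpa using dl_empty hL
  | insert a s _ ih =>
    rw [Finset.set_biUnion_insert]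
    exact dl_union hL (hU a (Finset.mem_insert_self _ _))
      (ih fun i hi => hU i (Finset.mem_insert_of_mem hi))

lemma dl_biInter (hL : IsLat L) {ι : Type*} (s : Finset ι) (U : ι → Set T)
    (hU : ∀ i ∈ s, U i ∈ dl L) : (⋂ i ∈ s, U i) ∈ dl L := by
  classical
  induction s using Finset.induction_on with
  | empty => simpa using dl_univ hL
  | insert a s _ ih =>
    rw [Finset.set_biInter_insert]
    exact dl_inter hL (hU a (Finset.mem_insert_self _ _))
      (ih fun i hi => hU i (Finset.mem_insert_of_mem hi))

lemma isOpen_oh {U : Set T} (hU : U ∈ dl L) : IsOpen (oh L U) :=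
  TopologicalSpace.isOpen_generateFrom_of_mem ⟨Uᶜ, hU, rfl⟩

lemma oh_mono {U V : Set T} (hU : U ∈ dl L) (h : U ⊆ V) : oh L U ⊆ oh L V :=
  fun u hu hV => hu (u.superset_mem _ hV _ hU (compl_subset_compl.2 h))

lemma oh_inter {U V : Set T} (hU : U ∈ dl L) (hV : V ∈ dl L) :
    oh L U ∩ oh L V ⊆ oh L (U ∩ V) := by
  rintro u ⟨h1, h2⟩ h
  rw [compl_inter] at h
  exact (LU_prime u hU hV h).elim h1 h2

lemma oh_univ : oh L Set.univ = Set.univ :=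
  eq_univ_of_forall fun u => by rw [mem_oh, compl_univ]; exact u.empty_notMem

lemma oh_empty : oh L ∅ = ∅ :=
  eq_empty_of_forall_notMem fun u h => h (by rw [compl_empty]; exact u.univ_mem)

/-- Finite families of members of the dual lattice cover `T` iff they cover the Wallman space. -/
lemma cover_iff (hL : IsLat L) {m : ℕ} (U : Fin m → Set T) (hU : ∀ i, U i ∈ dl L) :
    (∀ u : LUltra L, ∃ i, u ∈ oh L (U i)) ↔ ∀ x, ∃ i, x ∈ U i := by
  constructor
  · intro h x
    by_contra hcon
    push Not at hcon
    obtain ⟨u, hu⟩ := exists_ultra hL (S := range fun i => (U i)ᶜ)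
      ⟨by rintro _ ⟨i, rfl⟩; exact hU i, fun t ht _ => ⟨x, fun a ha => by
        obtain ⟨i, rfl⟩ := ht ha
        exact hcon i⟩⟩
    obtain ⟨i, hi⟩ := h u
    exact hi (hu ⟨i, rfl⟩)
  · intro h u
    by_contra hcon
    simp only [mem_oh, not_exists, not_not] at hcon
    have := sInter_mem_of_closed u.univ_mem u.inter_mem (t := range fun i => (U i)ᶜ)
      (finite_range _) (by rintro _ ⟨i, rfl⟩; exact hcon i)
    have he : ⋂₀ (range fun i => (U i)ᶜ) = ∅ := by
      refine eq_empty_of_forall_notMem fun x hx => ?_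
      obtain ⟨i, hi⟩ := h x
      exact hx _ ⟨i, rfl⟩ hi
    exact u.empty_notMem (he ▸ this)

lemma order_iff (hL : IsLat L)
    (hd : ∀ a ∈ L, a ≠ Set.univ → ∃ b ∈ L, b.Nonempty ∧ a ∩ b = ∅)
    {m : ℕ} (V : Fin m → Set T) (hV : ∀ i, V i ∈ dl L) (S : Finset (Fin m)) :
    (∀ u : LUltra L, ∃ i ∈ S, u ∉ oh L (V i)) ↔ ∀ x, ∃ i ∈ S, x ∉ V i := by
  have hW : (⋂ i ∈ S, V i) ∈ dl L := dl_biInter hL S V fun i _ => hV i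
  have key : (⋂ i ∈ S, oh L (V i)) ⊆ oh L (⋂ i ∈ S, V i) := by
    classical
    clear hW
    induction S using Finset.induction_on with
    | empty => simp [oh_univ]
    | insert a s _ ih =>
      rw [Finset.set_biInter_insert, Finset.set_biInter_insert]
      exact (inter_subset_inter_right _ ih).trans
        (oh_inter (hV a) (dl_biInter hL s V fun i _ => hV i))
  constructor
  · intro h x
    by_contra hcon
    push Not at hcon
    have hx : x ∈ ⋂ i ∈ S, V i := mem_iInter₂.2 hcon
    obtain ⟨b, hb, hbn, hab⟩ := hd _ hW fun hu => by
      have : x ∈ (⋂ i ∈ S, V i)ᶜ := hu ▸ mem_univ x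
      exact this hx
    obtain ⟨u, hu⟩ := exists_ultra hL (S := {b})
      ⟨singleton_subset_iff.2 hb, fun t ht _ => hbn.mono fun y hy a ha => by
        rw [mem_singleton_iff.1 (ht ha)]; exact hy⟩
    obtain ⟨i, hi, hui⟩ := h u
    simp only [mem_oh, not_not] at hui
    have h1 := u.inter_mem _ hui _ (hu rfl)
    have h2 : (V i)ᶜ ∩ b = ∅ := by
      refine eq_empty_of_forall_notMem fun y hy => ?_
      have : y ∈ (⋂ i ∈ S, V i)ᶜ ∩ b := ⟨fun h => hy.1 (mem_iInter₂.1 h i hi), hy.2⟩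
      rw [hab] at this
      exact this
    exact u.empty_notMem (h2 ▸ h1)
  · intro h u
    by_contra hcon
    push Not at hcon
    have h1 := key (mem_iInter₂.2 hcon)
    have h2 : (⋂ i ∈ S, V i) = ∅ := by
      refine eq_empty_of_forall_notMem fun x hx => ?_
      obtain ⟨i, hi, hxi⟩ := h x
      exact hxi (mem_iInter₂.1 hx i hi)
    rw [h2, oh_empty] at h1
    exact h1

lemma exists_basic (hL : IsLat L) {W : Set (LUltra L)} (hW : IsOpen W) (u : LUltra L)
    (hu : u ∈ W) : ∃ U ∈ dl L, u ∈ oh L U ∧ oh L U ⊆ W := by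
  induction hW with
  | basic s hs =>
    obtain ⟨a, ha, rfl⟩ := hs
    refine ⟨aᶜ, by rw [mem_dl, compl_compl]; exact ha, ?_, ?_⟩
    · rw [mem_oh, compl_compl]; exact hu
    · intro v hv
      rw [mem_oh, compl_compl] at hv
      exact hv
  | univ => exact ⟨Set.univ, dl_univ hL, by rw [oh_univ]; trivial, subset_univ _⟩
  | inter s t _ _ ihs iht =>
    obtain ⟨U, hU, h1, h2⟩ := ihs hu.1
    obtain ⟨V, hV, h3, h4⟩ := iht hu.2
    exact ⟨U ∩ V, dl_inter hL hU hV, oh_inter hU hV ⟨h1, h3⟩,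
      subset_inter ((oh_mono (dl_inter hL hU hV) inter_subset_left).trans h2)
        ((oh_mono (dl_inter hL hU hV) inter_subset_right).trans h4)⟩
  | sUnion S _ ih =>
    obtain ⟨s, hs, hus⟩ := hu
    obtain ⟨U, hU, h1, h2⟩ := ih s hs hus
    exact ⟨U, hU, h1, h2.trans (subset_sUnion_of_mem hs)⟩

lemma compact_wallman (hL : IsLat L) : CompactSpace (LUltra L) := by
  constructor
  refine isCompact_generateFrom rfl fun P hP hPc => ?_
  by_contra hcon
  push Not at hcon
  let S : Set (Set T) := {a | a ∈ L ∧ {u : LUltra L | a ∈ u.sets}ᶜ ∈ P}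
  have hS : Fip L S := by
    refine ⟨fun a ha => ha.1, fun t ht htf => ?_⟩
    by_contra hne
    rw [not_nonempty_iff_eq_empty] at hne
    refine hcon ((fun a => {u : LUltra L | a ∈ u.sets}ᶜ) '' t) ?_ (htf.image _) ?_
    · rintro _ ⟨a, ha, rfl⟩
      exact (ht ha).2
    · intro u _
      by_contra hu
      have hut : t ⊆ u.sets := fun a ha => by
        by_contra hau
        exact hu ⟨_, ⟨a, ha, rfl⟩, hau⟩
      have := sInter_mem_of_closed u.univ_mem u.inter_mem htf hut
      exact u.empty_notMem (hne ▸ this)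
  obtain ⟨u, hu⟩ := exists_ultra hL hS
  obtain ⟨s, hs, hus⟩ := hPc (mem_univ u)
  obtain ⟨a, ha, rfl⟩ := hP hs
  exact hus (hu ⟨ha, hs⟩)

lemma exists_shrink (hL : IsLat L) {m : ℕ} (W : Fin m → Set (LUltra L))
    (hW : ∀ i, IsOpen (W i)) (hc : ∀ u, ∃ i, u ∈ W i) :
    ∃ U : Fin m → Set T, (∀ i, U i ∈ dl L) ∧ (∀ i, oh L (U i) ⊆ W i) ∧
      ∀ u, ∃ i, u ∈ oh L (U i) := by
  classical
  have := compact_wallman hL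
  choose f hf using hc
  choose B hB huB hBW using fun u => exists_basic hL (hW (f u)) u (hf u)
  obtain ⟨t, ht⟩ := isCompact_univ.elim_finite_subcover (fun u => oh L (B u))
    (fun u => isOpen_oh (hB u)) fun u _ => mem_iUnion.2 ⟨u, huB u⟩
  have hU : ∀ i, (⋃ u ∈ t.filter fun u => f u = i, B u) ∈ dl L := fun i =>
    dl_biUnion hL _ _ fun u _ => hB u
  refine ⟨fun i => ⋃ u ∈ t.filter fun u => f u = i, B u, hU, fun i => ?_, fun u => ?_⟩
  · have key : ∀ s : Finset (LUltra L), oh L (⋃ u ∈ s, B u) ⊆ ⋃ u ∈ s, oh L (B u) := by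
      intro s
      induction s using Finset.induction_on with
      | empty => simp [oh_empty]
      | insert a s _ ih =>
        rw [Finset.set_biUnion_insert, Finset.set_biUnion_insert]
        intro v hv
        by_contra hn
        rw [mem_union, not_or] at hn
        have h2 : v ∉ oh L (⋃ u ∈ s, B u) := fun h => hn.2 (ih h)
        have h1 := hn.1
        simp only [mem_oh, not_not] at h1 h2
        refine hv ?_
        rw [compl_union]
        exact v.inter_mem _ h1 _ h2
    refine (key _).trans (iUnion₂_subset fun u hu => ?_)
    have := (Finset.mem_filter.1 hu).2
    exact this ▸ hBW u
  · obtain ⟨v, hv, huv⟩ := mem_iUnion₂.1 (ht (mem_univ u))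
    refine ⟨f v, oh_mono (hB v) ?_ huv⟩
    exact subset_biUnion_of_mem (u := B) (s := {u | u ∈ t.filter fun u => f u = f v})
      (by simpa using hv)

lemma qo_wallman (hL : IsLat L)
    (hd : ∀ a ∈ L, a ≠ Set.univ → ∃ b ∈ L, b.Nonempty ∧ a ∩ b = ∅) (m n : ℕ) :
    Qo {W : Set (LUltra L) | IsOpen W} m n ↔ Qo (dl L) m n := by
  constructor
  · intro h U hU hUc
    obtain ⟨W, hW, hWU, hWc, hWn⟩ := h (fun i => oh L (U i)) (fun i => isOpen_oh (hU i))
      ((cover_iff hL U hU).2 hUc)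
    obtain ⟨V, hV, hVW, hVc⟩ := exists_shrink hL W hW hWc
    have hV' : ∀ i, V i ∩ U i ∈ dl L := fun i => dl_inter hL (hV i) (hU i)
    refine ⟨fun i => V i ∩ U i, hV', fun i => inter_subset_right,
      (cover_iff hL _ hV').1 fun u => ?_, fun S hS => (order_iff hL hd _ hV' S).1 fun u => ?_⟩
    · obtain ⟨i, hi⟩ := hVc u
      exact ⟨i, oh_inter (hV i) (hU i) ⟨hi, hWU i (hVW i hi)⟩⟩
    · obtain ⟨i, hi, hui⟩ := hWn S hS u
      exact ⟨i, hi, fun h => hui (hVW i (oh_mono (hV' i) inter_subset_left h))⟩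
  · intro h W hW hWc
    obtain ⟨U, hU, hUW, hUc⟩ := exists_shrink hL W hW hWc
    obtain ⟨V, hV, hVU, hVc, hVn⟩ := h U hU ((cover_iff hL U hU).1 hUc)
    exact ⟨fun i => oh L (V i), fun i => isOpen_oh (hV i),
      fun i => (oh_mono (hV i) (hVU i)).trans (hUW i), (cover_iff hL V hV).2 hVc,
      fun S hS => (order_iff hL hd V hV S).2 (hVn S hS)⟩

end Wallman

end WallDim

/-- For a compact Hausdorff space `X` and a countable elementary submodel
`M ≺ H(κ)` with `X ∈ M`, with `L = 2^X ∩ M`, the covering dimension of the Wallman space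
`wL` equals the covering dimension of `X`. -/
theorem covDim_wallman_eq
    (X : ZFSet.{0}) [TopologicalSpace ↥X.toSet] [CompactSpace ↥X.toSet]
    [T2Space ↥X.toSet]
    (κ : Cardinal.{1}) (hreg : κ.IsRegular) (hbig : HeredLt κ X.powerset.powerset)
    (M : FirstOrder.Language.graph.ElementarySubstructure (HKappa κ))
    (hMcount : Countable M) (hXM : MemOf κ M X) (htopM : MemOf κ M (opensZ X)) :
    covDim (LUltra (Lfam X κ M)) = covDim ↥X.toSet := by
  obtain ⟨hX, hXM⟩ := hXM
  obtain ⟨hO, hOM⟩ := htopM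
  have hL : WallDim.IsLat (Lfam X κ M) :=
    { empty := ⟨isClosed_empty, (WallDim.memOf_code hbig _ M).2 (WallDim.cd_empty M hbig)⟩
      univ := ⟨isClosed_univ, (WallDim.memOf_code hbig _ M).2 (WallDim.cd_univ M hX hXM hbig)⟩
      inter := fun a ha b hb => ⟨ha.1.inter hb.1, (WallDim.memOf_code hbig _ M).2
        (WallDim.cd_inter M hbig a b ((WallDim.memOf_code hbig _ M).1 ha.2)
          ((WallDim.memOf_code hbig _ M).1 hb.2))⟩
      union := fun a ha b hb => ⟨ha.1.union hb.1, (WallDim.memOf_code hbig _ M).2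
        (WallDim.cd_union M hX hXM hbig a b ((WallDim.memOf_code hbig _ M).1 ha.2)
          ((WallDim.memOf_code hbig _ M).1 hb.2))⟩ }
  have key : ∀ n, CovDimLE (LUltra (Lfam X κ M)) n ↔ CovDimLE ↥X.toSet n := fun n => by
    rw [WallDim.covDimLE_iff, WallDim.covDimLE_iff]
    refine forall_congr' fun m => ?_
    rw [WallDim.qo_wallman hL (WallDim.disj M hX hXM hO hOM hbig)]
    exact WallDim.qo_iff M hX hXM hO hOM hbig m n
  unfold covDim
  simp only [key]
end

section
/- Let X be a compact Hausdorff space, M ≺ H(κ) countable with X ∈ M, and L = 2^X ∩ M. Then X is a C-space if and only if the Wallman space wL is a C-space. -/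
open Set TopologicalSpace FirstOrder

universe u v

namespace WallC

open FirstOrder.Language

section definability

variable {κ : Cardinal.{1}} (M : FirstOrder.Language.graph.ElementarySubstructure (HKappa κ))

/-- Predicates on tuples of elements of `H(κ)` definable with parameters in `M`. -/
def D {α : Type*} (P : (α → HKappa κ) → Prop) : Prop :=
  ∃ φ : FirstOrder.Language.graph.Formula (M ⊕ α), ∀ v : α → HKappa κ,
    φ.Realize (Sum.elim (fun m : M => (m : HKappa κ)) v) ↔ P v

/-- Terms: a variable or a parameter in `M`. -/
def T {α : Type*} (f : (α → HKappa κ) → HKappa κ) : Prop :=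
  ∃ a : M ⊕ α, ∀ v, f v = Sum.elim (fun m : M => (m : HKappa κ)) v a

variable {M}

lemma T_var {α : Type*} (a : α) : T M (fun v => v a) := ⟨Sum.inr a, fun _ => rfl⟩

lemma T_par {α : Type*} (m : HKappa κ) (hm : m ∈ M) : T M (fun _ : α → HKappa κ => m) :=
  ⟨Sum.inl ⟨m, hm⟩, fun _ => rfl⟩

lemma D_mem {α : Type*} {f g : (α → HKappa κ) → HKappa κ} (hf : T M f) (hg : T M g) :
    D M (fun v => (f v : ZFSet) ∈ (g v : ZFSet)) := by
  obtain ⟨a, ha⟩ := hf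
  obtain ⟨b, hb⟩ := hg
  refine ⟨Relations.formula₂ adj (Term.var a) (Term.var b), fun v => ?_⟩
  beta_reduce
  rw [Formula.realize_rel₂, ha, hb]
  exact Iff.rfl

lemma D_eq {α : Type*} {f g : (α → HKappa κ) → HKappa κ} (hf : T M f) (hg : T M g) :
    D M (fun v => f v = g v) := by
  obtain ⟨a, ha⟩ := hf
  obtain ⟨b, hb⟩ := hg
  refine ⟨Term.equal (Term.var a) (Term.var b), fun v => ?_⟩
  beta_reduce
  rw [Formula.realize_equal, ha, hb]
  exact Iff.rfl

lemma D_not {α : Type*} {P : (α → HKappa κ) → Prop} (h : D M P) : D M (fun v => ¬ P v) := by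
  obtain ⟨φ, h⟩ := h
  exact ⟨φ.not, fun v => by rw [Formula.realize_not, h]⟩

lemma D_and {α : Type*} {P Q : (α → HKappa κ) → Prop} (h : D M P) (k : D M Q) :
    D M (fun v => P v ∧ Q v) := by
  obtain ⟨φ, h⟩ := h
  obtain ⟨ψ, k⟩ := k
  exact ⟨φ ⊓ ψ, fun v => by rw [Formula.realize_inf, h, k]⟩

lemma D_imp {α : Type*} {P Q : (α → HKappa κ) → Prop} (h : D M P) (k : D M Q) :
    D M (fun v => P v → Q v) := by
  obtain ⟨φ, h⟩ := h
  obtain ⟨ψ, k⟩ := k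
  exact ⟨φ.imp ψ, fun v => by rw [Formula.realize_imp, h, k]⟩

lemma D_or {α : Type*} {P Q : (α → HKappa κ) → Prop} (h : D M P) (k : D M Q) :
    D M (fun v => P v ∨ Q v) := by
  obtain ⟨φ, h⟩ := h
  obtain ⟨ψ, k⟩ := k
  exact ⟨φ ⊔ ψ, fun v => by rw [Formula.realize_sup, h, k]⟩

lemma D_iff {α : Type*} {P Q : (α → HKappa κ) → Prop} (h : D M P) (k : D M Q) :
    D M (fun v => (P v ↔ Q v)) := by
  obtain ⟨φ, h⟩ := h
  obtain ⟨ψ, k⟩ := k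
  exact ⟨φ.iff ψ, fun v => by rw [Formula.realize_iff, h, k]⟩

lemma D_ex {α : Type*} {Q : (α → HKappa κ) → HKappa κ → Prop}
    (h : D M (fun w : Option α → HKappa κ => Q (fun a => w (some a)) (w none))) :
    D M (fun v => ∃ x, Q v x) := by
  obtain ⟨φ, h⟩ := h
  let g : M ⊕ Option α → (M ⊕ α) ⊕ Unit := Sum.elim (fun m => Sum.inl (Sum.inl m))
    (fun o => o.elim (Sum.inr ()) (fun a => Sum.inl (Sum.inr a)))
  refine ⟨(φ.relabel g).iExs Unit, fun v => ?_⟩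
  rw [Formula.realize_iExs]
  have key : ∀ x : HKappa κ, (φ.relabel g).Realize
      (Sum.elim (Sum.elim (fun m : M => (m : HKappa κ)) v) (fun _ : Unit => x)) ↔ Q v x := by
    intro x
    rw [Formula.realize_relabel]
    have := h (fun o => o.elim x v)
    simp only [Option.elim] at this
    rw [← this]
    apply iff_of_eq
    congr 1
    funext z
    rcases z with m | o
    · rfl
    · cases o <;> rfl
  constructor
  · rintro ⟨i, hi⟩
    exact ⟨i (), (key _).1 hi⟩
  · rintro ⟨x, hx⟩
    exact ⟨fun _ => x, (key x).2 hx⟩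

lemma D_all {α : Type*} {Q : (α → HKappa κ) → HKappa κ → Prop}
    (h : D M (fun w : Option α → HKappa κ => Q (fun a => w (some a)) (w none))) :
    D M (fun v => ∀ x, Q v x) := by
  have := D_not (D_ex (Q := fun v x => ¬ Q v x) (D_not h))
  simpa using this

lemma D_iall {α : Type*} {β : Type*} [Finite β] {P : β → (α → HKappa κ) → Prop}
    (h : ∀ b, D M (P b)) : D M (fun v => ∀ b, P b v) := by
  choose φ h using h
  exact ⟨Formula.iInf φ, fun v => by rw [Formula.realize_iInf]; exact forall_congr' fun b => h b v⟩

lemma D_iex {α : Type*} {β : Type*} [Finite β] {P : β → (α → HKappa κ) → Prop}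
    (h : ∀ b, D M (P b)) : D M (fun v => ∃ b, P b v) := by
  have := D_not (D_iall (fun b => D_not (h b)))
  simpa using this

lemma D_const {α : Type*} (p : Prop) : D M (fun _ : α → HKappa κ => p) := by
  by_cases h : p
  · exact ⟨⊤, fun v => by simp [h]⟩
  · exact ⟨⊥, fun v => by simp [h]⟩

/-- Elementarity. -/
lemma elem {β : Type*} [Finite β] {P : (β → HKappa κ) → Prop} (hD : D M P) (h : ∃ y, P y) :
    ∃ y : β → HKappa κ, (∀ b, y b ∈ M) ∧ P y := by
  obtain ⟨φ, hφ⟩ := hD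
  have h1 : (φ.iExs β).Realize (M.subtype ∘ (id : M → M)) := by
    rw [Formula.realize_iExs]
    obtain ⟨y, hy⟩ := h
    exact ⟨y, (hφ y).2 hy⟩
  rw [M.subtype.map_formula, Formula.realize_iExs] at h1
  obtain ⟨y, hy⟩ := h1
  refine ⟨fun b => y b, fun b => (y b).2, (hφ _).1 ?_⟩
  rw [← M.subtype.map_formula] at hy
  convert hy using 1
  funext z
  rcases z with m | o <;> rfl

lemma elem1 {P : HKappa κ → Prop} (hD : D M (fun v : Unit → HKappa κ => P (v ())))
    (h : ∃ y, P y) : ∃ y, y ∈ M ∧ P y := by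
  obtain ⟨x, hx⟩ := h
  obtain ⟨y, hy, hP⟩ := elem hD ⟨fun _ => x, hx⟩
  exact ⟨y (), hy (), hP⟩

lemma elem2 {P : HKappa κ → HKappa κ → Prop}
    (hD : D M (fun v : Bool → HKappa κ => P (v true) (v false)))
    (h : ∃ x y, P x y) : ∃ x y, x ∈ M ∧ y ∈ M ∧ P x y := by
  obtain ⟨x, x', hx⟩ := h
  obtain ⟨y, hy, hP⟩ := elem hD ⟨fun b => if b then x else x', by simpa using hx⟩
  exact ⟨y true, y false, hy _, hy _, hP⟩

end definability

lemma heredLt_iff {κ : Cardinal.{1}} {x : ZFSet.{0}} :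
    HeredLt κ x ↔ Cardinal.mk x.toSet < κ ∧ ∀ y ∈ x, HeredLt κ y := by
  unfold HeredLt
  rw [WellFounded.fix_eq]

lemma heredLt_mem {κ : Cardinal.{1}} {x y : ZFSet.{0}} (h : HeredLt κ x) (hy : y ∈ x) :
    HeredLt κ y := (heredLt_iff.1 h).2 y hy

lemma heredLt_sub {κ : Cardinal.{1}} {x y : ZFSet.{0}} (h : HeredLt κ x) (hy : y ⊆ x) :
    HeredLt κ y :=
  heredLt_iff.2 ⟨lt_of_le_of_lt (Cardinal.mk_le_mk_of_subset (fun _ hz => hy hz))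
    (heredLt_iff.1 h).1, fun _ hz => heredLt_mem h (hy hz)⟩

lemma memH {κ : Cardinal.{1}} {x : ZFSet.{0}} : x ∈ HKappa κ ↔ HeredLt κ x := Iff.rfl

lemma H_ext {κ : Cardinal.{1}} {x y : HKappa κ}
    (h : ∀ z : HKappa κ, (z : ZFSet) ∈ (x : ZFSet) ↔ (z : ZFSet) ∈ (y : ZFSet)) : x = y := by
  apply Subtype.ext
  ext z
  constructor
  · intro hz
    exact (h ⟨z, heredLt_mem x.2 hz⟩).1 hz
  · intro hz
    exact (h ⟨z, heredLt_mem y.2 hz⟩).2 hz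

section coding
variable {X : ZFSet.{0}}

lemma mem_codeSet {A : Set ↥X.toSet} {y : ZFSet} :
    y ∈ codeSet X A ↔ ∃ h : y ∈ X.toSet, (⟨y, h⟩ : ↥X.toSet) ∈ A := by
  unfold codeSet
  rw [ZFSet.mem_sep]
  exact ⟨fun h => h.2, fun h => ⟨h.1, h⟩⟩

lemma codeSet_sub {A : Set ↥X.toSet} : codeSet X A ⊆ X := fun _ h => (mem_codeSet.1 h).1

lemma mem_codeSet' {A : Set ↥X.toSet} {y : ↥X.toSet} : (y : ZFSet) ∈ codeSet X A ↔ y ∈ A := by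
  rw [mem_codeSet]
  exact ⟨fun h => h.2, fun h => ⟨y.2, h⟩⟩

lemma decode_code (A : Set ↥X.toSet) : decodeSet X (codeSet X A) = A := by
  ext y
  exact mem_codeSet'

lemma code_decode {t : ZFSet} (h : t ⊆ X) : codeSet X (decodeSet X t) = t := by
  ext y
  rw [mem_codeSet]
  exact ⟨fun ⟨_, hy⟩ => hy, fun hy => ⟨h hy, hy⟩⟩

lemma mem_opensZ [TopologicalSpace ↥X.toSet] {t : ZFSet} :
    t ∈ opensZ X ↔ t ⊆ X ∧ IsOpen (decodeSet X t) := by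
  unfold opensZ
  rw [ZFSet.mem_sep, ZFSet.mem_powerset]

end coding

section lattice

variable {X : ZFSet.{0}} {κ : Cardinal.{1}}
  {M : FirstOrder.Language.graph.ElementarySubstructure (HKappa κ)}

lemma heredX (hbig : HeredLt κ X.powerset.powerset) : HeredLt κ X :=
  heredLt_mem (heredLt_mem hbig (ZFSet.mem_powerset.2 (fun _ h => h)))
    (ZFSet.mem_powerset.2 (fun _ h => h))

/-- Elements of `X`, as elements of `H(κ)`. -/
def pt (hbig : HeredLt κ X.powerset.powerset) (x : ↥X.toSet) : HKappa κ :=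
  ⟨x, heredLt_mem (heredX hbig) x.2⟩

/-- Codes of subsets of `X`, as elements of `H(κ)`. -/
noncomputable def cod (hbig : HeredLt κ X.powerset.powerset) (A : Set ↥X.toSet) : HKappa κ :=
  ⟨codeSet X A, heredLt_sub (heredX hbig) codeSet_sub⟩

lemma cod_mem (hbig : HeredLt κ X.powerset.powerset) {A : Set ↥X.toSet} :
    MemOf κ M (codeSet X A) ↔ cod hbig A ∈ M :=
  ⟨fun h => h.2, fun h => ⟨_, h⟩⟩

lemma SM_of_def (hbig : HeredLt κ X.powerset.powerset) {A : Set ↥X.toSet} (Q : HKappa κ → Prop)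
    (hD : D M (fun w : Option Unit → HKappa κ => Q (w none)))
    (hQ : ∀ z : HKappa κ, (z : ZFSet) ∈ codeSet X A ↔ Q z) : cod hbig A ∈ M := by
  obtain ⟨y, hy, h⟩ := elem1 (M := M) (P := fun y => ∀ z : HKappa κ, (z : ZFSet) ∈ (y : ZFSet) ↔ Q z)
    (D_all (D_iff (D_mem (T_var _) (T_var _)) hD)) ⟨cod hbig A, hQ⟩
  have : y = cod hbig A := H_ext fun z => (h z).trans (hQ z).symm
  exact this ▸ hy


lemma SM_compl
    (hbig : HeredLt κ X.powerset.powerset)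
    (hX : (⟨X, heredX hbig⟩ : HKappa κ) ∈ M) {A : Set ↥X.toSet} (hA : cod hbig A ∈ M) : cod hbig Aᶜ ∈ M := by
  refine SM_of_def hbig (fun z => (z : ZFSet) ∈ ((⟨X, heredX hbig⟩ : HKappa κ) : ZFSet) ∧
    ¬ (z : ZFSet) ∈ (cod hbig A : ZFSet)) ?_ ?_
  · exact D_and (D_mem (T_var _) (T_par _ hX)) (D_not (D_mem (T_var _) (T_par _ hA)))
  · intro z
    simp only [cod]
    rw [mem_codeSet, mem_codeSet]
    constructor
    · rintro ⟨h, h'⟩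
      exact ⟨h, fun ⟨_, h2⟩ => h' h2⟩
    · rintro ⟨h, h'⟩
      exact ⟨h, fun h2 => h' ⟨h, h2⟩⟩

lemma SM_univ
    (hbig : HeredLt κ X.powerset.powerset)
    (hX : (⟨X, heredX hbig⟩ : HKappa κ) ∈ M) : cod hbig (Set.univ : Set ↥X.toSet) ∈ M := by
  refine SM_of_def hbig (fun z => (z : ZFSet) ∈ ((⟨X, heredX hbig⟩ : HKappa κ) : ZFSet)) ?_ ?_
  · exact (D_mem (T_var _) (T_par _ hX))
  · intro z
    rw [mem_codeSet]
    exact ⟨fun ⟨h, _⟩ => h, fun h => ⟨h, trivial⟩⟩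

lemma SM_union
    (hbig : HeredLt κ X.powerset.powerset) {A B : Set ↥X.toSet} (hA : cod hbig A ∈ M) (hB : cod hbig B ∈ M) :
    cod hbig (A ∪ B) ∈ M := by
  refine SM_of_def hbig (fun z => (z : ZFSet) ∈ (cod hbig A : ZFSet) ∨
    (z : ZFSet) ∈ (cod hbig B : ZFSet)) ?_ ?_
  · exact D_or (D_mem (T_var _) (T_par _ hA)) ((D_mem (T_var _) (T_par _ hB)))
  · intro z
    simp only [cod]
    rw [mem_codeSet, mem_codeSet, mem_codeSet]
    constructor
    · rintro ⟨h, h' | h'⟩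
      exacts [Or.inl ⟨h, h'⟩, Or.inr ⟨h, h'⟩]
    · rintro (⟨h, h'⟩ | ⟨h, h'⟩)
      exacts [⟨h, Or.inl h'⟩, ⟨h, Or.inr h'⟩]

lemma SM_empty
    (hbig : HeredLt κ X.powerset.powerset)
    (hX : (⟨X, heredX hbig⟩ : HKappa κ) ∈ M) : cod hbig (∅ : Set ↥X.toSet) ∈ M := by
  have := SM_compl hbig hX (SM_univ hbig hX)
  rwa [Set.compl_univ] at this

lemma SM_inter
    (hbig : HeredLt κ X.powerset.powerset)
    (hX : (⟨X, heredX hbig⟩ : HKappa κ) ∈ M) {A B : Set ↥X.toSet} (hA : cod hbig A ∈ M) (hB : cod hbig B ∈ M) :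
    cod hbig (A ∩ B) ∈ M := by
  have := SM_compl hbig hX (SM_union hbig (SM_compl hbig hX hA) (SM_compl hbig hX hB))
  rwa [Set.compl_union, compl_compl, compl_compl] at this

variable [TopologicalSpace ↥X.toSet]

lemma mem_L
    (hbig : HeredLt κ X.powerset.powerset) {A : Set ↥X.toSet} : A ∈ Lfam X κ M ↔ IsClosed A ∧ cod hbig A ∈ M :=
  and_congr Iff.rfl (cod_mem hbig)

lemma L_univ
    (hbig : HeredLt κ X.powerset.powerset)
    (hX : (⟨X, heredX hbig⟩ : HKappa κ) ∈ M) : Set.univ ∈ Lfam X κ M := (mem_L hbig).2 ⟨isClosed_univ, SM_univ hbig hX⟩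

lemma L_empty
    (hbig : HeredLt κ X.powerset.powerset)
    (hX : (⟨X, heredX hbig⟩ : HKappa κ) ∈ M) : ∅ ∈ Lfam X κ M := (mem_L hbig).2 ⟨isClosed_empty, SM_empty hbig hX⟩

lemma L_union
    (hbig : HeredLt κ X.powerset.powerset) {A B : Set ↥X.toSet} (hA : A ∈ Lfam X κ M) (hB : B ∈ Lfam X κ M) :
    A ∪ B ∈ Lfam X κ M := by
  rw [mem_L hbig] at hA hB ⊢
  exact ⟨hA.1.union hB.1, SM_union hbig hA.2 hB.2⟩

lemma L_inter
    (hbig : HeredLt κ X.powerset.powerset)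
    (hX : (⟨X, heredX hbig⟩ : HKappa κ) ∈ M) {A B : Set ↥X.toSet} (hA : A ∈ Lfam X κ M) (hB : B ∈ Lfam X κ M) :
    A ∩ B ∈ Lfam X κ M := by
  rw [mem_L hbig] at hA hB ⊢
  exact ⟨hA.1.inter hB.1, SM_inter hbig hX hA.2 hB.2⟩

lemma L_of_open
    (hbig : HeredLt κ X.powerset.powerset)
    (hX : (⟨X, heredX hbig⟩ : HKappa κ) ∈ M) {y : HKappa κ} (hy : y ∈ M) (ho : (y : ZFSet) ∈ opensZ X) :
    (decodeSet X y)ᶜ ∈ Lfam X κ M := by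
  rw [mem_opensZ] at ho
  rw [mem_L hbig]
  refine ⟨ho.2.isClosed_compl, SM_compl hbig hX ?_⟩
  have : cod hbig (decodeSet X y) = y := Subtype.ext (code_decode ho.1)
  rwa [this]

lemma heredTop
    (hbig : HeredLt κ X.powerset.powerset) : HeredLt κ (opensZ X) := by
  refine heredLt_mem hbig (ZFSet.mem_powerset.2 fun t ht => ?_)
  exact ZFSet.mem_powerset.2 (mem_opensZ.1 ht).1

lemma code_open
    (hbig : HeredLt κ X.powerset.powerset) {A : Set ↥X.toSet} : (cod hbig A : ZFSet) ∈ opensZ X ↔ IsOpen A := by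
  rw [mem_opensZ]
  simp only [cod, decode_code]
  exact ⟨fun h => h.2, fun h => ⟨codeSet_sub, h⟩⟩


lemma L_normal
    (hbig : HeredLt κ X.powerset.powerset)
    (hX : (⟨X, heredX hbig⟩ : HKappa κ) ∈ M)
    (hT : (⟨opensZ X, heredTop hbig⟩ : HKappa κ) ∈ M) [CompactSpace ↥X.toSet] [T2Space ↥X.toSet] {A B : Set ↥X.toSet}
    (hA : A ∈ Lfam X κ M) (hB : B ∈ Lfam X κ M) (hAB : A ∩ B = ∅) :
    ∃ C ∈ Lfam X κ M, ∃ E ∈ Lfam X κ M, C ∪ E = Set.univ ∧ A ∩ C = ∅ ∧ B ∩ E = ∅ := by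
  rw [mem_L hbig] at hA hB
  obtain ⟨U, V, hU, hV, hAU, hBV, hUV⟩ :=
    normal_separation hA.1 hB.1 (Set.disjoint_iff_inter_eq_empty.2 hAB)
  have hsub : ∀ {P Q : Set ↥X.toSet}, P ⊆ Q → ∀ z : HKappa κ,
      (z : ZFSet) ∈ (cod hbig P : ZFSet) → (z : ZFSet) ∈ (cod hbig Q : ZFSet) := by
    intro P Q hPQ z hz
    obtain ⟨h, h'⟩ := mem_codeSet.1 hz
    exact mem_codeSet.2 ⟨h, hPQ h'⟩
  obtain ⟨c, d, hc, hd, h1, h2, h3, h4, h5⟩ := elem2 (M := M) (P := fun c d =>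
      (c : ZFSet) ∈ ((⟨opensZ X, heredTop hbig⟩ : HKappa κ) : ZFSet) ∧
      (d : ZFSet) ∈ ((⟨opensZ X, heredTop hbig⟩ : HKappa κ) : ZFSet) ∧
      (∀ z : HKappa κ, (z : ZFSet) ∈ (cod hbig A : ZFSet) → (z : ZFSet) ∈ (c : ZFSet)) ∧
      (∀ z : HKappa κ, (z : ZFSet) ∈ (cod hbig B : ZFSet) → (z : ZFSet) ∈ (d : ZFSet)) ∧
      (∀ z : HKappa κ, (z : ZFSet) ∈ (c : ZFSet) → ¬ (z : ZFSet) ∈ (d : ZFSet)))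
    (D_and (D_mem (T_var _) (T_par _ hT)) (D_and (D_mem (T_var _) (T_par _ hT))
      (D_and (D_all (D_imp (D_mem (T_var _) (T_par _ hA.2)) (D_mem (T_var _) (T_var _))))
      (D_and (D_all (D_imp (D_mem (T_var _) (T_par _ hB.2)) (D_mem (T_var _) (T_var _))))
      (D_all (D_imp (D_mem (T_var _) (T_var _)) (D_not (D_mem (T_var _) (T_var _)))))))))
    ⟨cod hbig U, cod hbig V, (code_open hbig).2 hU, (code_open hbig).2 hV, hsub hAU, hsub hBV, by
      intro z hz hz'
      obtain ⟨h, h'⟩ := mem_codeSet.1 hz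
      obtain ⟨k, k'⟩ := mem_codeSet.1 hz'
      exact Set.disjoint_left.1 hUV h' k'⟩
  refine ⟨_, L_of_open hbig hX hc h1, _, L_of_open hbig hX hd h2, ?_, ?_, ?_⟩
  · rw [← Set.compl_inter, Set.compl_univ_iff]
    ext z
    simp only [Set.mem_inter_iff, Set.mem_empty_iff_false, iff_false]
    exact fun hz => h5 (pt hbig z) hz.1 hz.2
  · ext z
    simp only [Set.mem_inter_iff, Set.mem_empty_iff_false, iff_false]
    exact fun hz => hz.2 (h3 (pt hbig z) (mem_codeSet'.2 hz.1))
  · ext z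
    simp only [Set.mem_inter_iff, Set.mem_empty_iff_false, iff_false]
    exact fun hz => hz.2 (h4 (pt hbig z) (mem_codeSet'.2 hz.1))

end lattice

section wallman

variable {α : Type u} {F : Set (Set α)}

lemma LUltra_ext {u w : LUltra F} (h : u.sets = w.sets) : u = w := by
  cases u; cases w; cases h; rfl

lemma L_prime (u : LUltra F) {a b : Set α} (ha : a ∈ F) (hb : b ∈ F) (h : a ∪ b ∈ u.sets) :
    a ∈ u.sets ∨ b ∈ u.sets := by
  by_contra! hn
  obtain ⟨c, hc, hc'⟩ := u.ultra a ha hn.1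
  obtain ⟨d, hd, hd'⟩ := u.ultra b hb hn.2
  have := u.inter_mem _ h _ (u.inter_mem _ hc _ hd)
  have e : (a ∪ b) ∩ (c ∩ d) = ∅ := by
    ext z
    have h1 := Set.ext_iff.1 hc' z
    have h2 := Set.ext_iff.1 hd' z
    simp only [Set.mem_inter_iff, Set.mem_union, Set.mem_empty_iff_false, iff_false] at *
    tauto
  exact u.empty_notMem (e ▸ this)

lemma exists_pt [TopologicalSpace α] [CompactSpace α] (hcl : ∀ a ∈ F, IsClosed a) (u : LUltra F) :
    ∃ x, ∀ a ∈ u.sets, x ∈ a := by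
  have := IsCompact.nonempty_sInter_of_directed_nonempty_isCompact_isClosed (S := u.sets)
    (hS := ⟨⟨_, u.univ_mem⟩⟩) (fun a ha b hb => ⟨a ∩ b, u.inter_mem a ha b hb,
      Set.inter_subset_left, Set.inter_subset_right⟩)
    (fun a ha => Set.nonempty_iff_ne_empty.2 fun h => u.empty_notMem (h ▸ ha))
    (fun a ha => (hcl a (u.sets_subset ha)).isCompact)
    (fun a ha => (hcl a (u.sets_subset ha)))
  obtain ⟨x, hx⟩ := this
  exact ⟨x, fun a ha => hx a ha⟩

lemma exists_ultra (huniv : Set.univ ∈ F) (hint : ∀ a ∈ F, ∀ b ∈ F, a ∩ b ∈ F) (x : α) :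
    ∃ u : LUltra F, ∀ a ∈ F, x ∈ a → a ∈ u.sets := by
  let C : Set (Set (Set α)) := {s | s ⊆ F ∧ ∅ ∉ s ∧ (∀ a ∈ s, ∀ b ∈ s, a ∩ b ∈ s) ∧
    (∀ a ∈ s, ∀ b ∈ F, a ⊆ b → b ∈ s)}
  obtain ⟨s, hs0, hs⟩ := zorn_subset_nonempty C (by
    intro c hc hch hne
    refine ⟨⋃₀ c, ⟨?_, ?_, ?_, ?_⟩, fun s hs => Set.subset_sUnion_of_mem hs⟩
    · exact Set.sUnion_subset fun s hs => (hc hs).1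
    · rintro ⟨s, hs, h⟩
      exact (hc hs).2.1 h
    · rintro a ⟨s, hs, ha⟩ b ⟨t, ht, hb⟩
      rcases hch.total hs ht with h | h
      · exact ⟨t, ht, (hc ht).2.2.1 a (h ha) b hb⟩
      · exact ⟨s, hs, (hc hs).2.2.1 a ha b (h hb)⟩
    · rintro a ⟨s, hs, ha⟩ b hb hab
      exact ⟨s, hs, (hc hs).2.2.2 a ha b hb hab⟩) {a | a ∈ F ∧ x ∈ a}
    ⟨fun a ha => ha.1, fun h => h.2, fun a ha b hb => ⟨hint a ha.1 b hb.1, ha.2, hb.2⟩,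
      fun a ha b hb hab => ⟨hb, hab ha.2⟩⟩
  have hsC := hs.prop
  refine ⟨⟨s, hsC.1, hs0 ⟨huniv, trivial⟩, hsC.2.1, hsC.2.2.1, hsC.2.2.2, ?_⟩,
    fun a ha hx => hs0 ⟨ha, hx⟩⟩
  intro a ha has
  by_contra! hn
  apply has
  have hle := hs.le_of_ge (y := {c | c ∈ F ∧ ∃ b ∈ s, a ∩ b ⊆ c}) ⟨fun c hc => hc.1, ?_, ?_, ?_⟩
    (fun b hb => ⟨hsC.1 hb, b, hb, Set.inter_subset_right⟩)
  · exact hle ⟨ha, Set.univ, hs0 ⟨huniv, trivial⟩, Set.inter_subset_left⟩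
  · rintro ⟨-, b, hb, h⟩
    exact (hn b hb).ne_empty (Set.subset_empty_iff.1 h)
  · rintro c ⟨hc, b, hb, h⟩ c' ⟨hc', b', hb', h'⟩
    refine ⟨hint c hc c' hc', b ∩ b', hsC.2.2.1 b hb b' hb', fun z hz => ⟨h ⟨hz.1, hz.2.1⟩, h' ⟨hz.1, hz.2.2⟩⟩⟩
  · rintro c ⟨hc, b, hb, h⟩ c' hc' hcc
    exact ⟨hc', b, hb, h.trans hcc⟩

lemma exists_q [TopologicalSpace α] (hcl : ∀ a ∈ F, IsClosed a)
    (huniv : Set.univ ∈ F) (hint : ∀ a ∈ F, ∀ b ∈ F, a ∩ b ∈ F)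
    (hnorm : ∀ a ∈ F, ∀ b ∈ F, a ∩ b = ∅ →
      ∃ c ∈ F, ∃ d ∈ F, c ∪ d = Set.univ ∧ a ∩ c = ∅ ∧ b ∩ d = ∅) :
    ∃ q : α → LUltra F, Continuous q ∧ ∀ x, ∀ a ∈ F, x ∈ a → a ∈ (q x).sets := by
  choose q hq using exists_ultra huniv hint
  refine ⟨q, ?_, hq⟩
  refine continuous_generateFrom_iff.2 ?_
  rintro _ ⟨a, ha, rfl⟩
  rw [isOpen_iff_mem_nhds]
  intro x hx
  obtain ⟨b, hb, hab⟩ := (q x).ultra a ha hx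
  obtain ⟨c, hc, d, hd, hcd, hac, hbd⟩ := hnorm a ha b ((q x).sets_subset hb) hab
  have hxd : x ∉ d := by
    intro h
    have := (q x).inter_mem _ hb _ (hq x d hd h)
    exact (q x).empty_notMem (hbd ▸ this)
  refine Filter.mem_of_superset ((hcl d hd).isOpen_compl.mem_nhds hxd) ?_
  intro y hy hya
  have hyc : y ∈ c := ((hcd ▸ Set.mem_univ y : y ∈ c ∪ d)).resolve_right hy
  have := (q y).inter_mem _ hya _ (hq y c hc hyc)
  exact (q y).empty_notMem (hac ▸ this)

lemma wbasis (hempty : ∅ ∈ F) (hun : ∀ a ∈ F, ∀ b ∈ F, a ∪ b ∈ F) :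
    TopologicalSpace.IsTopologicalBasis
      {s : Set (LUltra F) | ∃ a ∈ F, s = {u : LUltra F | a ∈ u.sets}ᶜ} where
  exists_subset_inter := by
    rintro _ ⟨a, ha, rfl⟩ _ ⟨b, hb, rfl⟩ u hu
    refine ⟨_, ⟨a ∪ b, hun a ha b hb, rfl⟩, ?_, ?_⟩
    · intro h
      rcases L_prime u ha hb h with h | h
      exacts [hu.1 h, hu.2 h]
    · intro w hw
      exact ⟨fun h => hw (w.superset_mem a h _ (hun a ha b hb) Set.subset_union_left),
        fun h => hw (w.superset_mem b h _ (hun a ha b hb) Set.subset_union_right)⟩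
  sUnion_eq := by
    ext u
    simp only [Set.mem_univ, iff_true]
    exact ⟨_, ⟨∅, hempty, rfl⟩, u.empty_notMem⟩
  eq_generateFrom := rfl

/-- Every open cover of the Wallman space has a basic refinement. -/
lemma basic_refine [TopologicalSpace α] [CompactSpace α] (hcl : ∀ a ∈ F, IsClosed a)
    (huniv : Set.univ ∈ F) (hint : ∀ a ∈ F, ∀ b ∈ F, a ∩ b ∈ F)
    (hnorm : ∀ a ∈ F, ∀ b ∈ F, a ∩ b = ∅ →
      ∃ c ∈ F, ∃ d ∈ F, c ∪ d = Set.univ ∧ a ∩ c = ∅ ∧ b ∩ d = ∅)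
    (hempty : ∅ ∈ F) (hun : ∀ a ∈ F, ∀ b ∈ F, a ∪ b ∈ F)
    (U : Set (Set (LUltra F))) (hU : IsOpenCover U) :
    ∃ A : Set (Set α), A ⊆ F ∧ (∀ x, ∃ a ∈ A, x ∉ a) ∧
      ∀ a ∈ A, ∃ s ∈ U, {u : LUltra F | a ∈ u.sets}ᶜ ⊆ s := by
  obtain ⟨q, -, hq⟩ := exists_q hcl huniv hint hnorm
  refine ⟨{a | a ∈ F ∧ ∃ s ∈ U, {u : LUltra F | a ∈ u.sets}ᶜ ⊆ s}, fun a ha => ha.1, ?_,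
    fun a ha => ha.2⟩
  intro x
  obtain ⟨s, hs, hxs⟩ := (hU.2 ▸ Set.mem_univ (q x) : q x ∈ ⋃₀ U)
  obtain ⟨_, ⟨a, ha, rfl⟩, hx, hsub⟩ :=
    (wbasis hempty hun).exists_subset_of_mem_open hxs (hU.1 s hs)
  exact ⟨a, ⟨ha, s, hs, hsub⟩, fun h => hx (hq x a ha h)⟩

end wallman

section main

variable {X : ZFSet.{0}} {κ : Cardinal.{1}}
  {M : FirstOrder.Language.graph.ElementarySubstructure (HKappa κ)}
  [TopologicalSpace ↥X.toSet] [CompactSpace ↥X.toSet] [T2Space ↥X.toSet]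

lemma forward (hbig : HeredLt κ X.powerset.powerset)
    (hX : (⟨X, heredX hbig⟩ : HKappa κ) ∈ M)
    (hT : (⟨opensZ X, heredTop hbig⟩ : HKappa κ) ∈ M) (hC : IsCSpace ↥X.toSet) :
    IsCSpace (LUltra (Lfam X κ M)) := by
  intro U hU
  have hcl : ∀ a ∈ Lfam X κ M, IsClosed a := fun a ha => ha.1
  choose A hAF hAcov hAref using fun i => basic_refine hcl (L_univ hbig hX)
    (fun a ha b hb => L_inter hbig hX ha hb) (fun a ha b hb => L_normal hbig hX hT ha hb)
    (L_empty hbig hX) (fun a ha b hb => L_union hbig ha hb) (U i) (hU i)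
  obtain ⟨V, hV, hVcov⟩ := hC (fun i => compl '' (A i)) (by
    intro i
    constructor
    · rintro _ ⟨a, ha, rfl⟩
      exact (hcl a (hAF i ha)).isOpen_compl
    · ext x
      simp only [Set.mem_univ, iff_true]
      obtain ⟨a, ha, hx⟩ := hAcov i x
      exact ⟨_, ⟨a, ha, rfl⟩, hx⟩)
  obtain ⟨t, ht⟩ := isCompact_univ.elim_finite_subcover
    (fun p : {p : ℕ × Set ↥X.toSet // p.2 ∈ V p.1} => p.1.2)
    (fun p => (hV p.1.1).1 _ p.2) (by
      intro x _
      have : x ∈ ⋃ i, ⋃₀ (V i) := hVcov ▸ Set.mem_univ x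
      obtain ⟨i, v, hv, hx⟩ := Set.mem_iUnion.1 this
      exact Set.mem_iUnion.2 ⟨⟨(i, v), hv⟩, hx⟩)
  have hva : ∀ p : t, ∃ a ∈ A p.1.1.1, p.1.1.2 ⊆ aᶜ := by
    intro p
    obtain ⟨_, ⟨a, ha, rfl⟩, h⟩ := (hV p.1.1.1).2.2 _ p.1.2
    exact ⟨a, ha, h⟩
  choose a haA hva using hva
  have haM : ∀ p, cod hbig (a p) ∈ M := fun p => ((mem_L hbig).1 (hAF _ (haA p))).2
  obtain ⟨w, hwM, h1, h2, h3, h4⟩ := elem (M := M) (P := fun w : t → HKappa κ =>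
      (∀ p, (w p : ZFSet) ∈ ((⟨opensZ X, heredTop hbig⟩ : HKappa κ) : ZFSet)) ∧
      (∀ x : HKappa κ, (x : ZFSet) ∈ ((⟨X, heredX hbig⟩ : HKappa κ) : ZFSet) →
        ∃ p, (x : ZFSet) ∈ (w p : ZFSet)) ∧
      (∀ p p', (p.1.1.1 = p'.1.1.1 ∧ p ≠ p') → ∀ x : HKappa κ, (x : ZFSet) ∈ (w p : ZFSet) →
        ¬ (x : ZFSet) ∈ (w p' : ZFSet)) ∧
      (∀ p, ∀ x : HKappa κ, (x : ZFSet) ∈ (w p : ZFSet) → ¬ (x : ZFSet) ∈ (cod hbig (a p) : ZFSet)))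
    (D_and (D_iall fun p => D_mem (T_var _) (T_par _ hT))
      (D_and (D_all (D_imp (D_mem (T_var _) (T_par _ hX)) (D_iex fun p => D_mem (T_var _) (T_var _))))
      (D_and (D_iall fun p => D_iall fun p' => D_imp (D_const _) (D_all (D_imp
        (D_mem (T_var _) (T_var _)) (D_not (D_mem (T_var _) (T_var _))))))
      (D_iall fun p => D_all (D_imp (D_mem (T_var _) (T_var _))
        (D_not (D_mem (T_var _) (T_par _ (haM p)))))))))
    ⟨fun p => cod hbig p.1.1.2, fun p => (code_open hbig).2 ((hV _).1 _ p.1.2), by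
      intro x hx
      obtain ⟨p, hp⟩ := Set.mem_iUnion.1 (ht (Set.mem_univ (⟨x, hx⟩ : ↥X.toSet)))
      obtain ⟨hp, hxp⟩ := Set.mem_iUnion.1 hp
      exact ⟨⟨p, hp⟩, mem_codeSet.2 ⟨hx, hxp⟩⟩, by
      rintro p p' ⟨hpp, hne⟩ x hx hx'
      obtain ⟨k, hk⟩ := mem_codeSet.1 hx
      obtain ⟨k', hk'⟩ := mem_codeSet.1 hx'
      have hd := (hV p.1.1.1).2.1 p.1.2 (show p'.1.1.2 ∈ V p.1.1.1 from hpp ▸ p'.1.2)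
        (fun h => hne (Subtype.ext (Subtype.ext (Prod.ext hpp h))))
      exact Set.disjoint_left.1 hd hk hk', by
      intro p x hx hx'
      obtain ⟨k, hk⟩ := mem_codeSet.1 hx
      obtain ⟨k', hk'⟩ := mem_codeSet.1 hx'
      exact hva p hk hk'⟩
  have hbL : ∀ p, (decodeSet X (w p))ᶜ ∈ Lfam X κ M := fun p => L_of_open hbig hX (hwM p) (h1 p)
  refine ⟨fun i => {s | ∃ p : t, p.1.1.1 = i ∧
    s = {u : LUltra (Lfam X κ M) | (decodeSet X (w p))ᶜ ∈ u.sets}ᶜ}, ?_, ?_⟩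
  · intro i
    refine ⟨?_, ?_, ?_⟩
    · rintro _ ⟨p, -, rfl⟩
      exact TopologicalSpace.isOpen_generateFrom_of_mem ⟨_, hbL p, rfl⟩
    · rintro _ ⟨p, hp, rfl⟩ _ ⟨p', hp', rfl⟩ hne
      refine Set.disjoint_left.2 fun u hu hu' => ?_
      have hpp : p ≠ p' := fun h => hne (by rw [h])
      have : (decodeSet X (w p))ᶜ ∪ (decodeSet X (w p'))ᶜ ∈ u.sets := by
        convert u.univ_mem
        rw [← Set.compl_inter, Set.compl_univ_iff]
        ext z
        simp only [Set.mem_inter_iff, Set.mem_empty_iff_false, iff_false]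
        exact fun hz => h3 p p' ⟨hp.trans hp'.symm, hpp⟩ (pt hbig z) hz.1 hz.2
      rcases L_prime u (hbL p) (hbL p') this with h | h
      exacts [hu h, hu' h]
    · rintro _ ⟨p, hp, rfl⟩
      obtain ⟨s, hs, hsub⟩ := hAref p.1.1.1 (a p) (haA p)
      refine ⟨s, hp ▸ hs, fun u hu => hsub fun ha => hu ?_⟩
      exact u.superset_mem _ ha _ (hbL p) fun z hz hz' =>
        h4 p (pt hbig z) hz' (mem_codeSet'.2 hz)
  · ext u
    simp only [Set.mem_univ, iff_true]
    obtain ⟨x, hx⟩ := exists_pt hcl u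
    obtain ⟨p, hp⟩ := h2 (pt hbig x) x.2
    exact Set.mem_iUnion.2 ⟨p.1.1.1, _, ⟨p, rfl, rfl⟩, fun h => hx _ h hp⟩

/-- `V` is a pairwise disjoint family of open sets refining `U` (inside `H(κ)`). -/
def Good (τ U V : HKappa κ) : Prop :=
  (∀ v : HKappa κ, (v : ZFSet) ∈ (V : ZFSet) → (v : ZFSet) ∈ (τ : ZFSet)) ∧
  (∀ v : HKappa κ, (v : ZFSet) ∈ (V : ZFSet) → ∀ v' : HKappa κ, (v' : ZFSet) ∈ (V : ZFSet) →
    ¬ v = v' → ∀ x : HKappa κ, (x : ZFSet) ∈ (v : ZFSet) → ¬ (x : ZFSet) ∈ (v' : ZFSet)) ∧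
  (∀ v : HKappa κ, (v : ZFSet) ∈ (V : ZFSet) → ∃ b : HKappa κ, (b : ZFSet) ∈ (U : ZFSet) ∧
    ∀ x : HKappa κ, (x : ZFSet) ∈ (v : ZFSet) → (x : ZFSet) ∈ (b : ZFSet))

/-- `U` is an open cover (inside `H(κ)`). -/
def Cov (X τ U : HKappa κ) : Prop :=
  (∀ v : HKappa κ, (v : ZFSet) ∈ (U : ZFSet) → (v : ZFSet) ∈ (τ : ZFSet)) ∧
  (∀ x : HKappa κ, (x : ZFSet) ∈ (X : ZFSet) →
    ∃ b : HKappa κ, (b : ZFSet) ∈ (U : ZFSet) ∧ (x : ZFSet) ∈ (b : ZFSet))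

/-- From a set in `K`, adding the union of a good family leads to `K'`. -/
def Step (τ K U K' : HKappa κ) : Prop :=
  ∀ V : HKappa κ, Good τ U V → ∀ O : HKappa κ, (O : ZFSet) ∈ (K : ZFSet) → ∀ O' : HKappa κ,
    (∀ x : HKappa κ, (x : ZFSet) ∈ (O' : ZFSet) → ((x : ZFSet) ∈ (O : ZFSet) ∨
      ∃ v : HKappa κ, (v : ZFSet) ∈ (V : ZFSet) ∧ (x : ZFSet) ∈ (v : ZFSet))) →
    (O' : ZFSet) ∈ (K' : ZFSet)

/-- The local condition at a stage `K`. -/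
def Stage (X K : HKappa κ) : Prop :=
  (∀ O : HKappa κ, (O : ZFSet) ∈ (K : ZFSet) → ∃ x : HKappa κ, (x : ZFSet) ∈ (X : ZFSet) ∧
    ¬ (x : ZFSet) ∈ (O : ZFSet)) ∧
  (∀ O : HKappa κ, (∀ x : HKappa κ, ¬ (x : ZFSet) ∈ (O : ZFSet)) → (O : ZFSet) ∈ (K : ZFSet))

/-- `S` is a set of stages witnessing the failure of property C. -/
def Bad (X τ S : HKappa κ) : Prop :=
  (∃ K : HKappa κ, (K : ZFSet) ∈ (S : ZFSet)) ∧
  ∀ K : HKappa κ, (K : ZFSet) ∈ (S : ZFSet) → Stage X K ∧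
    ∃ U K' : HKappa κ, Cov X τ U ∧ (K' : ZFSet) ∈ (S : ZFSet) ∧ Step τ K U K'

section Dlemmas
variable {α : Type*} {f g h k : (α → HKappa κ) → HKappa κ}


lemma T_some (hf : T M f) : T M (fun w : Option α → HKappa κ => f (fun a => w (some a))) := by
  obtain ⟨a, ha⟩ := hf
  rcases a with m | a
  · exact ⟨Sum.inl m, fun v => ha _⟩
  · exact ⟨Sum.inr (some a), fun v => ha _⟩

lemma D_Good (hf : T M f) (hg : T M g) (hh : T M h) : D M (fun v => Good (f v) (g v) (h v)) := by
  have hf1 := T_some hf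
  have hg1 := T_some hg
  have hh1 := T_some hh
  have hh2 := T_some hh1
  have hg2 := T_some hg1
  exact D_and (D_all (D_imp (D_mem (T_var _) hh1) (D_mem (T_var _) hf1)))
    (D_and (D_all (D_imp (D_mem (T_var _) hh1) (D_all (D_imp (D_mem (T_var _) hh2)
      (D_imp (D_not (D_eq (T_var _) (T_var _))) (D_all (D_imp (D_mem (T_var _) (T_var _))
        (D_not (D_mem (T_var _) (T_var _))))))))))
      (D_all (D_imp (D_mem (T_var _) hh1) (D_ex (D_and (D_mem (T_var _) hg2)
        (D_all (D_imp (D_mem (T_var _) (T_var _)) (D_mem (T_var _) (T_var _)))))))))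

lemma D_Cov (hf : T M f) (hg : T M g) (hh : T M h) : D M (fun v => Cov (f v) (g v) (h v)) := by
  have hf1 := T_some hf
  have hg1 := T_some hg
  have hh1 := T_some hh
  have hh2 := T_some hh1
  exact D_and (D_all (D_imp (D_mem (T_var _) hh1) (D_mem (T_var _) hg1)))
    (D_all (D_imp (D_mem (T_var _) hf1) (D_ex (D_and (D_mem (T_var _) hh2)
      (D_mem (T_var _) (T_var _))))))

lemma D_Step (hf : T M f) (hg : T M g) (hh : T M h) (hk : T M k) :
    D M (fun v => Step (f v) (g v) (h v) (k v)) := by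
  have hf1 := T_some hf
  have hh1 := T_some hh
  have hg2 := T_some (T_some hg)
  have hk3 := T_some (T_some (T_some hk))
  exact D_all (D_imp (D_Good hf1 hh1 (T_var _)) (D_all (D_imp (D_mem (T_var _) hg2)
    (D_all (D_imp (D_all (D_imp (D_mem (T_var _) (T_var _)) (D_or (D_mem (T_var _) (T_var _))
      (D_ex (D_and (D_mem (T_var _) (T_var _)) (D_mem (T_var _) (T_var _)))))))
      (D_mem (T_var _) hk3))))))

lemma D_Stage (hf : T M f) (hg : T M g) : D M (fun v => Stage (f v) (g v)) := by
  have hf2 := T_some (T_some hf)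
  have hg1 := T_some hg
  exact D_and (D_all (D_imp (D_mem (T_var _) hg1) (D_ex (D_and (D_mem (T_var _) hf2)
    (D_not (D_mem (T_var _) (T_var _)))))))
    (D_all (D_imp (D_all (D_not (D_mem (T_var _) (T_var _)))) (D_mem (T_var _) hg1)))

lemma D_Bad (hf : T M f) (hg : T M g) (hh : T M h) : D M (fun v => Bad (f v) (g v) (h v)) := by
  have hf1 := T_some hf
  have hf3 := T_some (T_some hf1)
  have hg3 := T_some (T_some (T_some hg))
  have hh1 := T_some hh
  have hh3 := T_some (T_some hh1)
  exact D_and (D_ex (D_mem (T_var _) hh1)) (D_all (D_imp (D_mem (T_var _) hh1)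
    (D_and (D_Stage hf1 (T_var _)) (D_ex (D_ex (D_and (D_Cov hf3 hg3 (T_var _))
      (D_and (D_mem (T_var _) hh3) (D_Step hg3 (T_var _) (T_var _) (T_var _)))))))))

end Dlemmas

end main

section back

variable {X : ZFSet.{0}} {κ : Cardinal.{1}}
  {M : FirstOrder.Language.graph.ElementarySubstructure (HKappa κ)}

/-- Codes of families of subsets. -/
noncomputable def codF (hbig : HeredLt κ X.powerset.powerset) (F : Set (Set ↥X.toSet)) : HKappa κ :=
  ⟨ZFSet.sep (fun t => decodeSet X t ∈ F) X.powerset,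
    heredLt_mem hbig (ZFSet.mem_powerset.2 fun _ h => (ZFSet.mem_sep.1 h).1)⟩

lemma mem_codF {hbig : HeredLt κ X.powerset.powerset} {F : Set (Set ↥X.toSet)} {t : ZFSet} :
    t ∈ (codF hbig F : ZFSet) ↔ t ⊆ X ∧ decodeSet X t ∈ F := by
  simp only [codF]
  rw [ZFSet.mem_sep, ZFSet.mem_powerset]

lemma cod_mem_codF {hbig : HeredLt κ X.powerset.powerset} {F : Set (Set ↥X.toSet)}
    {A : Set ↥X.toSet} : (cod hbig A : ZFSet) ∈ (codF hbig F : ZFSet) ↔ A ∈ F := by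
  rw [mem_codF]
  simp only [cod, decode_code]
  exact ⟨fun h => h.2, fun h => ⟨codeSet_sub, h⟩⟩

/-- The set of codes of a sequence of families. -/
noncomputable def codS (hbig : HeredLt κ X.powerset.powerset) (F : ℕ → Set (Set ↥X.toSet)) :
    HKappa κ :=
  ⟨ZFSet.sep (fun t => ∃ n, t = codF hbig (F n)) X.powerset.powerset,
    heredLt_sub hbig fun _ h => (ZFSet.mem_sep.1 h).1⟩

lemma mem_codS {hbig : HeredLt κ X.powerset.powerset} {F : ℕ → Set (Set ↥X.toSet)} {t : ZFSet} :
    t ∈ (codS hbig F : ZFSet) ↔ ∃ n, t = codF hbig (F n) := by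
  simp only [codS]
  rw [ZFSet.mem_sep, ZFSet.mem_powerset]
  refine ⟨fun h => h.2, fun h => ⟨?_, h⟩⟩
  obtain ⟨n, rfl⟩ := h
  exact fun s hs => ZFSet.mem_powerset.2 (mem_codF.1 hs).1

variable [TopologicalSpace ↥X.toSet]

lemma exists_bad (hbig : HeredLt κ X.powerset.powerset) (hC : ¬ IsCSpace ↥X.toSet) :
    ∃ S : HKappa κ, Bad ⟨X, heredX hbig⟩ ⟨opensZ X, heredTop hbig⟩ S := by
  unfold IsCSpace at hC
  push Not at hC
  obtain ⟨U, hU, hbad⟩ := hC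
  let G : ℕ → Set (Set ↥X.toSet) → Prop := fun i V =>
    (∀ s ∈ V, IsOpen s) ∧ V.PairwiseDisjoint id ∧ Refines V (U i)
  have hG0 : ∀ i, G i ∅ := fun i => ⟨by simp, by simp, by simp [Refines]⟩
  let K : ℕ → Set (Set ↥X.toSet) := fun n => {O | ∃ V : ℕ → Set (Set ↥X.toSet),
    (∀ i, G i (V i)) ∧ ∀ x ∈ O, ∃ i < n, x ∈ ⋃₀ (V i)}
  refine ⟨codS hbig K, ⟨codF hbig (K 0), mem_codS.2 ⟨0, rfl⟩⟩, ?_⟩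
  intro k hk
  obtain ⟨n, hn⟩ := mem_codS.1 hk
  have hkn : k = codF hbig (K n) := Subtype.ext hn
  subst hkn
  refine ⟨⟨?_, ?_⟩, codF hbig (U n), codF hbig (K (n + 1)), ⟨?_, ?_⟩, mem_codS.2 ⟨_, rfl⟩, ?_⟩
  · intro O hO
    obtain ⟨hOX, V, hV, hcov⟩ := mem_codF.1 hO
    by_contra! hn
    refine hbad V hV ?_
    ext x
    simp only [Set.mem_univ, iff_true]
    obtain ⟨i, -, hi⟩ := hcov x (hn (pt hbig x) x.2)
    exact Set.mem_iUnion.2 ⟨i, hi⟩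
  · intro O hO
    have hO' : ∀ z, z ∉ (O : ZFSet) := fun z hz => hO ⟨z, heredLt_mem O.2 hz⟩ hz
    exact mem_codF.2 ⟨fun z hz => absurd hz (hO' z), fun _ => ∅, hG0,
      fun x hx => absurd hx (hO' x)⟩
  · intro v hv
    obtain ⟨hvX, hvU⟩ := mem_codF.1 hv
    exact mem_opensZ.2 ⟨hvX, (hU n).1 _ hvU⟩
  · intro x hx
    obtain ⟨s, hs, hxs⟩ := ((hU n).2 ▸ Set.mem_univ _ : (⟨x, hx⟩ : ↥X.toSet) ∈ ⋃₀ (U n))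
    exact ⟨cod hbig s, cod_mem_codF.2 hs, mem_codeSet.2 ⟨hx, hxs⟩⟩
  · rintro W ⟨hW1, hW2, hW3⟩ O hO O' hO'
    obtain ⟨hOX, V, hV, hcov⟩ := mem_codF.1 hO
    have hWX : ∀ v ∈ (W : ZFSet), v ⊆ X ∧ IsOpen (decodeSet X v) := fun v hv =>
      mem_opensZ.1 (hW1 ⟨v, heredLt_mem W.2 hv⟩ hv)
    refine mem_codF.2 ⟨?_, Function.update V n {s | ∃ v ∈ (W : ZFSet), s = decodeSet X v}, ?_, ?_⟩
    · intro z hz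
      rcases hO' ⟨z, heredLt_mem O'.2 hz⟩ hz with h | ⟨v, hv, h⟩
      · exact hOX h
      · exact (hWX v hv).1 h
    · intro i
      by_cases hi : i = n
      · subst hi
        rw [Function.update_self]
        refine ⟨?_, ?_, ?_⟩
        · rintro _ ⟨v, hv, rfl⟩
          exact (hWX v hv).2
        · rintro _ ⟨v, hv, rfl⟩ _ ⟨v', hv', rfl⟩ hne
          refine Set.disjoint_left.2 fun z hz hz' => ?_
          refine hW2 ⟨v, heredLt_mem W.2 hv⟩ hv ⟨v', heredLt_mem W.2 hv'⟩ hv' ?_ (pt hbig z) hz hz'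
          intro h
          exact hne (congrArg (decodeSet X) (congrArg Subtype.val h))
        · rintro _ ⟨v, hv, rfl⟩
          obtain ⟨b, hb, hsub⟩ := hW3 ⟨v, heredLt_mem W.2 hv⟩ hv
          exact ⟨_, (mem_codF.1 hb).2, fun z hz => hsub (pt hbig z) hz⟩
      · rw [Function.update_of_ne hi]
        exact hV i
    · intro x hx
      rcases hO' (pt hbig x) hx with h | ⟨v, hv, h⟩
      · obtain ⟨i, hi, hxi⟩ := hcov x h
        refine ⟨i, by omega, ?_⟩
        rwa [Function.update_of_ne (by omega)]
      · refine ⟨n, by omega, ?_⟩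
        rw [Function.update_self]
        exact ⟨_, ⟨v, hv, rfl⟩, h⟩

variable [CompactSpace ↥X.toSet] [T2Space ↥X.toSet]

/-- The members in `M` of an open cover in `M` cover `X`. -/
lemma cover_in_M (hbig : HeredLt κ X.powerset.powerset)
    (hX : (⟨X, heredX hbig⟩ : HKappa κ) ∈ M) {U : HKappa κ} (hUM : U ∈ M)
    (hU : Cov ⟨X, heredX hbig⟩ ⟨opensZ X, heredTop hbig⟩ U) :
    ∀ y : ↥X.toSet, ∃ b : HKappa κ, b ∈ M ∧ (b : ZFSet) ∈ (U : ZFSet) ∧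
      (y : ZFSet) ∈ (b : ZFSet) := by
  intro y
  obtain ⟨t, ht⟩ := isCompact_univ.elim_finite_subcover
    (fun p : {b : HKappa κ // (b : ZFSet) ∈ (U : ZFSet)} => decodeSet X p.1)
    (fun p => (mem_opensZ.1 (hU.1 p.1 p.2)).2) (by
      intro x _
      obtain ⟨b, hb, hx⟩ := hU.2 (pt hbig x) x.2
      exact Set.mem_iUnion.2 ⟨⟨b, hb⟩, hx⟩)
  obtain ⟨w, hwM, h1, h2⟩ := elem (M := M) (P := fun w : t → HKappa κ =>
      (∀ p, (w p : ZFSet) ∈ (U : ZFSet)) ∧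
      (∀ x : HKappa κ, (x : ZFSet) ∈ ((⟨X, heredX hbig⟩ : HKappa κ) : ZFSet) →
        ∃ p, (x : ZFSet) ∈ (w p : ZFSet)))
    (D_and (D_iall fun p => D_mem (T_var _) (T_par _ hUM))
      (D_all (D_imp (D_mem (T_var _) (T_par _ hX)) (D_iex fun p => D_mem (T_var _) (T_var _)))))
    ⟨fun p => p.1.1, fun p => p.1.2, by
      intro x hx
      obtain ⟨p, hp⟩ := Set.mem_iUnion.1 (ht (Set.mem_univ (⟨x, hx⟩ : ↥X.toSet)))
      obtain ⟨hp, hxp⟩ := Set.mem_iUnion.1 hp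
      exact ⟨⟨p, hp⟩, hxp⟩⟩
  obtain ⟨p, hp⟩ := h2 (pt hbig y) y.2
  exact ⟨w p, hwM p, h1 p, hp⟩

lemma backward (hbig : HeredLt κ X.powerset.powerset)
    (hX : (⟨X, heredX hbig⟩ : HKappa κ) ∈ M)
    (hT : (⟨opensZ X, heredTop hbig⟩ : HKappa κ) ∈ M) (hC : IsCSpace (LUltra (Lfam X κ M))) :
    IsCSpace ↥X.toSet := by
  by_contra hn
  obtain ⟨S, hSM, hS⟩ := elem1 (M := M) (D_Bad (T_par _ hX) (T_par _ hT) (T_var _))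
    (exists_bad hbig hn)
  obtain ⟨K0, hK0M, hK0⟩ := elem1 (M := M) (D_mem (T_var _) (T_par _ hSM)) hS.1
  have hstep : ∀ K : {K : HKappa κ // K ∈ M ∧ (K : ZFSet) ∈ (S : ZFSet)},
      ∃ U : HKappa κ, ∃ K' : {K : HKappa κ // K ∈ M ∧ (K : ZFSet) ∈ (S : ZFSet)},
        U ∈ M ∧ Cov ⟨X, heredX hbig⟩ ⟨opensZ X, heredTop hbig⟩ U ∧
        Step ⟨opensZ X, heredTop hbig⟩ K.1 U K'.1 := by
    rintro ⟨K, hKM, hK⟩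
    obtain ⟨U, K', hUM, hK'M, h1, h2, h3⟩ := elem2 (M := M)
      (D_and (D_Cov (T_par _ hX) (T_par _ hT) (T_var _)) (D_and (D_mem (T_var _) (T_par _ hSM))
        (D_Step (T_par _ hT) (T_par _ hKM) (T_var _) (T_var _)))) (hS.2 K hK).2
    exact ⟨U, ⟨K', hK'M, h2⟩, hUM, h1, h3⟩
  choose nU nK hUM hCov hStep using hstep
  let K : ℕ → {K : HKappa κ // K ∈ M ∧ (K : ZFSet) ∈ (S : ZFSet)} := fun n =>
    Nat.rec ⟨K0, hK0M, hK0⟩ (fun _ k => nK k) n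
  have hKs : ∀ n, K (n + 1) = nK (K n) := fun n => rfl
  have hcl : ∀ a ∈ Lfam X κ M, IsClosed a := fun a ha => ha.1
  obtain ⟨q, hqc, hq⟩ := exists_q hcl (L_univ hbig hX)
    (fun a ha b hb => L_inter hbig hX ha hb) (fun a ha b hb => L_normal hbig hX hT ha hb)
  have hbL : ∀ n (b : HKappa κ), b ∈ M → (b : ZFSet) ∈ (nU (K n) : ZFSet) →
      (decodeSet X b)ᶜ ∈ Lfam X κ M := fun n b hb hbU =>
    L_of_open hbig hX hb ((hCov (K n)).1 b hbU)
  obtain ⟨V, hV, hVcov⟩ := hC (fun n => {s | ∃ b : HKappa κ, b ∈ M ∧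
    (b : ZFSet) ∈ (nU (K n) : ZFSet) ∧
    s = {u : LUltra (Lfam X κ M) | (decodeSet X b)ᶜ ∈ u.sets}ᶜ}) (by
    intro n
    constructor
    · rintro _ ⟨b, hb, hbU, rfl⟩
      exact TopologicalSpace.isOpen_generateFrom_of_mem ⟨_, hbL n b hb hbU, rfl⟩
    · ext u
      simp only [Set.mem_univ, iff_true]
      obtain ⟨x, hx⟩ := exists_pt hcl u
      obtain ⟨b, hb, hbU, hxb⟩ := cover_in_M hbig hX (hUM (K n)) (hCov (K n)) x
      exact ⟨_, ⟨b, hb, hbU, rfl⟩, fun h => hx _ h hxb⟩)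
  let W : ℕ → Set (Set ↥X.toSet) := fun n => (fun s => q ⁻¹' s) '' (V n)
  have hWo : ∀ n, ∀ s ∈ W n, IsOpen s := by
    rintro n _ ⟨s, hs, rfl⟩
    exact ((hV n).1 s hs).preimage hqc
  have hgood : ∀ n, Good ⟨opensZ X, heredTop hbig⟩ (nU (K n)) (codF hbig (W n)) := by
    intro n
    refine ⟨?_, ?_, ?_⟩
    · intro v hv
      obtain ⟨hvX, hvW⟩ := mem_codF.1 hv
      exact mem_opensZ.2 ⟨hvX, hWo n _ hvW⟩
    · intro v hv v' hv' hne x hx hx'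
      obtain ⟨hvX, s, hs, hsv⟩ := mem_codF.1 hv
      obtain ⟨hvX', s', hs', hsv'⟩ := mem_codF.1 hv'
      have hss : s ≠ s' := by
        rintro rfl
        apply hne
        apply Subtype.ext
        rw [← code_decode hvX, ← code_decode hvX', ← hsv, ← hsv']
      have h1 : (⟨x, hvX hx⟩ : ↥X.toSet) ∈ q ⁻¹' s := (Set.ext_iff.1 hsv _).2 hx
      have h2 : (⟨x, hvX hx⟩ : ↥X.toSet) ∈ q ⁻¹' s' := (Set.ext_iff.1 hsv' _).2 hx'
      exact Set.disjoint_left.1 ((hV n).2.1 hs hs' hss) h1 h2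
    · intro v hv
      obtain ⟨hvX, s, hs, hsv⟩ := mem_codF.1 hv
      obtain ⟨_, ⟨b, hb, hbU, rfl⟩, hsub⟩ := (hV n).2.2 s hs
      refine ⟨b, hbU, fun x hx => ?_⟩
      have h1 : (⟨x, hvX hx⟩ : ↥X.toSet) ∈ q ⁻¹' s := (Set.ext_iff.1 hsv _).2 hx
      by_contra hxb
      exact hsub h1 (hq _ _ (hbL n b hb hbU) hxb)
  let O : ℕ → Set ↥X.toSet := fun n => {x | ∃ i < n, x ∈ ⋃₀ (W i)}
  have hO : ∀ n, (cod hbig (O n) : ZFSet) ∈ ((K n).1 : ZFSet) := by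
    intro n
    induction n with
    | zero =>
      refine (hS.2 _ (K 0).2.2).1.2 _ ?_
      intro x hx
      obtain ⟨h, i, hi, -⟩ := mem_codeSet.1 hx
      omega
    | succ n ih =>
      rw [hKs]
      refine hStep (K n) _ (hgood n) _ ih _ ?_
      intro x hx
      obtain ⟨h, i, hi, s, hs, hxs⟩ := mem_codeSet.1 hx
      by_cases hin : i = n
      · subst hin
        exact Or.inr ⟨cod hbig s, cod_mem_codF.2 hs, mem_codeSet.2 ⟨h, hxs⟩⟩
      · exact Or.inl (mem_codeSet.2 ⟨h, i, by omega, s, hs, hxs⟩)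
  obtain ⟨n, hn⟩ := isCompact_univ.elim_directed_cover O
    (by
      intro n
      have : O n = ⋃ i, ⋃ (_ : i < n), ⋃₀ (W i) := by
        ext x
        simp [O]
      rw [this]
      exact isOpen_iUnion fun i => isOpen_iUnion fun _ => isOpen_sUnion (hWo i))
    (by
      intro x _
      have : q x ∈ ⋃ i, ⋃₀ (V i) := hVcov ▸ Set.mem_univ _
      obtain ⟨i, s, hs, hxs⟩ := Set.mem_iUnion.1 this
      exact Set.mem_iUnion.2 ⟨i + 1, i, by omega, _, ⟨s, hs, rfl⟩, hxs⟩)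
    (directed_of_isDirected_le (fun i j hij x ⟨k, hk, hx⟩ => ⟨k, by omega, hx⟩))
  obtain ⟨x, hx, hxO⟩ := (hS.2 _ (K n).2.2).1.1 _ (hO n)
  exact hxO (mem_codeSet.2 ⟨hx, hn (Set.mem_univ _)⟩)

end back

end WallC

/-- For a compact Hausdorff space `X` and a countable elementary submodel
`M ≺ H(κ)` with `X ∈ M`, with `L = 2^X ∩ M`, the space `X` is a C-space iff the Wallman
space `wL` is a C-space. -/
theorem isCSpace_iff_wallman
    (X : ZFSet.{0}) [TopologicalSpace ↥X.toSet] [CompactSpace ↥X.toSet]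
    [T2Space ↥X.toSet]
    (κ : Cardinal.{1}) (hreg : κ.IsRegular) (hbig : HeredLt κ X.powerset.powerset)
    (M : FirstOrder.Language.graph.ElementarySubstructure (HKappa κ))
    (hMcount : Countable M) (hXM : MemOf κ M X) (htopM : MemOf κ M (opensZ X)) :
    IsCSpace ↥X.toSet ↔ IsCSpace (LUltra (Lfam X κ M)) := by
  exact ⟨WallC.forward hbig hXM.2 htopM.2, WallC.backward hbig hXM.2 htopM.2⟩
end
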